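/- arXiv:math/0401246 — 2 statements merged into one kernel-verified Lean document; each statement's English description precedes it below -/
import Mathlib

section
/- (Larson–Radford theorem) Let H be a finite-dimensional Hopf algebra over ℂ that is semisimple as a ring. Then its antipode S satisfies S² = id, i.e. S ∘ S is the identity linear map of H. -/
/-!
Throughout, `t` is the two-sided integral of `H` with `ε(t) = 1`, which exists because `H` is
semisimple (`exists_isHaar`). With Sweedler indices, it satisfies `t₁ x ⊗ t₂ = t₁ ⊗ t₂ S(x)` and
`h t₁ ⊗ S(t₂) = t₁ ⊗ S(t₂) h`.

*The functional* `c(x) = Tr(y ↦ S²(y) x)`. The second identity shows that `t₁ ⊗ S(t₂)` is a dual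
basis for the form `(x, y) ↦ c(xy)`, so this form is nondegenerate, with Nakayama automorphism `S²`.
It follows that `c` is an integral on `H`, `c(x₁) x₂ = c(x) 1`, that `x₁ c(x₂) = c(x) g` for a
group-like element `g`, and that `S⁴(x) g = g x` (`IsHaar.sq_sq_mul`, Radford's formula).

*`Tr(S²) ≠ 0`* (`haar_one_ne_zero`). The element `v = S(t₂) t₁` satisfies `v y = S²(y) v`, and each
trace takes the same value on it as on `t₁ S(t₂) = 1`. In the decomposition of `H` into matrix
blocks of sizes `dᵢ`, the component `vᵢ` has trace `dᵢ ≠ 0`, hence is invertible, and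
`Tr(S²) = ∑ᵢ tr(vᵢ) tr(vᵢ⁻¹)`. As `g` has finite order and implements `S⁴` just as `v²` does, a power
of `v` is central, so `vᵢ` is a scalar multiple of a matrix of finite order; such a matrix is
unitary for some Hermitian form, and therefore `tr(vᵢ) tr(vᵢ⁻¹) > 0`. Evaluating `x₁ c(x₂) = c(x) g`
at `x = 1`, where `c(1) = Tr(S²)`, gives `g = 1` and thus `S⁴ = id` (`sq_sq`).

*Integrality.* Let `x ∈ H` be the character of the regular representation of the dual algebra `H*`,
and `n = dim H`. Then `x² = n x`, `S²(x) = x` and `c(x) = c(1)`. So right multiplication by `x / n` is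
an idempotent `P` commuting with the involution `S²`, and `Tr(S²) = c(x) = n Tr(P S²)`. Both traces
are integers, since `S⁴ = id`, and `0 < |Tr(S²)| ≤ n`; hence `Tr(S²) = ± n`, that is `S² = ± id`, and
`S²(1) = 1` decides the sign.
-/

namespace LarsonRadford

open TensorProduct Coalgebra HopfAlgebra

variable {H : Type*} [Ring H] [HopfAlgebra ℂ H]

/-! ### The antipode and the comultiplication -/

lemma sum_counit_smul_left {ι : Type*} {x : H} (r : Repr ℂ x ι) :
    ∑ i ∈ r.index, counit (R := ℂ) (r.right i) • r.left i = x := by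
  simpa only [map_sum, rid_tmul, one_smul] using
    congr(TensorProduct.rid ℂ H $(sum_tmul_counit_eq (R := ℂ) r))

/-- `x₁ ⊗ x₂ S(x₃) = x ⊗ 1`. -/
lemma sum_comul_mul_antipode {ι : Type*} {x : H} (r : Repr ℂ x ι) :
    ∑ i ∈ r.index, comul (R := ℂ) (r.left i) * ((1 : H) ⊗ₜ[ℂ] antipode ℂ (r.right i)) = x ⊗ₜ 1 := by
  have h := congr((LinearMap.mul' ℂ H ∘ₗ (antipode ℂ).lTensor H).lTensor H
    $(sum_tmul_tmul_eq r (fun i => ℛ ℂ (r.left i)) (fun i => ℛ ℂ (r.right i))))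
  simp only [map_sum, LinearMap.lTensor_tmul, LinearMap.comp_apply, LinearMap.mul'_apply,
    ← tmul_sum, sum_mul_antipode_eq_smul] at h
  calc _ = _ := Finset.sum_congr rfl fun i _ => by
        rw [← (ℛ ℂ (r.left i)).eq, Finset.sum_mul]
        simp only [Algebra.TensorProduct.tmul_mul_tmul, mul_one]
    _ = _ := h
    _ = (∑ i ∈ r.index, counit (R := ℂ) (r.right i) • r.left i) ⊗ₜ 1 := by
        simp only [tmul_smul, sum_tmul, smul_tmul']
    _ = _ := by
        rw [sum_counit_smul_left]

/-- `x₁ ⊗ S(x₂) x₃ = x ⊗ 1`. -/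
lemma sum_comul_antipode_mul {ι : Type*} {x : H} (r : Repr ℂ x ι) :
    ∑ i ∈ r.index, (antipode ℂ).lTensor H (comul (R := ℂ) (r.left i)) * ((1 : H) ⊗ₜ[ℂ] r.right i)
      = x ⊗ₜ 1 := by
  have h := congr((LinearMap.mul' ℂ H ∘ₗ (antipode ℂ).rTensor H).lTensor H
    $(sum_tmul_tmul_eq r (fun i => ℛ ℂ (r.left i)) (fun i => ℛ ℂ (r.right i))))
  simp only [map_sum, LinearMap.lTensor_tmul, LinearMap.rTensor_tmul, LinearMap.comp_apply,
    LinearMap.mul'_apply, ← tmul_sum, sum_antipode_mul_eq_smul] at h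
  calc _ = _ := Finset.sum_congr rfl fun i _ => by
        rw [← (ℛ ℂ (r.left i)).eq, map_sum, Finset.sum_mul]
        simp only [LinearMap.lTensor_tmul, Algebra.TensorProduct.tmul_mul_tmul, mul_one]
    _ = _ := h
    _ = (∑ i ∈ r.index, counit (R := ℂ) (r.right i) • r.left i) ⊗ₜ 1 := by
        simp only [tmul_smul, sum_tmul, smul_tmul']
    _ = _ := by
        rw [sum_counit_smul_left]

/-- `S(x₁) x₂ ⊗ x₃ = 1 ⊗ x`. -/
lemma sum_antipode_mul_comul {ι : Type*} {x : H} (r : Repr ℂ x ι) :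
    ∑ i ∈ r.index, (antipode ℂ (r.left i) ⊗ₜ[ℂ] (1 : H)) * comul (R := ℂ) (r.right i) = 1 ⊗ₜ x := by
  have h := congr(((LinearMap.mul' ℂ H ∘ₗ (antipode ℂ).rTensor H).rTensor H
    ∘ₗ (TensorProduct.assoc ℂ H H H).symm.toLinearMap)
    $(sum_tmul_tmul_eq r (fun i => ℛ ℂ (r.left i)) (fun i => ℛ ℂ (r.right i))))
  simp only [map_sum, LinearMap.rTensor_tmul, LinearMap.comp_apply, LinearEquiv.coe_coe,
    assoc_symm_tmul, LinearMap.mul'_apply, ← sum_tmul, sum_antipode_mul_eq_smul] at h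
  calc _ = _ := Finset.sum_congr rfl fun i _ => by
        rw [← (ℛ ℂ (r.right i)).eq, Finset.mul_sum]
        simp only [Algebra.TensorProduct.tmul_mul_tmul, one_mul]
    _ = _ := h.symm
    _ = 1 ⊗ₜ (∑ i ∈ r.index, counit (R := ℂ) (r.left i) • r.right i) := by
        simp only [tmul_smul, tmul_sum, smul_tmul]
    _ = _ := by rw [sum_counit_smul]

open WithConv in
/-- `Δ(S x) = S(x₂) ⊗ S(x₁)`: both sides are convolution inverses of `Δ`. -/
lemma comul_antipode (x : H) :
    comul (R := ℂ) (antipode ℂ x) =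
      TensorProduct.map (antipode ℂ) (antipode ℂ) (TensorProduct.comm ℂ H H (comul (R := ℂ) x)) := by
  have key : comul (R := ℂ) ∘ₗ antipode ℂ =
      TensorProduct.map (antipode ℂ) (antipode ℂ) ∘ₗ
        (TensorProduct.comm ℂ H H).toLinearMap ∘ₗ comul (R := ℂ) (A := H) := by
    apply WithConv.toConv_injective
    apply left_inv_eq_right_inv (a := toConv (comul (R := ℂ) (A := H)))
    · ext x
      rw [(ℛ ℂ x).convMul_apply]
      simp only [LinearMap.coe_comp, Function.comp_apply, ← Bialgebra.comul_mul, ← map_sum,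
        sum_antipode_mul_eq_algebraMap_counit, LinearMap.convOne_apply]
      exact Bialgebra.comul_algebraMap _
    · ext x
      let r := ℛ ℂ x
      rw [r.convMul_apply]
      have h := congr(TensorProduct.lift
        (LinearMap.mk₂ ℂ (fun (a : H) (t : H ⊗[ℂ] H) =>
          comul (R := ℂ) a * TensorProduct.map (antipode ℂ) (antipode ℂ) (TensorProduct.comm ℂ H H t))
          (by intros; simp [add_mul]) (by intros; simp) (by intros; simp [mul_add])
          (by intros; simp))
        $(sum_tmul_tmul_eq r (fun i => ℛ ℂ (r.left i)) (fun i => ℛ ℂ (r.right i))))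
      simp only [map_sum, lift.tmul, LinearMap.mk₂_apply, comm_tmul, map_tmul] at h
      calc _ = _ := Finset.sum_congr rfl fun i _ => by
            show comul (R := ℂ) (r.left i) * TensorProduct.map (antipode ℂ) (antipode ℂ)
              (TensorProduct.comm ℂ H H (comul (R := ℂ) (r.right i))) = _
            rw [← (ℛ ℂ (r.right i)).eq]
            simp only [map_sum, comm_tmul, map_tmul, Finset.mul_sum]
        _ = _ := h.symm
        _ = ∑ i ∈ r.index, (r.left i ⊗ₜ[ℂ] (1 : H)) * (antipode ℂ (r.right i) ⊗ₜ[ℂ] (1 : H)) :=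
            Finset.sum_congr rfl fun i _ => by
              rw [← sum_comul_mul_antipode (ℛ ℂ (r.left i)), Finset.sum_mul]
              simp only [mul_assoc, Algebra.TensorProduct.tmul_mul_tmul, mul_one, one_mul]
        _ = _ := by
            simp only [Algebra.TensorProduct.tmul_mul_tmul, mul_one, ← sum_tmul,
              sum_mul_antipode_eq_algebraMap_counit, LinearMap.convOne_apply]
            rfl
  exact LinearMap.congr_fun key x

/-- `S²` as an algebra endomorphism. -/
noncomputable def sq : H →ₐ[ℂ] H :=
  .ofLinearMap (antipode ℂ ∘ₗ antipode ℂ) (by simp) (by intro x y; simp [antipode_mul_antidistrib])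

lemma sq_apply (x : H) : sq x = antipode ℂ (antipode ℂ x) := rfl

lemma comul_sq (x : H) :
    comul (R := ℂ) (sq x) = TensorProduct.map sq.toLinearMap sq.toLinearMap (comul (R := ℂ) x) := by
  rw [sq_apply, comul_antipode, comul_antipode, ← (ℛ ℂ x).eq]
  simp only [map_sum, comm_tmul, map_tmul]
  rfl

/-! ### Normalised integrals -/

/-- A two-sided integral `t` of `H` normalised by `ε(t) = 1`. -/
structure IsHaar (t : H) : Prop where
  mul_left : ∀ h : H, h * t = counit (R := ℂ) h • t
  mul_right : ∀ h : H, t * h = counit (R := ℂ) h • t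
  counit_eq : counit (R := ℂ) t = 1

/-- A complement of the left ideal `ker e` is spanned by a left integral. -/
lemma exists_left_integral {A : Type*} [Ring A] [Algebra ℂ A] [IsSemisimpleRing A]
    (e : A →ₐ[ℂ] ℂ) : ∃ b : A, e b = 1 ∧ ∀ h, h * b = e h • b := by
  obtain ⟨I, hI⟩ := exists_isCompl (RingHom.ker e : Submodule A A)
  have h1 : (1 : A) ∈ (RingHom.ker e : Submodule A A) ⊔ I := by rw [hI.sup_eq_top]; trivial
  obtain ⟨a, ha, b, hb, hab⟩ := Submodule.mem_sup.1 h1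
  have ha' : e a = 0 := ha
  have key : ∀ h, e h = 0 → h * b = 0 := fun h hh => by
    have h2 : h * b ∈ (RingHom.ker e : Submodule A A) ⊓ I :=
      ⟨by show e (h * b) = 0; simp [hh], I.smul_mem h hb⟩
    rwa [hI.inf_eq_bot, Submodule.mem_bot] at h2
  refine ⟨b, by simpa [ha'] using congr(e $hab), fun h => ?_⟩
  have := key (h - algebraMap ℂ A (e h)) (by simp)
  rw [sub_mul, sub_eq_zero] at this
  rw [this, Algebra.smul_def]

variable (H) in
lemma exists_isHaar [IsSemisimpleRing H] : ∃ t : H, IsHaar t := by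
  obtain ⟨b, hb1, hb⟩ := exists_left_integral (Bialgebra.counitAlgHom ℂ H)
  have : IsSemisimpleRing Hᵐᵒᵖ := isSemisimpleRing_mulOpposite_iff.2 ‹_›
  obtain ⟨b', hb1', hb'⟩ := exists_left_integral
    ((AlgHom.fromOpposite (Bialgebra.counitAlgHom ℂ H) (fun _ _ => Commute.all _ _)))
  have hr : ∀ h : H, b'.unop * h = counit (R := ℂ) h • b'.unop := fun h => by
    simpa using! congr(MulOpposite.unop $(hb' (MulOpposite.op h)))
  have e : b'.unop = b := by
    have h1 := hr b
    rw [hb] at h1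
    simp only [Bialgebra.counitAlgHom_apply] at hb1 h1
    have hb1'' : counit (R := ℂ) b'.unop = 1 := hb1'
    simpa [hb1, hb1''] using h1.symm
  exact ⟨b, hb, fun h => by simpa [e] using hr h, hb1⟩

/-- `t₁ x ⊗ t₂ = t₁ ⊗ t₂ S(x)`. -/
lemma IsHaar.casimir_right {t : H} (ht : IsHaar t) (x : H) :
    comul (R := ℂ) t * (x ⊗ₜ[ℂ] (1 : H)) = comul (R := ℂ) t * ((1 : H) ⊗ₜ[ℂ] antipode ℂ x) := by
  let r := ℛ ℂ x
  calc _ = ∑ i ∈ r.index, comul (R := ℂ) (t * r.left i) * ((1 : H) ⊗ₜ[ℂ] antipode ℂ (r.right i)) := by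
        rw [← sum_comul_mul_antipode r, Finset.mul_sum]
        simp only [Bialgebra.comul_mul, mul_assoc]
    _ = comul (R := ℂ) t * ((1 : H) ⊗ₜ[ℂ]
          antipode ℂ (∑ i ∈ r.index, counit (R := ℂ) (r.left i) • r.right i)) := by
        simp only [ht.mul_right, map_smul, map_sum, tmul_sum, Finset.mul_sum, tmul_smul,
          mul_smul_comm, smul_mul_assoc]
    _ = _ := by rw [sum_counit_smul]

/-- `h t₁ ⊗ S(t₂) = t₁ ⊗ S(t₂) h`. -/
lemma IsHaar.casimir_left {t : H} (ht : IsHaar t) {ι : Type*} (r : Repr ℂ t ι) (h : H) :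
    ∑ k ∈ r.index, (h * r.left k) ⊗ₜ[ℂ] antipode ℂ (r.right k) =
      ∑ k ∈ r.index, r.left k ⊗ₜ[ℂ] (antipode ℂ (r.right k) * h) := by
  have key : ∀ z : H ⊗[ℂ] H,
      ∑ k ∈ r.index, ((1 : H) ⊗ₜ[ℂ] antipode ℂ (r.right k)) * (antipode ℂ).lTensor H z *
      (r.left k ⊗ₜ[ℂ] (1 : H)) = (antipode ℂ).lTensor H (z * comul (R := ℂ) t) := fun z => by
    rw [← r.eq, Finset.mul_sum, map_sum]
    refine Finset.sum_congr rfl fun k _ => ?_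
    induction z with
    | zero => simp
    | tmul a b => simp [antipode_mul_antidistrib]
    | add a b ha hb => simp only [map_add, mul_add, add_mul, ha, hb]
  let q := ℛ ℂ h
  calc _ = ∑ k ∈ r.index, ((1 : H) ⊗ₜ[ℂ] antipode ℂ (r.right k)) * (h ⊗ₜ[ℂ] (1 : H)) *
        (r.left k ⊗ₜ[ℂ] (1 : H)) := by simp
    _ = ∑ i ∈ q.index, (∑ k ∈ r.index, ((1 : H) ⊗ₜ[ℂ] antipode ℂ (r.right k)) *
          (antipode ℂ).lTensor H (comul (R := ℂ) (q.left i)) * (r.left k ⊗ₜ[ℂ] (1 : H))) *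
          ((1 : H) ⊗ₜ[ℂ] q.right i) := by
        simp only [← sum_comul_antipode_mul q, Finset.mul_sum, Finset.sum_mul]
        rw [Finset.sum_comm]
        refine Finset.sum_congr rfl fun i _ => Finset.sum_congr rfl fun k _ => ?_
        have : ((1 : H) ⊗ₜ[ℂ] q.right i) * (r.left k ⊗ₜ[ℂ] (1 : H)) =
          (r.left k ⊗ₜ[ℂ] (1 : H)) * ((1 : H) ⊗ₜ[ℂ] q.right i) := by simp
        simp only [mul_assoc, this]
    _ = (antipode ℂ).lTensor H (comul (R := ℂ) t) *
          ((1 : H) ⊗ₜ[ℂ] ∑ i ∈ q.index, counit (R := ℂ) (q.left i) • q.right i) := by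
        simp only [key, ← Bialgebra.comul_mul, ht.mul_left, map_smul, tmul_sum, tmul_smul,
          Finset.mul_sum, mul_smul_comm, smul_mul_assoc]
    _ = _ := by
        rw [sum_counit_smul, ← r.eq, map_sum, Finset.sum_mul]
        simp


/-! ### Contractions against functionals -/

section Contraction

variable {C : Type*} [AddCommGroup C] [Module ℂ C] [Coalgebra ℂ C]

/-- The left contraction `x ↦ p(x₁) x₂`, linear in the functional `p`. -/
noncomputable def contrL : (C →ₗ[ℂ] ℂ) →ₗ[ℂ] (C →ₗ[ℂ] C) where
  toFun p := (TensorProduct.lid ℂ C).toLinearMap ∘ₗ p.rTensor C ∘ₗ comul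
  map_add' p q := by ext; simp [LinearMap.rTensor_add]
  map_smul' a p := by ext; simp [LinearMap.rTensor_smul]

/-- The right contraction `x ↦ x₁ p(x₂)`. -/
noncomputable def contrR (p : C →ₗ[ℂ] ℂ) : C →ₗ[ℂ] C :=
  (TensorProduct.rid ℂ C).toLinearMap ∘ₗ p.lTensor C ∘ₗ comul

variable {ι : Type*} {x : C} (p q : C →ₗ[ℂ] ℂ)

lemma contrL_repr (r : Repr ℂ x ι) : contrL p x = ∑ i ∈ r.index, p (r.left i) • r.right i := by
  simp [contrL, ← r.eq]

lemma contrR_repr (r : Repr ℂ x ι) : contrR p x = ∑ i ∈ r.index, p (r.right i) • r.left i := by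
  simp [contrR, ← r.eq]

lemma apply_contrL (x : C) : p (contrL q x) = q (contrR p x) := by
  rw [contrL_repr q (ℛ ℂ x), contrR_repr p (ℛ ℂ x)]
  simp [mul_comm]

lemma contrL_contrL (x : C) : contrL p (contrL q x) = contrL (p ∘ₗ contrL q) x := by
  let r := ℛ ℂ x
  have h := congr(TensorProduct.lift (LinearMap.lsmul ℂ C ∘ₗ q)
    ((TensorProduct.lift (LinearMap.lsmul ℂ C ∘ₗ p)).lTensor C
    $(sum_tmul_tmul_eq r (fun i => ℛ ℂ (r.left i)) (fun i => ℛ ℂ (r.right i)))))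
  simp only [map_sum, LinearMap.lTensor_tmul, lift.tmul, LinearMap.comp_apply,
    LinearMap.lsmul_apply, map_smul] at h
  rw [contrL_repr q r, contrL_repr _ r, map_sum]
  simp only [map_smul, LinearMap.comp_apply]
  calc _ = _ := Finset.sum_congr rfl fun i _ => by
        rw [contrL_repr p (ℛ ℂ (r.right i)), Finset.smul_sum]
        exact Finset.sum_congr rfl fun j _ => smul_comm _ _ _
    _ = _ := h.symm
    _ = _ := Finset.sum_congr rfl fun i _ => by
        rw [contrL_repr q (ℛ ℂ (r.left i)), map_sum, Finset.sum_smul]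
        exact Finset.sum_congr rfl fun j _ => by simp [smul_smul, mul_comm]

lemma contrR_contrR (x : C) : contrR p (contrR q x) = contrR (p ∘ₗ contrR q) x := by
  let r := ℛ ℂ x
  have h := congr(TensorProduct.lift (LinearMap.lsmul ℂ C ∘ₗ p).flip
    ((TensorProduct.lift (LinearMap.lsmul ℂ C ∘ₗ q).flip).rTensor C
    ((TensorProduct.assoc ℂ C C C).symm ((LinearMap.lTensor C
      (TensorProduct.comm ℂ C C).toLinearMap)
    $(sum_tmul_tmul_eq r (fun i => ℛ ℂ (r.left i)) (fun i => ℛ ℂ (r.right i)))))))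
  simp only [map_sum, LinearMap.lTensor_tmul, LinearMap.rTensor_tmul, lift.tmul,
    LinearMap.comp_apply, LinearMap.flip_apply, LinearEquiv.coe_coe, comm_tmul, assoc_symm_tmul,
    LinearMap.lsmul_apply, map_smul] at h
  rw [contrR_repr q r, contrR_repr _ r, map_sum]
  simp only [map_smul, LinearMap.comp_apply]
  calc _ = _ := Finset.sum_congr rfl fun i _ => by
        rw [contrR_repr p (ℛ ℂ (r.left i)), Finset.smul_sum]
        exact Finset.sum_congr rfl fun j _ => by simp [smul_smul, mul_comm]
    _ = _ := h
    _ = _ := Finset.sum_congr rfl fun i _ => by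
        rw [contrR_repr q (ℛ ℂ (r.right i)), map_sum, Finset.sum_smul]
        simp [smul_smul, mul_comm]

end Contraction

lemma eq_of_forall_dual {x y : H} (h : ∀ q : H →ₗ[ℂ] ℂ, q x = q y) : x = y := by
  rw [← sub_eq_zero, ← Module.forall_dual_apply_eq_zero_iff ℂ]
  intro q
  rw [map_sub, h q, sub_self]

lemma contrL_one (p : H →ₗ[ℂ] ℂ) : contrL p (1 : H) = p 1 • 1 := by
  simp [contrL, Algebra.TensorProduct.one_def]

lemma contrR_one (p : H →ₗ[ℂ] ℂ) : contrR p (1 : H) = p 1 • 1 := by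
  simp [contrR, Algebra.TensorProduct.one_def]

/-! ### An integral on `H` and Radford's formula for `S⁴` -/

/-- The functional `c(x) = Tr(y ↦ S²(y) x)`; for semisimple `H` it is a nonzero integral on `H`. -/
noncomputable def haar : H →ₗ[ℂ] ℂ :=
  LinearMap.trace ℂ H ∘ₗ LinearMap.lcomp ℂ H (sq (H := H)).toLinearMap ∘ₗ (LinearMap.mul ℂ H).flip

lemma haar_apply (x : H) :
    haar x = LinearMap.trace ℂ H ((LinearMap.mul ℂ H).flip x ∘ₗ sq.toLinearMap) := rfl

/-- `S²` is a Nakayama automorphism of the functional `haar`. -/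
lemma haar_mul (x y : H) : haar (x * y) = haar (sq y * x) := by
  have h1 : (LinearMap.mul ℂ H).flip (x * y) ∘ₗ sq.toLinearMap =
      (LinearMap.mul ℂ H).flip y * ((LinearMap.mul ℂ H).flip x ∘ₗ sq.toLinearMap) := by
    ext; simp [mul_assoc]
  have h2 : (LinearMap.mul ℂ H).flip (sq y * x) ∘ₗ sq.toLinearMap =
      ((LinearMap.mul ℂ H).flip x ∘ₗ sq.toLinearMap) * (LinearMap.mul ℂ H).flip y := by
    ext; simp [mul_assoc]
  rw [haar_apply, haar_apply, h1, h2, LinearMap.trace_mul_comm]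

lemma haar_one : haar (1 : H) = LinearMap.trace ℂ H (sq (H := H)).toLinearMap := by
  rw [haar_apply]
  congr 1
  ext; simp

namespace IsHaar

variable [FiniteDimensional ℂ H] {t : H}

lemma haar_self (ht : IsHaar t) : haar t = 1 := by
  have : (LinearMap.mul ℂ H).flip t ∘ₗ sq.toLinearMap =
      (counit (R := ℂ) (A := H)).smulRight t := by
    ext y; simp [ht.mul_left, sq_apply]
  rw [haar_apply, this, LinearMap.trace_smulRight, ht.counit_eq]

/-- The element `t₁ ⊗ S(t₂)` is dual to the bilinear form `(x, y) ↦ c(xy)`. -/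
lemma sum_haar_smul (ht : IsHaar t) {ι : Type*} (r : Repr ℂ t ι) (m : H) :
    ∑ k ∈ r.index, haar (antipode ℂ (r.right k) * m) • r.left k = m := by
  have h1 : ∑ k ∈ r.index, haar (antipode ℂ (r.right k)) • r.left k = 1 := by
    let b := Module.finBasis ℂ H
    have tr : ∀ x : H, haar x = ∑ i, b.coord i (sq (b i) * x) := fun x => by
      rw [haar_apply, LinearMap.trace_eq_matrix_trace ℂ b, Matrix.trace]
      simp [LinearMap.toMatrix_apply]
    have cas : ∀ y : H, ∑ k ∈ r.index, r.left k ⊗ₜ[ℂ] (sq y * antipode ℂ (r.right k)) =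
        ∑ k ∈ r.index, (r.left k * y) ⊗ₜ[ℂ] antipode ℂ (r.right k) := fun y => by
      have := congr((antipode ℂ).lTensor H $(ht.casimir_right y))
      rw [← r.eq] at this
      simpa [Finset.sum_mul, antipode_mul_antidistrib] using! this.symm
    calc _ = ∑ i, TensorProduct.rid ℂ H ((b.coord i).lTensor H
          (∑ k ∈ r.index, r.left k ⊗ₜ[ℂ] (sq (b i) * antipode ℂ (r.right k)))) := by
          simp only [tr, Finset.sum_smul, map_sum, LinearMap.lTensor_tmul, rid_tmul]
          rw [Finset.sum_comm]
      _ = ∑ k ∈ r.index, r.left k * ∑ i, b.coord i (antipode ℂ (r.right k)) • b i := by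
          simp only [cas, map_sum, LinearMap.lTensor_tmul, rid_tmul, Finset.mul_sum,
            mul_smul_comm]
          rw [Finset.sum_comm]
      _ = 1 := by
          simp only [Module.Basis.coord_apply, b.sum_repr]
          rw [sum_mul_antipode_eq_smul, ht.counit_eq, one_smul]
  have h2 := congr(TensorProduct.rid ℂ H ((haar (H := H)).lTensor H $(ht.casimir_left r m)))
  simp only [map_sum, LinearMap.lTensor_tmul, rid_tmul] at h2
  rw [← h2]
  simp only [← mul_smul_comm, ← Finset.mul_sum, h1, mul_one]

lemma eq_zero_of_haar_mul_right (ht : IsHaar t) {a : H} (h : ∀ y, haar (y * a) = 0) : a = 0 := by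
  rw [← ht.sum_haar_smul (ℛ ℂ t) a]
  simp [h]

lemma antipode_injective (ht : IsHaar t) : Function.Injective (antipode ℂ : H →ₗ[ℂ] H) := by
  rw [← LinearMap.ker_eq_bot, LinearMap.ker_eq_bot']
  intro a ha
  refine ht.eq_zero_of_haar_mul_right fun y => ?_
  rw [haar_mul, sq_apply, ha]
  simp

lemma sq_surjective (ht : IsHaar t) : Function.Surjective (sq (H := H)) := by
  have : Function.Injective (sq (H := H)).toLinearMap :=
    ht.antipode_injective.comp ht.antipode_injective
  exact LinearMap.injective_iff_surjective.1 this

lemma eq_zero_of_haar_mul_left (ht : IsHaar t) {a : H} (h : ∀ y, haar (a * y) = 0) : a = 0 := by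
  obtain ⟨b, rfl⟩ := ht.sq_surjective a
  rw [ht.eq_zero_of_haar_mul_right (a := b) fun y => by rw [haar_mul, h], map_zero]

lemma eq_of_haar_mul_left (ht : IsHaar t) {a b : H} (h : ∀ y, haar (a * y) = haar (b * y)) :
    a = b := by
  rw [← sub_eq_zero]
  exact ht.eq_zero_of_haar_mul_left fun y => by rw [sub_mul, map_sub, h, sub_self]

/-- Every functional is `c(h ·)` for an explicit `h`. -/
lemma dual_apply (ht : IsHaar t) (p : H →ₗ[ℂ] ℂ) (m : H) :
    p m = haar (antipode ℂ (contrL p t) * m) := by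
  conv_lhs => rw [← ht.sum_haar_smul (ℛ ℂ t) m]
  rw [contrL_repr p (ℛ ℂ t)]
  simp [Finset.sum_mul, mul_comm]

lemma contrL_haar_self (ht : IsHaar t) : contrL haar t = 1 := by
  apply ht.antipode_injective
  rw [antipode_one]
  exact ht.eq_of_haar_mul_left fun y => by rw [one_mul, ← ht.dual_apply]

/-- `c` is a right integral: `c(x₁) x₂ = c(x) 1`. -/
lemma contrL_haar (ht : IsHaar t) (x : H) : contrL haar x = haar x • 1 := by
  refine eq_of_forall_dual fun q => ?_
  have := ht.dual_apply (q ∘ₗ contrL haar) x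
  rw [← contrL_contrL, ht.contrL_haar_self, contrL_one] at this
  simpa [mul_comm] using this

/-- `x₁ c(x₂) = c(x) g` for the distinguished element `g = t₁ c(t₂)`. -/
lemma contrR_haar (ht : IsHaar t) (x : H) : contrR haar x = haar x • contrR haar t := by
  refine eq_of_forall_dual fun q => ?_
  have := ht.dual_apply (haar ∘ₗ contrL q) x
  rw [← contrL_contrL, ht.contrL_haar, LinearMap.comp_apply, apply_contrL, apply_contrL] at this
  simpa [mul_comm] using this

/-- The distinguished element `g = t₁ c(t₂)` is group-like. -/
lemma isGroupLikeElem (ht : IsHaar t) : IsGroupLikeElem ℂ (contrR haar t) := by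
  set g := contrR haar t with hg
  have h1 : ∀ q : H →ₗ[ℂ] ℂ, contrR q g = q g • g := fun q => by
    have : q ∘ₗ contrR haar = q g • haar := by
      ext x; simp [ht.contrR_haar x, hg, mul_comm]
    rw [hg, contrR_contrR, this, ← hg]
    rw [← LinearMap.smul_apply (q g) (contrR haar) t]
    congr 1
    ext x; simp [contrR, LinearMap.lTensor_smul]
  constructor
  · rw [hg, ← apply_contrL, ← ht.haar_self]
    congr 1
    simp [contrL]
  · let b := Module.finBasis ℂ H
    have sep : ∀ z : H ⊗[ℂ] H, z = ∑ i, TensorProduct.rid ℂ H ((b.coord i).lTensor H z) ⊗ₜ b i := by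
      intro z
      induction z with
      | zero => simp
      | tmul x y =>
        simp only [LinearMap.lTensor_tmul, rid_tmul, smul_tmul, ← tmul_sum,
          Module.Basis.coord_apply, b.sum_repr]
      | add x y hx hy =>
        simp only [map_add, add_tmul, Finset.sum_add_distrib, ← hx, ← hy]
    rw [sep (comul (R := ℂ) g)]
    calc _ = ∑ i, contrR (b.coord i) g ⊗ₜ[ℂ] b i := rfl
      _ = _ := by
        simp only [h1, smul_tmul, ← tmul_sum, Module.Basis.coord_apply, b.sum_repr]

/-- `c ∘ S = c(g ·)`. -/
lemma haar_antipode (ht : IsHaar t) (m : H) : haar (antipode ℂ m) = haar (contrR haar t * m) := by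
  have h : antipode ℂ m = contrL (haar ∘ₗ (LinearMap.mul ℂ H).flip m) t := by
    have h1 := congr(TensorProduct.lid ℂ H ((haar (H := H)).rTensor H $(ht.casimir_right m)))
    have h2 := ht.contrL_haar_self
    rw [contrL_repr _ (ℛ ℂ t)] at h2 ⊢
    rw [← (ℛ ℂ t).eq] at h1
    simp only [Finset.sum_mul, Algebra.TensorProduct.tmul_mul_tmul, mul_one, map_sum,
      LinearMap.rTensor_tmul, lid_tmul, ← smul_mul_assoc] at h1
    rw [← Finset.sum_mul, h2, one_mul] at h1
    simpa using h1.symm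
  rw [h, apply_contrL]
  simp

/-- Radford's formula in the unimodular case: `S⁴(x) g = g x`. -/
lemma sq_sq_mul (ht : IsHaar t) (x : H) : sq (sq x) * contrR haar t = contrR haar t * x := by
  refine ht.eq_of_haar_mul_left fun y => ?_
  calc haar (sq (sq x) * contrR haar t * y) = haar (contrR haar t * (y * sq x)) := by
        rw [mul_assoc, ← haar_mul, mul_assoc]
    _ = haar (sq (antipode ℂ x) * antipode ℂ y) := by
        rw [← ht.haar_antipode, antipode_mul_antidistrib]; rfl
    _ = haar (antipode ℂ (x * y)) := by rw [← haar_mul, antipode_mul_antidistrib]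
    _ = _ := by rw [ht.haar_antipode, mul_assoc]

end IsHaar

/-! ### Traces of matrices of finite order -/

section MatrixLemmas

open Matrix

variable {n : Type*} [Fintype n] [DecidableEq n]

open scoped ComplexOrder in
/-- A matrix of finite order is unitary for the averaged positive definite form
`∑ₖ (Bᵏ)ᴴ Bᵏ`, hence the trace of its inverse is the conjugate of its trace. -/
lemma trace_inv_of_pow_eq_one {B : Matrix n n ℂ} {m : ℕ} (hm : 0 < m) (hB : B ^ m = 1) :
    B⁻¹.trace = star B.trace := by
  let P : Matrix n n ℂ := ∑ k ∈ Finset.range m, (B ^ k)ᴴ * B ^ k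
  have hP : P.PosDef := by
    obtain ⟨j, rfl⟩ : ∃ j, m = j + 1 := ⟨m - 1, by omega⟩
    simp only [P, Finset.sum_range_succ', pow_zero, conjTranspose_one, mul_one]
    exact PosDef.posSemidef_add
      (posSemidef_sum _ fun k _ => posSemidef_conjTranspose_mul_self _) PosDef.one
  have hBP : Bᴴ * P * B = P := by
    have h1 : Bᴴ * P * B = ∑ k ∈ Finset.range m, (B ^ (k + 1))ᴴ * B ^ (k + 1) := by
      simp only [P, Finset.mul_sum, Finset.sum_mul]
      refine Finset.sum_congr rfl fun k _ => ?_
      rw [pow_succ, conjTranspose_mul]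
      simp only [mul_assoc]
    have h2 := Finset.sum_range_succ (fun k => (B ^ k)ᴴ * B ^ k) m
    rw [Finset.sum_range_succ' (fun k => (B ^ k)ᴴ * B ^ k) m, hB, pow_zero] at h2
    rw [h1]
    exact add_right_cancel h2
  have hu : IsUnit B := IsUnit.of_pow_eq_one hB hm.ne'
  have hB1 : B * B⁻¹ = 1 := mul_nonsing_inv _ ((isUnit_iff_isUnit_det _).1 hu)
  have hP1 : P⁻¹ * P = 1 := nonsing_inv_mul _ ((isUnit_iff_isUnit_det _).1 hP.isUnit)
  have hP2 : P * P⁻¹ = 1 := mul_nonsing_inv _ ((isUnit_iff_isUnit_det _).1 hP.isUnit)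
  have h3 : Bᴴ = P * B⁻¹ * P⁻¹ := by
    calc Bᴴ = Bᴴ * P * (B * B⁻¹) * P⁻¹ := by rw [hB1, mul_one, mul_assoc, hP2, mul_one]
      _ = (Bᴴ * P * B) * B⁻¹ * P⁻¹ := by simp only [mul_assoc]
      _ = _ := by rw [hBP]
  rw [← trace_conjTranspose, h3, trace_mul_comm, ← mul_assoc, hP1, one_mul]

/-- Up to a scalar `B` has finite order, so that the product is a squared modulus. -/
lemma trace_mul_trace_inv_pos {B : Matrix n n ℂ} {m : ℕ} (hm : 0 < m) {s : ℂ} (hs : s ≠ 0)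
    (hB : B ^ m = s • 1) (ht : B.trace ≠ 0) : 0 < (B.trace * B⁻¹.trace).re := by
  obtain ⟨r, hr⟩ := IsAlgClosed.exists_pow_nat_eq s hm
  have hr0 : r ≠ 0 := by
    rintro rfl
    exact hs (by rw [← hr, zero_pow hm.ne'])
  have h1 : (r⁻¹ • B) ^ m = 1 := by
    rw [smul_pow, hB, smul_smul, inv_pow, hr, inv_mul_cancel₀ hs, one_smul]
  have h2 := trace_inv_of_pow_eq_one hm h1
  have h3 : (r⁻¹ • B)⁻¹ = r • B⁻¹ := by
    have hu : IsUnit (r⁻¹ • B) := IsUnit.of_pow_eq_one h1 hm.ne'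
    have hd := (isUnit_iff_isUnit_det _).1 hu
    have hB1 : B * B⁻¹ = 1 := by
      apply mul_nonsing_inv
      rw [det_smul] at hd
      exact isUnit_of_mul_isUnit_right hd
    apply inv_eq_right_inv
    rw [smul_mul_smul_comm, inv_mul_cancel₀ hr0, one_smul, hB1]
  have h4 : B.trace * B⁻¹.trace = (r⁻¹ • B).trace * star (r⁻¹ • B).trace := by
    rw [← h2, h3, trace_smul, trace_smul, smul_mul_smul_comm, inv_mul_cancel₀ hr0, one_smul]
  rw [h4, Complex.star_def, Complex.mul_conj, Complex.ofReal_re]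
  apply Complex.normSq_pos.2
  rw [trace_smul]
  exact smul_ne_zero (inv_ne_zero hr0) ht

/-- A nonzero matrix `v` with `v M ⊆ M v` is invertible, as its kernel is stable under all
matrices. -/
lemma isUnit_of_mul_eq {v : Matrix n n ℂ} (f : Matrix n n ℂ → Matrix n n ℂ)
    (h : ∀ X, v * X = f X * v) (hv : v ≠ 0) : IsUnit v := by
  rw [isUnit_iff_isUnit_det, isUnit_iff_ne_zero]
  intro hd
  obtain ⟨w, hw, hvw⟩ := exists_mulVec_eq_zero_iff.2 hd
  obtain ⟨j, hj⟩ := Function.ne_iff.1 hw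
  replace hj : w j ≠ 0 := hj
  apply hv
  ext a b
  have h1 : v *ᵥ (single b j 1 *ᵥ w) = 0 := by
    rw [mulVec_mulVec, h, ← mulVec_mulVec, hvw, mulVec_zero]
  have h2 := congrFun h1 a
  rw [single_mulVec] at h2
  simpa [mulVec, dotProduct, Function.update_apply, hj] using h2

/-- The trace of the map `X ↦ (vᵢ Xᵢ wᵢ)ᵢ` on a product of matrix algebras. -/
lemma trace_pi_mul {k : ℕ} {d : Fin k → ℕ}
    (v w : Π i, Matrix (Fin (d i)) (Fin (d i)) ℂ)
    (F : (Π i, Matrix (Fin (d i)) (Fin (d i)) ℂ) →ₗ[ℂ] (Π i, Matrix (Fin (d i)) (Fin (d i)) ℂ))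
    (hF : ∀ X i, F X i = v i * X i * w i) :
    LinearMap.trace ℂ _ F = ∑ i, (v i).trace * (w i).trace := by
  let b := Pi.basis fun i => Matrix.stdBasis ℂ (Fin (d i)) (Fin (d i))
  rw [LinearMap.trace_eq_matrix_trace ℂ b, Matrix.trace, Fintype.sum_sigma]
  refine Finset.sum_congr rfl fun i _ => ?_
  rw [Fintype.sum_prod_type, Matrix.trace, Matrix.trace, Finset.sum_mul_sum]
  refine Finset.sum_congr rfl fun a _ => Finset.sum_congr rfl fun c _ => ?_
  have hrep : ∀ X : Matrix (Fin (d i)) (Fin (d i)) ℂ,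
      (Matrix.stdBasis ℂ (Fin (d i)) (Fin (d i))).repr X (a, c) = X a c := fun X => by
    simp [Matrix.stdBasis]
  rw [diag_apply, LinearMap.toMatrix_apply, Pi.basis_repr, hF, hrep, Pi.basis_apply]
  simp [Matrix.stdBasis_eq_single, mul_apply, single_apply, ite_and]

end MatrixLemmas

/-! ### Nonvanishing of `Tr(S²)` and `S⁴ = id` -/

/-- Group-like elements have finite order, being linearly independent. -/
lemma exists_pow_eq_one [FiniteDimensional ℂ H] {g : H} (hg : IsGroupLikeElem ℂ g) :
    ∃ N : ℕ, 0 < N ∧ g ^ N = 1 := by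
  have : Finite (GroupLike ℂ H) := (linearIndep_groupLikeVal (R := ℂ) (A := H)).finite
  let u : GroupLike ℂ H := ⟨g, hg⟩
  refine ⟨orderOf u, orderOf_pos u, ?_⟩
  exact congrArg GroupLike.val (pow_orderOf_eq_one u)

/-- The element `v = S(t₂) t₁`, which implements `S²` by conjugation. -/
noncomputable def twist (t : H) : H :=
  LinearMap.mul' ℂ H (TensorProduct.map (antipode ℂ) .id
    (TensorProduct.comm ℂ H H (comul (R := ℂ) t)))

/-- `v y = S²(y) v`. -/
lemma twist_mul {t : H} (ht : IsHaar t) (y : H) : twist t * y = sq y * twist t := by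
  have h := congr(LinearMap.mul' ℂ H (TensorProduct.map (antipode ℂ) .id
    (TensorProduct.comm ℂ H H $(ht.casimir_right y))))
  rw [twist, ← (ℛ ℂ t).eq]
  rw [← (ℛ ℂ t).eq] at h
  simpa [Finset.sum_mul, Finset.mul_sum, antipode_mul_antidistrib, mul_assoc, sq_apply] using h

/-- A tracial functional does not distinguish `S(t₂) t₁` from `t₁ S(t₂) = 1`. -/
lemma apply_twist {t : H} (ht : IsHaar t) (τ : H →ₗ[ℂ] ℂ) (hτ : ∀ a b, τ (a * b) = τ (b * a)) :
    τ (twist t) = τ 1 := by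
  have h := sum_mul_antipode_eq_smul (R := ℂ) (ℛ ℂ t)
  rw [ht.counit_eq, one_smul] at h
  rw [← h, twist]
  conv_lhs => rw [← (ℛ ℂ t).eq]
  simp only [map_sum, comm_tmul, map_tmul, LinearMap.mul'_apply, LinearMap.id_apply]
  exact Finset.sum_congr rfl fun i _ => hτ _ _

/-- An even power of `twist t` is central, because its square and the group-like element
`g = t₁ c(t₂)` of finite order both implement `S⁴`. -/
lemma exists_twist_pow_comm [FiniteDimensional ℂ H] {t : H} (ht : IsHaar t) :
    ∃ m : ℕ, 0 < m ∧ ∀ y : H, twist t ^ m * y = y * twist t ^ m := by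
  set g := contrR haar t with hg
  obtain ⟨N, hN, hgN⟩ := exists_pow_eq_one ht.isGroupLikeElem
  rw [← hg] at hgN
  set g' := antipode ℂ g with hg'
  have hg'g : g' * g = 1 := ht.isGroupLikeElem.antipode_mul_cancel
  have hgg' : g * g' = 1 := ht.isGroupLikeElem.mul_antipode_cancel
  have hcomm : ∀ y, g' * sq (sq y) = y * g' := fun y => by
    calc g' * sq (sq y) = g' * (sq (sq y) * g) * g' := by
          rw [mul_assoc, mul_assoc, hgg', mul_one]
      _ = y * g' := by rw [ht.sq_sq_mul, ← hg, ← mul_assoc, hg'g, one_mul]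
  set w := g' * twist t ^ 2 with hw
  have hwc : ∀ y, Commute w y := fun y => by
    calc w * y = g' * sq (sq y) * twist t ^ 2 := by
          rw [hw, pow_two, mul_assoc, mul_assoc, twist_mul ht y, ← mul_assoc (twist t),
            twist_mul ht]
          simp only [mul_assoc]
      _ = y * w := by rw [hcomm, hw, mul_assoc]
  have hv : twist t ^ 2 = w * g := by
    rw [(hwc g).eq, hw, ← mul_assoc, hgg', one_mul]
  refine ⟨2 * N, by omega, fun y => ?_⟩
  rw [pow_mul, hv, (hwc g).mul_pow, hgN, mul_one]
  exact ((hwc y).pow_left N).eq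

/-- `Tr(S²)` is a sum of the positive numbers `tr(vᵢ) tr(vᵢ⁻¹)` over the matrix blocks of `H`. -/
lemma haar_one_ne_zero [FiniteDimensional ℂ H] [IsSemisimpleRing H] {t : H} (ht : IsHaar t) :
    haar (1 : H) ≠ 0 := by
  obtain ⟨k, d, hd, ⟨e⟩⟩ := IsSemisimpleRing.exists_algEquiv_pi_matrix_of_isAlgClosed ℂ H
  obtain ⟨m, hm, hcomm⟩ := exists_twist_pow_comm ht
  let v := e (twist t)
  have htr : ∀ i, (v i).trace = d i := fun i => by
    have := apply_twist ht (Matrix.traceLinearMap (Fin (d i)) ℂ ℂ ∘ₗ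
      LinearMap.proj i ∘ₗ e.toLinearMap) (fun a b => by
        simpa using! Matrix.trace_mul_comm (e a i) (e b i))
    simpa using this
  have htr0 : ∀ i, (v i).trace ≠ 0 := fun i => by
    rw [htr]; exact Nat.cast_ne_zero.2 (hd i).out
  have hmul : ∀ X, v * X = e (sq (e.symm X)) * v := fun X => by
    rw [← map_mul, ← twist_mul ht, map_mul, e.apply_symm_apply]
  have hu : ∀ i, IsUnit (v i) := fun i => by
    refine isUnit_of_mul_eq (fun X => e (sq (e.symm (Pi.single i X))) i) (fun X => ?_) ?_
    · simpa using congrFun (hmul (Pi.single i X)) i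
    · intro h0
      exact htr0 i (by rw [h0, Matrix.trace_zero])
  have hscal : ∀ i, ∃ s : ℂ, s ≠ 0 ∧ v i ^ m = s • 1 := fun i => by
    have h1 : ∀ X, Commute (v i ^ m) X := fun X => by
      have := congrArg e (hcomm (e.symm (Pi.single i X)))
      simpa using! congrFun this i
    obtain ⟨s, hs⟩ := Matrix.mem_range_scalar_of_commute_single (fun a b _ => (h1 _).symm)
    refine ⟨s, ?_, by rw [← hs, Matrix.scalar_apply, Matrix.smul_one_eq_diagonal]⟩
    rintro rfl
    have := (hu i).pow m
    rw [← hs, map_zero] at this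
    have hne := hd i
    exact not_isUnit_zero this
  have hvi : ∀ i, v i * (v i)⁻¹ = 1 := fun i =>
    Matrix.mul_nonsing_inv _ ((Matrix.isUnit_iff_isUnit_det _).1 (hu i))
  have htrace : haar (1 : H) = ∑ i, (v i).trace * (v i)⁻¹.trace := by
    rw [haar_one, ← LinearMap.trace_conj' _ e.toLinearEquiv]
    refine trace_pi_mul v (fun i => (v i)⁻¹) _ fun X i => ?_
    have := congrFun (hmul X) i
    rw [Pi.mul_apply, Pi.mul_apply] at this
    rw [this, mul_assoc, hvi, mul_one]
    rfl
  have hpos : ∀ i, 0 < ((v i).trace * (v i)⁻¹.trace).re := fun i => by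
    obtain ⟨s, hs, hs'⟩ := hscal i
    exact trace_mul_trace_inv_pos hm hs hs' (htr0 i)
  have hk : Nonempty (Fin k) := by
    by_contra hk
    rw [not_nonempty_iff] at hk
    have ht0 : t = 0 := e.injective (Subsingleton.elim _ _)
    have := ht.counit_eq
    rw [ht0, map_zero] at this
    exact zero_ne_one this
  intro h0
  rw [h0] at htrace
  have := congrArg Complex.re htrace
  rw [Complex.re_sum, Complex.zero_re] at this
  exact (Finset.sum_pos (fun i _ => hpos i) Finset.univ_nonempty).ne this

/-- `S⁴ = id`: since `c(1) ≠ 0`, the distinguished group-like element is `1`. -/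
lemma sq_sq [FiniteDimensional ℂ H] [IsSemisimpleRing H] (x : H) : sq (sq x) = x := by
  obtain ⟨t, ht⟩ := exists_isHaar H
  have h1 := ht.contrR_haar 1
  rw [contrR_one] at h1
  have h2 : contrR haar t = 1 := (smul_right_injective H (haar_one_ne_zero ht) h1).symm
  simpa [h2] using ht.sq_sq_mul x

/-! ### The regular character of the dual -/

lemma contrL_tmul {ι κ : Type*} {a b : H} (P : H ⊗[ℂ] H →ₗ[ℂ] ℂ) (r : Repr ℂ a ι)
    (s : Repr ℂ b κ) :
    contrL P (a ⊗ₜ[ℂ] b) = ∑ i ∈ r.index, ∑ j ∈ s.index,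
      P (r.left i ⊗ₜ s.left j) • (r.right i ⊗ₜ[ℂ] s.right j) := by
  simp [contrL, comul_tmul, ← r.eq, ← s.eq, sum_tmul, tmul_sum]
  exact Finset.sum_comm

variable (H) in
/-- The character of the regular representation of the dual algebra `H*`, seen as an element
of `H` through `H** = H`. -/
noncomputable def regChar [FiniteDimensional ℂ H] : H :=
  (Module.evalEquiv ℂ H).symm (LinearMap.trace ℂ H ∘ₗ contrL)

lemma apply_regChar [FiniteDimensional ℂ H] (p : H →ₗ[ℂ] ℂ) :
    p (regChar H) = LinearMap.trace ℂ H (contrL p) :=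
  LinearMap.congr_fun
    ((Module.evalEquiv ℂ H).apply_symm_apply (LinearMap.trace ℂ H ∘ₗ contrL)) p

lemma haar_regChar [FiniteDimensional ℂ H] {t : H} (ht : IsHaar t) :
    haar (regChar H) = haar (1 : H) := by
  have : contrL (haar (H := H)) = haar.smulRight 1 := by
    ext x; simp [ht.contrL_haar]
  rw [apply_regChar, this, LinearMap.trace_smulRight]

lemma sq_regChar [FiniteDimensional ℂ H] [IsSemisimpleRing H] : sq (regChar H) = regChar H := by
  refine eq_of_forall_dual fun p => ?_
  have h1 : contrL (p ∘ₗ sq.toLinearMap) = sq.toLinearMap * (contrL p * sq.toLinearMap) := by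
    ext x
    rw [← sq_sq (contrL (p ∘ₗ sq.toLinearMap) x)]
    simp only [Module.End.mul_apply, AlgHom.toLinearMap_apply]
    congr 1
    rw [contrL_repr _ (ℛ ℂ x)]
    simp only [contrL, LinearMap.coe_mk, AddHom.coe_mk, LinearMap.comp_apply, LinearEquiv.coe_coe,
      comul_sq]
    rw [← (ℛ ℂ x).eq]
    simp
  have h2 : sq.toLinearMap * sq.toLinearMap = (1 : Module.End ℂ H) := by
    ext x; simp [sq_sq]
  calc p (sq (regChar H)) = (p ∘ₗ sq.toLinearMap) (regChar H) := rfl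
    _ = p (regChar H) := by
      rw [apply_regChar, apply_regChar, h1, LinearMap.trace_mul_comm, mul_assoc, h2, mul_one]

/-- The contraction by `p ⊗ q` is the tensor product of the contractions by `p` and `q`, and such
functionals span the dual of `H ⊗ H`. -/
lemma trace_contrL_tensor [FiniteDimensional ℂ H] (P : H ⊗[ℂ] H →ₗ[ℂ] ℂ) :
    LinearMap.trace ℂ (H ⊗[ℂ] H) (contrL P) = P (regChar H ⊗ₜ regChar H) := by
  obtain ⟨z, rfl⟩ := (dualDistribEquiv ℂ H H).surjective P
  induction z with
  | zero => simp
  | add x y hx hy => simp only [map_add, LinearMap.add_apply, hx, hy]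
  | tmul p q =>
    have h1 : contrL (dualDistribEquiv ℂ H H (p ⊗ₜ q)) =
        TensorProduct.map (contrL p) (contrL q) := by
      ext a b
      simp only [AlgebraTensorModule.curry_apply, LinearMap.restrictScalars_self, curry_apply]
      rw [contrL_tmul _ (ℛ ℂ a) (ℛ ℂ b), map_tmul, contrL_repr p (ℛ ℂ a), contrL_repr q (ℛ ℂ b)]
      simp [sum_tmul, tmul_sum, dualDistribEquiv, smul_tmul', tmul_smul]
      rw [Finset.sum_comm]
      refine Finset.sum_congr rfl fun j _ => ?_
      rw [Finset.smul_sum]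
      refine Finset.sum_congr rfl fun i _ => ?_
      rw [smul_tmul', smul_smul, mul_comm]
    rw [h1, LinearMap.trace_tensorProduct', ← apply_regChar, ← apply_regChar]
    simp [dualDistribEquiv]

/-- The translation `a ⊗ b ↦ a b₁ ⊗ b₂` of `H ⊗ H`. -/
noncomputable def fusion : Module.End ℂ (H ⊗[ℂ] H) :=
  LinearMap.mul' ℂ (H ⊗[ℂ] H) ∘ₗ
    TensorProduct.map Algebra.TensorProduct.includeLeft.toLinearMap comul

/-- The inverse `a ⊗ b ↦ a S(b₁) ⊗ b₂` of `fusion`. -/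
noncomputable def fusionInv : Module.End ℂ (H ⊗[ℂ] H) :=
  LinearMap.mul' ℂ (H ⊗[ℂ] H) ∘ₗ
    TensorProduct.map Algebra.TensorProduct.includeLeft.toLinearMap
      ((antipode ℂ).rTensor H ∘ₗ comul)

lemma fusion_tmul (a b : H) : fusion (a ⊗ₜ[ℂ] b) = (a ⊗ₜ 1) * comul (R := ℂ) b := by
  simp [fusion]

lemma fusionInv_tmul (a b : H) :
    fusionInv (a ⊗ₜ[ℂ] b) = (a ⊗ₜ 1) * (antipode ℂ).rTensor H (comul (R := ℂ) b) := by
  simp [fusionInv]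

lemma fusion_mul_fusionInv : fusion * fusionInv = (1 : Module.End ℂ (H ⊗[ℂ] H)) := by
  ext a b
  simp only [AlgebraTensorModule.curry_apply, LinearMap.restrictScalars_self, curry_apply,
    Module.End.mul_apply, Module.End.one_apply]
  rw [fusionInv_tmul, ← (ℛ ℂ b).eq]
  simp only [map_sum, LinearMap.rTensor_tmul, Finset.mul_sum,
    Algebra.TensorProduct.tmul_mul_tmul, one_mul, fusion_tmul]
  have h := congr((a ⊗ₜ[ℂ] (1 : H)) * $(sum_antipode_mul_comul (ℛ ℂ b)))
  simpa [Finset.mul_sum, ← mul_assoc] using h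

/-- `fusion` intertwines contraction by `p ∘ mul` on `H ⊗ H` with contraction by `p` on the
left factor. -/
lemma fusion_mul_contrL (p : H →ₗ[ℂ] ℂ) :
    fusion * contrL (p ∘ₗ LinearMap.mul' ℂ H) = (contrL p).rTensor H * fusion := by
  ext a b
  simp only [AlgebraTensorModule.curry_apply, LinearMap.restrictScalars_self, curry_apply,
    Module.End.mul_apply]
  let r := ℛ ℂ a
  let s := ℛ ℂ b
  have hmul : ∀ c, contrL p (a * c) = ∑ i ∈ r.index, ∑ k ∈ (ℛ ℂ c).index,
      p (r.left i * (ℛ ℂ c).left k) • (r.right i * (ℛ ℂ c).right k) := fun c => by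
    simp only [contrL, LinearMap.coe_mk, AddHom.coe_mk, LinearMap.comp_apply, LinearEquiv.coe_coe,
      Bialgebra.comul_mul]
    conv_lhs => rw [← r.eq, ← (ℛ ℂ c).eq]
    simp [Finset.sum_mul, Finset.mul_sum]
    rw [Finset.sum_comm]
  have hcoassoc : ∀ i, ∑ j ∈ s.index, p (r.left i * s.left j) •
        ((r.right i ⊗ₜ[ℂ] (1 : H)) * comul (R := ℂ) (s.right j)) =
      ∑ j ∈ s.index, (∑ k ∈ (ℛ ℂ (s.left j)).index, p (r.left i * (ℛ ℂ (s.left j)).left k) •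
        (r.right i * (ℛ ℂ (s.left j)).right k)) ⊗ₜ[ℂ] s.right j := fun i => by
    have h := congr(TensorProduct.lift ((LinearMap.lsmul ℂ (H ⊗[ℂ] H)).comp
        (p ∘ₗ LinearMap.mulLeft ℂ (r.left i)))
      ((LinearMap.mulLeft ℂ (r.right i ⊗ₜ[ℂ] (1 : H))).lTensor H
      $(sum_tmul_tmul_eq s (fun j => ℛ ℂ (s.left j)) (fun j => ℛ ℂ (s.right j)))))
    simp only [map_sum, LinearMap.lTensor_tmul, lift.tmul, LinearMap.comp_apply,
      LinearMap.lsmul_apply, LinearMap.mulLeft_apply, Algebra.TensorProduct.tmul_mul_tmul,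
      one_mul] at h
    calc _ = _ := Finset.sum_congr rfl fun j _ => by
          rw [← (ℛ ℂ (s.right j)).eq, Finset.mul_sum, Finset.smul_sum]
          simp only [Algebra.TensorProduct.tmul_mul_tmul, one_mul]
      _ = _ := h.symm
      _ = _ := Finset.sum_congr rfl fun j _ => by
          simp only [sum_tmul, smul_tmul']
  rw [contrL_tmul _ r s, fusion_tmul]
  simp only [map_sum, map_smul, fusion_tmul, LinearMap.comp_apply, LinearMap.mul'_apply, hcoassoc]
  rw [← s.eq]
  simp only [Finset.mul_sum, map_sum, Algebra.TensorProduct.tmul_mul_tmul, one_mul,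
    LinearMap.rTensor_tmul, hmul, sum_tmul]
  rw [Finset.sum_comm]

/-- The regular character satisfies `x² = dim(H) x`: the tensor square of the regular
representation of `H*` is a multiple of the regular representation. -/
lemma regChar_mul_self [FiniteDimensional ℂ H] :
    regChar H * regChar H = (Module.finrank ℂ H : ℂ) • regChar H := by
  refine eq_of_forall_dual fun p => ?_
  have h1 := trace_contrL_tensor (H := H) (p ∘ₗ LinearMap.mul' ℂ H)
  have h2 : fusionInv * fusion = (1 : Module.End ℂ (H ⊗[ℂ] H)) :=
    mul_eq_one_symm fusion_mul_fusionInv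
  have h3 : contrL (p ∘ₗ LinearMap.mul' ℂ H) =
      fusionInv * ((contrL p).rTensor H * fusion) := by
    rw [← fusion_mul_contrL, ← mul_assoc, h2, one_mul]
  rw [h3, LinearMap.trace_mul_comm, mul_assoc, fusion_mul_fusionInv, mul_one,
    LinearMap.rTensor, LinearMap.trace_tensorProduct', LinearMap.trace_id, ← apply_regChar] at h1
  simpa [mul_comm] using h1.symm

/-! ### From `S⁴ = id` to `S² = id` -/

lemma exists_trace_eq_natCast {V : Type*} [AddCommGroup V] [Module ℂ V] [FiniteDimensional ℂ V]
    {f : Module.End ℂ V} (hf : IsIdempotentElem f) :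
    ∃ a : ℕ, a ≤ Module.finrank ℂ V ∧ LinearMap.trace ℂ V f = a :=
  ⟨_, Submodule.finrank_le _, (LinearMap.IsIdempotentElem.isProj_range f hf).trace⟩

/-- An involution `σ` of an `n`-dimensional space whose nonzero trace is `n` times the trace of
`P σ`, for an idempotent `P` commuting with `σ`, is `1` or `-1`: these traces are integers and
`|Tr σ| ≤ n`. -/
lemma eq_one_or_neg_one {V : Type*} [AddCommGroup V] [Module ℂ V] [FiniteDimensional ℂ V]
    {σ P : Module.End ℂ V} (hσ : σ * σ = 1) (hP : IsIdempotentElem P) (hc : Commute P σ)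
    (h0 : LinearMap.trace ℂ V σ ≠ 0)
    (h : LinearMap.trace ℂ V σ = Module.finrank ℂ V * LinearMap.trace ℂ V (P * σ)) :
    σ = 1 ∨ σ = -1 := by
  let E : Module.End ℂ V := (2⁻¹ : ℂ) • (1 + σ)
  have hE : IsIdempotentElem E := by
    simp only [E, IsIdempotentElem, smul_mul_smul_comm, mul_add, add_mul, hσ, one_mul, mul_one]
    module
  have hcE : Commute P E := ((Commute.one_right P).add_right hc).smul_right _
  have hσE : σ = (2 : ℂ) • E - 1 := by simp only [E]; module
  obtain ⟨a, han, ha⟩ := exists_trace_eq_natCast hE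
  obtain ⟨q, -, hq⟩ := exists_trace_eq_natCast (hP.mul_of_commute hcE hE)
  obtain ⟨b, -, hb⟩ := exists_trace_eq_natCast hP
  set n := Module.finrank ℂ V with hn
  have h1 : LinearMap.trace ℂ V σ = 2 * a - n := by
    rw [hσE, map_sub, map_smul, ha, LinearMap.trace_one, smul_eq_mul]
  have h2 : LinearMap.trace ℂ V (P * σ) = 2 * q - b := by
    rw [hσE, mul_sub, mul_one, mul_smul_comm, map_sub, map_smul, hq, hb, smul_eq_mul]
  rw [h1, h2] at h
  rw [h1] at h0
  have h' : 2 * (a : ℤ) - n = n * (2 * q - b) := by exact_mod_cast h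
  have h0' : 2 * (a : ℤ) - n ≠ 0 := by exact_mod_cast h0
  have hcase : a = 0 ∨ a = n := by
    have hle : (n : ℤ) ≤ |2 * (a : ℤ) - n| := by
      apply Int.le_of_dvd (abs_pos.2 h0')
      rw [dvd_abs]
      exact ⟨_, h'⟩
    rcases le_abs.1 hle with h | h <;> omega
  rcases hcase with rfl | rfl
  · right
    have hE0 : E = 0 := (LinearMap.IsIdempotentElem.trace_eq_zero_iff hE).1 (by simp [ha])
    rw [hσE, hE0, smul_zero, zero_sub]
  · left
    have hE1 : 1 - E = 0 := (LinearMap.IsIdempotentElem.trace_eq_zero_iff hE.one_sub).1 (by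
      rw [map_sub, ha, LinearMap.trace_one, hn, sub_self])
    rw [hσE, ← sub_eq_zero.1 hE1]
    module

/-- `S² = id`: right multiplication by `x / dim(H)`, for `x` the regular character of `H*`, is an
idempotent commuting with `S²`, and its composite with `S²` has trace `c(x) / dim(H)`, where
`c(x) = c(1) = Tr(S²)`. -/
lemma sq_eq_one [FiniteDimensional ℂ H] [IsSemisimpleRing H] :
    (sq (H := H)).toLinearMap = (1 : Module.End ℂ H) := by
  obtain ⟨t, ht⟩ := exists_isHaar H
  have : Nontrivial H := ⟨t, 0, fun h => by simpa [h] using ht.counit_eq⟩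
  set n : ℂ := ((Module.finrank ℂ H : ℕ) : ℂ) with hn
  have hn0 : n ≠ 0 := Nat.cast_ne_zero.2 Module.finrank_pos.ne'
  let σ : Module.End ℂ H := (sq (H := H)).toLinearMap
  let R : Module.End ℂ H := (LinearMap.mul ℂ H).flip (regChar H)
  have hR : R * R = n • R := by
    ext y; simp [R, mul_assoc, regChar_mul_self, hn]
  have hc : Commute R σ := by
    ext y; simp [R, σ, sq_regChar]
  have hσ : σ * σ = 1 := by
    ext y; simp [σ, sq_sq]
  have hP : IsIdempotentElem (n⁻¹ • R) := by
    rw [IsIdempotentElem, smul_mul_smul_comm, hR, smul_smul, mul_assoc, inv_mul_cancel₀ hn0,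
      mul_one]
  have htr : LinearMap.trace ℂ H (R * σ) = LinearMap.trace ℂ H σ := by
    rw [← haar_one, ← haar_regChar ht]
    rfl
  rcases eq_one_or_neg_one hσ hP (hc.smul_left _) (haar_one (H := H) ▸ haar_one_ne_zero ht)
    (by rw [smul_mul_assoc, map_smul, htr, smul_eq_mul, mul_inv_cancel_left₀ hn0]) with h | h
  · exact h
  -- `S²(1) = 1` excludes the sign `-1`
  · exfalso
    have h1 := LinearMap.congr_fun h 1
    simp only [σ, AlgHom.toLinearMap_apply, map_one, LinearMap.neg_apply,
      Module.End.one_apply] at h1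
    have h2 := congrArg (counit (R := ℂ)) h1
    simp only [Bialgebra.counit_one, map_neg] at h2
    norm_num at h2

end LarsonRadford

/-- (Larson–Radford) The antipode of a finite-dimensional semisimple Hopf algebra over
`ℂ` is an involution: `S ∘ S` is the identity linear map of `H`. -/
theorem larson_radford (H : Type) [Ring H] [HopfAlgebra ℂ H]
    [FiniteDimensional ℂ H] [IsSemisimpleRing H] :
    (HopfAlgebra.antipode (R := ℂ) (A := H)).comp (HopfAlgebra.antipode (R := ℂ) (A := H)) =
      LinearMap.id := by
  exact LarsonRadford.sq_eq_one (H := H)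
end

section
/- (Kaplansky's 7th conjecture) Let k be an algebraically closed field and H a finite-dimensional Hopf algebra over k that is semisimple as a ring and whose antipode S satisfies tr(S²) ≠ 0 (equivalently, H is also cosemisimple). Then S² = id, i.e. S ∘ S is the identity linear map of H. -/
/-!
The proof first settles characteristic zero by traces, and then reduces characteristic `p` to
characteristic zero by lifting `H` to the Witt vectors of `k`, following Larson–Radford and
Etingof–Gelaki.

**Characteristic zero.** The argument works for a finite free Hopf algebra `H` of rank `d` over a
domain of characteristic zero, with a normalised integral `Λ` and `tr(S²) ≠ 0`. Cyclicity of
partial traces (`ptr_cyc`) shows that the functionals `a ↦ tr(x ↦ a S²(x))` and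
`a ↦ tr(x ↦ S²(x) a)` are integrals on the two sides; having the same nonzero value at `1` they
coincide (`phiR_eq_phiL`). The legs of `Λ` are dual bases for the resulting pairing, which is
therefore non-degenerate, and the twisted trace property gives `S⁴ = 1` (`S2_S2`). Let `χ` be the
character of the regular representation and `E(a) = a₁ χ(a₂)`. Then `χ * χ = dχ` (`chi_conv`), so
`E² = dE`, and `tr(S²E) = tr(S²)` (`trace_S2_conv`). As `S²` is an involution commuting with the
idempotent `E/d`, the number `tr(S²)/d` is an integer, nonzero and of absolute value at most `1`;
hence `S² = ± 1` (`involution_field`), and the sign is `+` since `S²(1) = 1`.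

**Characteristic `p`.** The algebra `H` is a product of matrix algebras over `k`, so it lifts to the
same product `A` over the Witt vectors `W` of `k`, which has a separability idempotent. The
comultiplication is lifted to `A` modulo successive powers of `p` (`lift_step`). The defect of
multiplicativity is a Hochschild 2-cocycle and is removed with the separability idempotent
(`mul_step`). The defect of coassociativity is then an inner derivation, say by `ψ`
(`defect_inner`); the pentagon identity makes `ψ` a 3-cocycle of the cobar complex of `H` up to
centralisers (`defect_cocycle`), and integration over the first tensor factor contracts that complex
(`cobar_homotopy`), so that the defect can be removed by an infinitesimal conjugation
(`coassoc_step`). In the limit one gets a comultiplication on `A` (`exists_comul`). Counit and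
antipode lift because maps congruent to invertible ones modulo `p` are invertible (`exists_counit`,
`exists_antipode`), and the counit is multiplicative because an idempotent congruent to `1` modulo
`p` equals `1` (`counit_mul_of_lift`). The trace of `S²` on `A` reduces to that on `H`, hence is
nonzero; so `S² = 1` on `A` by the first part, and therefore on `H` (`descent`).
-/

namespace Kap

open TensorProduct Coalgebra HopfAlgebra

/-! ### The square of the antipode, and partial traces -/

section Antipode
variable {R H : Type*} [CommRing R] [Ring H] [HopfAlgebra R H]

/-- The antipode reverses comultiplication: both sides are convolution inverses of `Δ`. -/
theorem comul_antipode (a : H) :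
    comul (R := R) (antipode R a) =
      TensorProduct.map (antipode R) (antipode R) (TensorProduct.comm R H H (comul a)) := by
  have key : WithConv.toConv (comul ∘ₗ antipode R : H →ₗ[R] H ⊗[R] H) =
      WithConv.toConv (TensorProduct.map (antipode R) (antipode R) ∘ₗ
        (TensorProduct.comm R H H).toLinearMap ∘ₗ comul) := by
    symm
    refine left_inv_eq_right_inv (a := WithConv.toConv (comul : H →ₗ[R] H ⊗[R] H)) ?_
      LinearMap.comul_right_inv
    -- `S(c₂)c₃ ⊗ S(c₁)c₄ = ε(c)`
    let K : H ⊗[R] H →ₗ[R] H := LinearMap.mul' R H ∘ₗ (antipode R).rTensor H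
    have hK : ∀ c : H, K (comul c) = algebraMap R H (counit c) := fun c => by simp [K]
    let G : H ⊗[R] (H ⊗[R] H) →ₗ[R] H ⊗[R] H :=
      LinearMap.mul' R (H ⊗[R] H) ∘ₗ (TensorProduct.map ((TensorProduct.mk R H H 1) ∘ₗ antipode R)
        (TensorProduct.map K LinearMap.id ∘ₗ (TensorProduct.assoc R H H H).symm.toLinearMap ∘ₗ
          LinearMap.lTensor H comul))
    have h1 : ∀ t : H ⊗[R] H, LinearMap.mul' R (H ⊗[R] H) (TensorProduct.map
        (TensorProduct.map (antipode R) (antipode R) ∘ₗ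
        (TensorProduct.comm R H H).toLinearMap ∘ₗ comul) comul t) =
        G (TensorProduct.assoc R H H H (LinearMap.rTensor H comul t)) := by
      intro t
      induction t with
      | zero => simp
      | add x y hx hy => simp only [map_add, hx, hy]
      | tmul x y =>
        simp only [TensorProduct.map_tmul, LinearMap.rTensor_tmul, LinearMap.comp_apply]
        induction (comul (R := R) x) with
        | zero => simp
        | add x y hx hy => simp only [map_add, hx, hy, TensorProduct.add_tmul]
        | tmul u v =>
          simp only [G, LinearMap.comp_apply, TensorProduct.assoc_tmul, TensorProduct.map_tmul,
            LinearMap.lTensor_tmul, LinearEquiv.coe_coe, TensorProduct.comm_tmul]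
          induction (comul (R := R) y) with
          | zero => simp
          | add x y hx hy => simp only [map_add, hx, hy, TensorProduct.tmul_add]
          | tmul p q => simp [K]
    have h2 : ∀ c : H, (TensorProduct.map K LinearMap.id ∘ₗ
        (TensorProduct.assoc R H H H).symm.toLinearMap ∘ₗ LinearMap.lTensor H comul) (comul c) =
        1 ⊗ₜ c := by
      intro c
      simp only [LinearMap.comp_apply, LinearEquiv.coe_coe, coassoc_symm_apply]
      rw [← (ℛ R c).eq]
      simp only [map_sum, LinearMap.rTensor_tmul, TensorProduct.map_tmul, hK, LinearMap.id_apply,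
        Algebra.algebraMap_eq_smul_one, TensorProduct.smul_tmul]
      rw [← TensorProduct.tmul_sum, sum_counit_smul]
    have h3 : ∀ t : H ⊗[R] H, G (LinearMap.lTensor H comul t) =
        1 ⊗ₜ K t := by
      intro t
      induction t with
      | zero => simp
      | add x y hx hy => simp only [map_add, hx, hy, TensorProduct.tmul_add]
      | tmul x y =>
        simp only [G, LinearMap.comp_apply, TensorProduct.map_tmul, LinearMap.lTensor_tmul]
        have := h2 y
        simp only [LinearMap.comp_apply] at this
        rw [this]
        simp [K]
    ext c
    rw [LinearMap.convMul_apply, WithConv.ofConv_toConv, WithConv.ofConv_toConv, h1, coassoc_apply,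
      h3, hK]
    simp [Algebra.algebraMap_eq_smul_one, Algebra.TensorProduct.one_def]
  exact congr(($key).ofConv a)

variable (R H) in
/-- The square of the antipode. -/
noncomputable def S2 : H →ₗ[R] H := antipode R ∘ₗ antipode R

theorem S2_mul (a b : H) : S2 R H (a * b) = S2 R H a * S2 R H b := by
  simp [S2, antipode_mul_antidistrib]

theorem S2_one : S2 R H 1 = 1 := by simp [S2]

theorem comul_S2 (a : H) :
    comul (R := R) (S2 R H a) = TensorProduct.map (S2 R H) (S2 R H) (comul a) := by
  simp only [S2, LinearMap.comp_apply, comul_antipode]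
  induction (comul (R := R) a) with
  | zero => simp
  | add x y hx hy => simp only [map_add, hx, hy]
  | tmul p q => simp

theorem counit_S2 (a : H) : counit (R := R) (S2 R H a) = counit a := by simp [S2]

end Antipode

section PartialTrace
variable {R M N N' : Type*} [CommRing R] [AddCommGroup M] [Module R M] [AddCommGroup N] [Module R N]
  [AddCommGroup N'] [Module R N']
  {ι : Type*} [Fintype ι] (b : Module.Basis ι R M)

/-- Contraction of the first tensor leg against a functional. -/
noncomputable def ev (p : M →ₗ[R] R) : M ⊗[R] N →ₗ[R] N :=
  (TensorProduct.lid R N).toLinearMap ∘ₗ p.rTensor N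

@[simp] theorem ev_tmul (p : M →ₗ[R] R) (m : M) (n : N) : ev p (m ⊗ₜ[R] n) = p m • n := by
  simp [ev]

/-- Expansion of a tensor along a basis of its first factor. -/
theorem sum_tmul_ev (t : M ⊗[R] N) : ∑ i, b i ⊗ₜ[R] ev (b.coord i) t = t := by
  induction t with
  | zero => simp
  | add x y hx hy => simp only [map_add, TensorProduct.tmul_add, Finset.sum_add_distrib, hx, hy]
  | tmul m n =>
    simp only [ev_tmul, ← TensorProduct.smul_tmul, ← TensorProduct.sum_tmul]
    congr 1
    exact b.sum_repr m

/-- The partial trace, over the module `M`, of a map `M → M ⊗ N`. -/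
noncomputable def ptr (f : M →ₗ[R] M ⊗[R] N) : N := ∑ i, ev (b.coord i) (f (b i))

/-- Cyclicity of the partial trace: exchanging `P` and `Q` exchanges the two `N`-legs. -/
theorem ptr_cyc (P : M →ₗ[R] M ⊗[R] N) (Q : M →ₗ[R] M ⊗[R] N) (μ : N ⊗[R] N →ₗ[R] N') :
    ptr b (μ.lTensor M ∘ₗ (TensorProduct.assoc R M N N).toLinearMap ∘ₗ P.rTensor N ∘ₗ Q) =
    ptr b ((μ ∘ₗ (TensorProduct.comm R N N).toLinearMap).lTensor M ∘ₗ
      (TensorProduct.assoc R M N N).toLinearMap ∘ₗ Q.rTensor N ∘ₗ P) := by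
  have key : ∀ (P Q : M →ₗ[R] M ⊗[R] N) (μ : N ⊗[R] N →ₗ[R] N'),
      ptr b (μ.lTensor M ∘ₗ (TensorProduct.assoc R M N N).toLinearMap ∘ₗ P.rTensor N ∘ₗ Q) =
      ∑ i, ∑ j, μ (ev (b.coord i) (P (b j)) ⊗ₜ ev (b.coord j) (Q (b i))) := by
    intro P Q μ
    unfold ptr
    refine Finset.sum_congr rfl fun i _ => ?_
    conv_lhs => rw [LinearMap.comp_apply, LinearMap.comp_apply, LinearMap.comp_apply,
      ← sum_tmul_ev b (Q (b i))]
    simp only [map_sum, LinearMap.rTensor_tmul]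
    refine Finset.sum_congr rfl fun j _ => ?_
    generalize ev (b.coord j) (Q (b i)) = n
    induction (P (b j)) with
    | zero => simp
    | add x y hx hy => simp only [map_add, TensorProduct.add_tmul, hx, hy]
    | tmul m n' =>
      simp only [TensorProduct.assoc_tmul, LinearMap.lTensor_tmul, ev_tmul, LinearEquiv.coe_coe,
        LinearMap.comp_apply]
      rw [← map_smul, TensorProduct.smul_tmul']
  rw [key, key, Finset.sum_comm]
  simp

theorem trace_eq_sum_coord (f : M →ₗ[R] M) :
    LinearMap.trace R M f = ∑ i, b.coord i (f (b i)) := by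
  classical
  rw [LinearMap.trace_eq_matrix_trace R b, Matrix.trace]
  simp [LinearMap.toMatrix_apply]

end PartialTrace

/-! ### The trace functionals are integrals -/

section PtrMore
variable {R M N N' : Type*} [CommRing R] [AddCommGroup M] [Module R M] [AddCommGroup N] [Module R N]
  [AddCommGroup N'] [Module R N']
  {ι : Type*} [Fintype ι] (b : Module.Basis ι R M)

theorem ptr_tmul (f : M →ₗ[R] M) (n : N) :
    ptr b ((TensorProduct.mk R M N).flip n ∘ₗ f) = LinearMap.trace R M f • n := by
  simp [ptr, trace_eq_sum_coord b, Finset.sum_smul]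

end PtrMore

section Integral
variable {R H : Type*} [CommRing R] [Ring H] [HopfAlgebra R H]

theorem S2_mul_antipode (t : H ⊗[R] H) :
    (LinearMap.mul' R H ∘ₗ TensorProduct.map (S2 R H) (antipode R) ∘ₗ
      (TensorProduct.comm R H H).toLinearMap) t =
    antipode R (LinearMap.mul' R H ((antipode R).lTensor H t)) := by
  induction t with
  | zero => simp
  | add x y hx hy => simp only [map_add, hx, hy]
  | tmul p q => simp [S2, antipode_mul_antidistrib]

/-- `S²(a₂) S(a₁) = ε(a)`. -/
theorem S2_mul_antipode_comul (a : H) :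
    (LinearMap.mul' R H ∘ₗ TensorProduct.map (S2 R H) (antipode R) ∘ₗ
      (TensorProduct.comm R H H).toLinearMap) (comul a) = algebraMap R H (counit a) := by
  rw [S2_mul_antipode, mul_antipode_lTensor_comul_apply]
  simp [Algebra.algebraMap_eq_smul_one]

theorem antipode_mul_S2 (t : H ⊗[R] H) :
    (LinearMap.mul' R H ∘ₗ TensorProduct.map (antipode R) (S2 R H) ∘ₗ
      (TensorProduct.comm R H H).toLinearMap) t =
    antipode R (LinearMap.mul' R H ((antipode R).rTensor H t)) := by
  induction t with
  | zero => simp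
  | add x y hx hy => simp only [map_add, hx, hy]
  | tmul p q => simp [S2, antipode_mul_antidistrib]

/-- `S(a₂) S²(a₁) = ε(a)`. -/
theorem antipode_mul_S2_comul (a : H) :
    (LinearMap.mul' R H ∘ₗ TensorProduct.map (antipode R) (S2 R H) ∘ₗ
      (TensorProduct.comm R H H).toLinearMap) (comul a) = algebraMap R H (counit a) := by
  rw [antipode_mul_S2, mul_antipode_rTensor_comul_apply]
  simp [Algebra.algebraMap_eq_smul_one]

/-- If `K(u₁ ⊗ u₂) = ε(u) n`, then `K(x₁ ⊗ x₂) ⊗ g(x₃) = n ⊗ g(x)`. -/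
theorem collapse_left {N N' : Type*} [AddCommGroup N] [Module R N] [AddCommGroup N'] [Module R N']
    (K : H ⊗[R] H →ₗ[R] N) (n : N) (hK : ∀ u, K (comul u) = counit (R := R) u • n)
    (g : H →ₗ[R] N') (x : H) :
    TensorProduct.map K g (comul.rTensor H (comul (R := R) x)) = n ⊗ₜ g x := by
  conv_rhs => rw [← sum_counit_smul (ℛ R x)]
  conv_lhs => rw [← (ℛ R x).eq]
  simp only [map_sum, LinearMap.rTensor_tmul, TensorProduct.map_tmul, hK, TensorProduct.tmul_sum,
    map_smul, TensorProduct.tmul_smul, TensorProduct.smul_tmul']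

/-- If `K(u₁ ⊗ u₂) = ε(u) n`, then `g(x₁) ⊗ K(x₂ ⊗ x₃) = g(x) ⊗ n`. -/
theorem collapse_right {N N' : Type*} [AddCommGroup N] [Module R N] [AddCommGroup N'] [Module R N']
    (K : H ⊗[R] H →ₗ[R] N) (n : N) (hK : ∀ u, K (comul u) = counit (R := R) u • n)
    (g : H →ₗ[R] N') (x : H) :
    TensorProduct.map g K (comul.lTensor H (comul (R := R) x)) = g x ⊗ₜ n := by
  have h := (ℛ R x).eq
  have h2 : ∑ i ∈ (ℛ R x).index, counit (R := R) ((ℛ R x).right i) • (ℛ R x).left i = x := by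
    have h3 := lTensor_counit_comul (R := R) x
    rw [← h] at h3
    simpa only [map_sum, LinearMap.lTensor_tmul, TensorProduct.rid_tmul, one_smul] using
      congrArg (TensorProduct.rid R H) h3
  conv_rhs => rw [← h2]
  conv_lhs => rw [← h]
  simp only [map_sum, LinearMap.lTensor_tmul, TensorProduct.map_tmul, hK, TensorProduct.sum_tmul,
    map_smul, TensorProduct.tmul_smul, TensorProduct.smul_tmul']

variable (R) in
/-- The functional `a ↦ tr (x ↦ a S²(x))`. -/
noncomputable def phiL : H →ₗ[R] R :=
  LinearMap.trace R H ∘ₗ (LinearMap.lcomp R H (S2 R H)) ∘ₗ LinearMap.mul R H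

variable (R) in
/-- The functional `a ↦ tr (x ↦ S²(x) a)`. -/
noncomputable def phiR : H →ₗ[R] R :=
  LinearMap.trace R H ∘ₗ (LinearMap.lcomp R H (S2 R H)) ∘ₗ (LinearMap.mul R H).flip

theorem phiL_apply (a : H) : phiL R a = LinearMap.trace R H (LinearMap.mulLeft R a ∘ₗ S2 R H) := rfl

theorem phiR_apply (a : H) : phiR R a = LinearMap.trace R H (LinearMap.mulRight R a ∘ₗ S2 R H) := rfl

variable [Module.Free R H] [Module.Finite R H]

/-- `phiL` is an integral: `a₁ phiL(a₂) = phiL(a) 1`. -/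
theorem phiL_integral (a : H) :
    TensorProduct.rid R H ((phiL R).lTensor H (comul a)) = phiL R a • 1 := by
  let b := Module.Free.chooseBasis R H
  let cm := (TensorProduct.comm R H H).toLinearMap
  let Q : H →ₗ[R] H ⊗[R] H := (antipode R).lTensor H ∘ₗ cm ∘ₗ comul
  let P : H →ₗ[R] H ⊗[R] H := cm ∘ₗ comul ∘ₗ LinearMap.mulLeft R a ∘ₗ S2 R H
  have key := ptr_cyc b P Q (LinearMap.mul' R H)
  let F (t : H ⊗[R] H) : H ⊗[R] (H ⊗[R] H) →ₗ[R] H ⊗[R] H :=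
    LinearMap.mulLeft R t ∘ₗ TensorProduct.map (S2 R H) (LinearMap.mul' R H ∘ₗ
      TensorProduct.map (S2 R H) (antipode R) ∘ₗ cm) ∘ₗ
      (TensorProduct.comm R (H ⊗[R] H) H).toLinearMap ∘ₗ
      (TensorProduct.assoc R H H H).symm.toLinearMap
  have h1 : ∀ x, (LinearMap.lTensor H (LinearMap.mul' R H) ∘ₗ
      (TensorProduct.assoc R H H H).toLinearMap ∘ₗ P.rTensor H ∘ₗ Q) x =
      cm (comul a) * (S2 R H x ⊗ₜ 1) := by
    intro x
    have e1 : ∀ t : H ⊗[R] H, (LinearMap.lTensor H (LinearMap.mul' R H) ∘ₗ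
        (TensorProduct.assoc R H H H).toLinearMap ∘ₗ P.rTensor H ∘ₗ
        (antipode R).lTensor H ∘ₗ cm) t = F (cm (comul a)) (comul.lTensor H t) := by
      intro t
      induction t with
      | zero => simp
      | add x y hx hy => simp only [map_add, hx, hy]
      | tmul x y =>
        simp only [LinearMap.comp_apply, LinearEquiv.coe_coe, TensorProduct.comm_tmul, cm,
          LinearMap.lTensor_tmul, LinearMap.rTensor_tmul, P, LinearMap.mulLeft_apply,
          Bialgebra.comul_mul, comul_S2]
        induction (comul (R := R) y) with
        | zero => simp
        | add x y hx hy => simp only [map_add, hx, hy, TensorProduct.tmul_add, mul_add,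
            TensorProduct.add_tmul]
        | tmul u v =>
          induction (comul (R := R) a) with
          | zero => simp [F]
          | add x y hx hy =>
            simp only [map_add, hx, hy, add_mul, TensorProduct.add_tmul, F, LinearMap.comp_apply,
              LinearMap.mulLeft_apply]
          | tmul a1 a2 => simp [F, cm, mul_assoc]
    have e2 := e1 (comul x)
    rw [← coassoc_apply] at e2
    have e3 : (LinearMap.lTensor H (LinearMap.mul' R H) ∘ₗ
      (TensorProduct.assoc R H H H).toLinearMap ∘ₗ P.rTensor H ∘ₗ Q) x = _ := e2
    rw [e3]
    simp only [F, LinearMap.comp_apply, LinearMap.mulLeft_apply, LinearEquiv.coe_coe,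
      LinearEquiv.symm_apply_apply]
    congr 1
    rw [TensorProduct.map_comm]
    rw [collapse_left _ 1 (fun u => by
      have := S2_mul_antipode_comul (R := R) u
      rw [Algebra.algebraMap_eq_smul_one] at this
      exact this)]
    simp
  have h2 : ∀ x, ((LinearMap.mul' R H ∘ₗ (TensorProduct.comm R H H).toLinearMap).lTensor H ∘ₗ
      (TensorProduct.assoc R H H H).toLinearMap ∘ₗ Q.rTensor H ∘ₗ P) x = (a * S2 R H x) ⊗ₜ 1 := by
    intro x
    have e1 : ∀ t : H ⊗[R] H, ((LinearMap.mul' R H ∘ₗ (TensorProduct.comm R H H).toLinearMap).lTensor H ∘ₗ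
      (TensorProduct.assoc R H H H).toLinearMap ∘ₗ Q.rTensor H ∘ₗ cm) t =
      TensorProduct.comm R H H (TensorProduct.map (LinearMap.mul' R H ∘ₗ (antipode R).lTensor H)
        LinearMap.id ((TensorProduct.assoc R H H H).symm (comul.lTensor H t))) := by
      intro t
      induction t with
      | zero => simp
      | add x y hx hy => simp only [map_add, hx, hy]
      | tmul x y =>
        simp only [LinearMap.comp_apply, LinearEquiv.coe_coe, TensorProduct.comm_tmul, cm,
          LinearMap.lTensor_tmul, LinearMap.rTensor_tmul, Q]
        induction (comul (R := R) y) with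
        | zero => simp
        | add x y hx hy => simp only [map_add, hx, hy, TensorProduct.tmul_add,
            TensorProduct.add_tmul]
        | tmul u v => simp
    have e2 := e1 (comul (a * S2 R H x))
    rw [← coassoc_apply, LinearEquiv.symm_apply_apply, collapse_left _ 1 (fun u => by
      simp [Algebra.algebraMap_eq_smul_one])] at e2
    exact e2
  have h2' : ((LinearMap.mul' R H ∘ₗ (TensorProduct.comm R H H).toLinearMap).lTensor H ∘ₗ
      (TensorProduct.assoc R H H H).toLinearMap ∘ₗ Q.rTensor H ∘ₗ P) =
      (TensorProduct.mk R H H).flip 1 ∘ₗ (LinearMap.mulLeft R a ∘ₗ S2 R H) := by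
    ext x; simpa using h2 x
  rw [h2', ptr_tmul] at key
  rw [phiL_apply, ← key]
  simp only [ptr, h1]
  generalize comul (R := R) a = t
  induction t with
  | zero => simp
  | add x y hx hy => simp only [map_add, hx, hy, add_mul, Finset.sum_add_distrib]
  | tmul u v =>
    simp [cm, phiL_apply, trace_eq_sum_coord b, Finset.sum_smul]

/-- `phiR` is an integral: `phiR(a₁) a₂ = phiR(a) 1`. -/
theorem phiR_integral (a : H) :
    ev (phiR R) (comul a) = phiR R a • (1 : H) := by
  let b := Module.Free.chooseBasis R H
  let cm := (TensorProduct.comm R H H).toLinearMap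
  let Q : H →ₗ[R] H ⊗[R] H := (antipode R).lTensor H ∘ₗ comul
  let P : H →ₗ[R] H ⊗[R] H := comul ∘ₗ LinearMap.mulRight R a ∘ₗ S2 R H
  have key := ptr_cyc b P Q (LinearMap.mul' R H ∘ₗ cm)
  have h1 : ∀ x, (LinearMap.lTensor H (LinearMap.mul' R H ∘ₗ cm) ∘ₗ
      (TensorProduct.assoc R H H H).toLinearMap ∘ₗ P.rTensor H ∘ₗ Q) x =
      (S2 R H x ⊗ₜ 1) * comul a := by
    intro x
    have e1 : ∀ t : H ⊗[R] H, (LinearMap.lTensor H (LinearMap.mul' R H ∘ₗ cm) ∘ₗ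
        (TensorProduct.assoc R H H H).toLinearMap ∘ₗ P.rTensor H ∘ₗ
        (antipode R).lTensor H) t = TensorProduct.map (S2 R H) (LinearMap.mul' R H ∘ₗ
      TensorProduct.map (antipode R) (S2 R H) ∘ₗ cm)
        (TensorProduct.assoc R H H H (comul.rTensor H t)) * comul a := by
      intro t
      induction t with
      | zero => simp
      | add x y hx hy => simp only [map_add, hx, hy, add_mul]
      | tmul x y =>
        simp only [LinearMap.comp_apply, LinearEquiv.coe_coe, cm,
          LinearMap.lTensor_tmul, LinearMap.rTensor_tmul, P, LinearMap.mulRight_apply,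
          Bialgebra.comul_mul, comul_S2]
        induction (comul (R := R) x) with
        | zero => simp
        | add x y hx hy => simp only [map_add, hx, hy, add_mul,
            TensorProduct.add_tmul]
        | tmul u v =>
          induction (comul (R := R) a) with
          | zero => simp
          | add x y hx hy =>
            simp only [map_add, hx, hy, mul_add, TensorProduct.add_tmul]
          | tmul a1 a2 => simp [mul_assoc]
    have e2 := e1 (comul x)
    rw [coassoc_apply, collapse_right _ 1 (fun u => by
      have := antipode_mul_S2_comul (R := R) u
      rw [Algebra.algebraMap_eq_smul_one] at this
      exact this)] at e2
    exact e2
  have h2 : ∀ x, ((LinearMap.mul' R H ∘ₗ cm ∘ₗ cm).lTensor H ∘ₗ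
      (TensorProduct.assoc R H H H).toLinearMap ∘ₗ Q.rTensor H ∘ₗ P) x = (S2 R H x * a) ⊗ₜ 1 := by
    intro x
    have e1 : ∀ t : H ⊗[R] H, ((LinearMap.mul' R H ∘ₗ cm ∘ₗ cm).lTensor H ∘ₗ
      (TensorProduct.assoc R H H H).toLinearMap ∘ₗ Q.rTensor H) t =
      TensorProduct.map LinearMap.id (LinearMap.mul' R H ∘ₗ (antipode R).rTensor H)
         ((TensorProduct.assoc R H H H) (comul.rTensor H t)) := by
      intro t
      induction t with
      | zero => simp
      | add x y hx hy => simp only [map_add, hx, hy]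
      | tmul x y =>
        simp only [LinearMap.comp_apply, LinearEquiv.coe_coe, cm,
          LinearMap.rTensor_tmul, Q]
        induction (comul (R := R) x) with
        | zero => simp
        | add x y hx hy => simp only [map_add, hx, hy, TensorProduct.add_tmul]
        | tmul u v => simp
    have e2 := e1 (comul (S2 R H x * a))
    rw [coassoc_apply, collapse_right _ 1 (fun u => by
      simp [Algebra.algebraMap_eq_smul_one])] at e2
    exact e2
  have h2' : ((LinearMap.mul' R H ∘ₗ cm ∘ₗ cm).lTensor H ∘ₗ
      (TensorProduct.assoc R H H H).toLinearMap ∘ₗ Q.rTensor H ∘ₗ P) =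
      (TensorProduct.mk R H H).flip 1 ∘ₗ (LinearMap.mulRight R a ∘ₗ S2 R H) := by
    ext x; simpa using h2 x
  rw [LinearMap.comp_assoc, h2', ptr_tmul] at key
  rw [phiR_apply, ← key]
  simp only [ptr, h1]
  generalize comul (R := R) a = t
  induction t with
  | zero => simp
  | add x y hx hy => simp only [map_add, hx, hy, mul_add, Finset.sum_add_distrib]
  | tmul u v =>
    simp [phiR_apply, trace_eq_sum_coord b, Finset.sum_smul]

end Integral

/-! ### Consequences of a normalised integral: `S⁴ = 1` -/

section Consequences
variable {R H : Type*} [CommRing R] [Ring H] [HopfAlgebra R H]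

/-- `(S(a₁) ⊗ 1) Δ(a₂) = 1 ⊗ a`. -/
theorem antipode_tmul_comul (a : H) (f : H →ₗ[R] H ⊗[R] H)
    (hf : ∀ x, f x = comul x) :
    LinearMap.mul' R (H ⊗[R] H) (TensorProduct.map ((TensorProduct.mk R H H).flip 1 ∘ₗ antipode R) f
      (comul a)) = 1 ⊗ₜ a := by
  obtain rfl : f = comul := LinearMap.ext hf
  have e1 : ∀ t : H ⊗[R] H, LinearMap.mul' R (H ⊗[R] H) (TensorProduct.map
      ((TensorProduct.mk R H H).flip 1 ∘ₗ antipode R) comul t) =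
      TensorProduct.map (LinearMap.mul' R H ∘ₗ (antipode R).rTensor H) LinearMap.id
        ((TensorProduct.assoc R H H H).symm (comul.lTensor H t)) := by
    intro t
    induction t with
    | zero => simp
    | add x y hx hy => simp only [map_add, hx, hy]
    | tmul x y =>
      simp only [TensorProduct.map_tmul, LinearMap.lTensor_tmul]
      induction (comul (R := R) y) with
      | zero => simp
      | add x y hx hy => simp only [map_add, hx, hy, TensorProduct.tmul_add]
      | tmul u v => simp
  rw [e1, coassoc_symm_apply, collapse_left _ 1 (fun u => by
      simp [Algebra.algebraMap_eq_smul_one])]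
  rfl

variable [Module.Free R H] [Module.Finite R H]

omit [Module.Free R H] [Module.Finite R H] in
theorem phiL_one : phiL R (1 : H) = LinearMap.trace R H (S2 R H) := by
  rw [phiL_apply]; congr 1; ext; simp

omit [Module.Free R H] [Module.Finite R H] in
theorem phiR_one : phiR R (1 : H) = LinearMap.trace R H (S2 R H) := by
  rw [phiR_apply]; congr 1; ext; simp

omit [Module.Free R H] [Module.Finite R H] in
theorem phiL_mul (a b : H) : phiL R (a * b) = phiL R (b * S2 R H a) := by
  rw [phiL_apply, phiL_apply]
  have := LinearMap.trace_mul_comm R (LinearMap.mulLeft R a) (LinearMap.mulLeft R b ∘ₗ S2 R H)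
  convert this using 2
  · ext x; simp
  · ext x; simp [S2_mul]

omit [Module.Free R H] [Module.Finite R H] in
theorem phiR_mul (a b : H) : phiR R (a * b) = phiR R (S2 R H b * a) := by
  rw [phiR_apply, phiR_apply]
  have := LinearMap.trace_mul_comm R (LinearMap.mulRight R b) (LinearMap.mulRight R a ∘ₗ S2 R H)
  convert this using 2
  · ext x; simp [mul_assoc]
  · ext x; simp [mul_assoc, S2_mul]

/-- A left and a right integral with the same nonzero value at `1` coincide: evaluate
`phiR(a₁) phiL(a₂)` in two ways. -/
theorem phiR_eq_phiL [IsDomain R] (ht : LinearMap.trace R H (S2 R H) ≠ 0) :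
    phiR R (H := H) = phiL R := by
  ext a
  have h1 := congrArg (phiR R) (phiL_integral (R := R) a)
  have h2 := congrArg (phiL R) (phiR_integral (R := R) a)
  have h3 : phiR R (TensorProduct.rid R H ((phiL R).lTensor H (comul a))) =
      phiL R (ev (phiR R) (comul a)) := by
    induction (comul (R := R) a) with
    | zero => simp
    | add x y hx hy => simp only [map_add, hx, hy]
    | tmul u v => simp [mul_comm]
  rw [h1, h2] at h3
  simp only [map_smul, phiL_one, phiR_one, smul_eq_mul] at h3
  exact (mul_right_cancel₀ ht h3).symm

variable {Λ : H} (hΛ : ∀ a : H, a * Λ = counit (R := R) a • Λ) (hΛ1 : counit (R := R) Λ = 1)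

/-- The trace of a rank one map. -/
theorem trace_smul_const {M : Type*} [AddCommGroup M] [Module R M] [Module.Free R M]
    [Module.Finite R M] (f : M →ₗ[R] R) (m : M) :
    LinearMap.trace R M (f.smulRight m) = f m := by
  have := trace_eq_sum_coord (Module.Free.chooseBasis R M) (f.smulRight m)
  have h2 := congrArg f ((Module.Free.chooseBasis R M).sum_repr m)
  rw [map_sum] at h2
  rw [this, ← h2]
  simp [mul_comm]

include hΛ hΛ1

theorem phiR_integral_elt : phiR R Λ = 1 := by
  rw [phiR_apply, ← hΛ1, ← trace_smul_const (counit (R := R)) Λ]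
  congr 1
  ext x
  simp [hΛ, counit_S2]

theorem trace_mulRight_elt : LinearMap.trace R H (LinearMap.mulRight R Λ) = 1 := by
  rw [← hΛ1, ← trace_smul_const (counit (R := R)) Λ]
  congr 1
  ext x
  simp [hΛ]

omit hΛ1 [Module.Free R H] [Module.Finite R H] in
/-- `S(a)Λ₁ ⊗ Λ₂ = Λ₁ ⊗ aΛ₂`. -/
theorem antipode_mul_elt (a : H) :
    (antipode R a ⊗ₜ 1) * comul Λ = ((1 : H) ⊗ₜ[R] a) * comul Λ := by
  conv_rhs => rw [← antipode_tmul_comul a comul (fun _ => rfl)]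
  have e1 : ∀ t : H ⊗[R] H, LinearMap.mul' R (H ⊗[R] H) (TensorProduct.map
      ((TensorProduct.mk R H H).flip 1 ∘ₗ antipode R) comul t) * comul Λ =
      (antipode R (TensorProduct.rid R H (counit.lTensor H t)) ⊗ₜ 1) * comul Λ := by
    intro t
    induction t with
    | zero => simp
    | add x y hx hy => simp only [map_add, hx, hy, add_mul, TensorProduct.add_tmul]
    | tmul x y =>
      simp only [TensorProduct.map_tmul, LinearMap.comp_apply, LinearMap.mul'_apply, mul_assoc,
        ← Bialgebra.comul_mul, hΛ, map_smul, LinearMap.lTensor_tmul, TensorProduct.rid_tmul,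
        LinearMap.flip_apply, TensorProduct.mk_apply, mul_smul_comm]
      rw [← smul_mul_assoc, TensorProduct.smul_tmul']
  rw [e1]
  simp

/-- `∫(S(a)Λ₁) Λ₂ = a`: the legs of `Λ` give dual bases for the pairing defined by `∫ = phiR`. -/
theorem dual_basis [IsDomain R] (a : H) :
    ev (phiR R) ((antipode R a ⊗ₜ 1) * comul (R := R) Λ) = a := by
  rw [antipode_mul_elt hΛ]
  have e1 : ∀ t : H ⊗[R] H, ev (phiR R) (((1 : H) ⊗ₜ[R] a) * t) = a * ev (phiR R) t := by
    intro t
    induction t with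
    | zero => simp
    | add x y hx hy => simp only [map_add, hx, hy, mul_add]
    | tmul x y => simp
  rw [e1, phiR_integral, phiR_integral_elt hΛ hΛ1]
  simp

theorem antipode_eq_zero [IsDomain R] (a : H) (h : antipode R a = 0) : a = 0 := by
  rw [← dual_basis hΛ hΛ1 a, h]; simp

theorem antipode_injective [IsDomain R] : Function.Injective (antipode R (A := H)) := by
  rw [injective_iff_map_eq_zero]
  exact antipode_eq_zero hΛ hΛ1

/-- The integral `phiR` is non-degenerate: a twisted trace whose left radical vanishes. -/
theorem phi_nondeg [IsDomain R] (ht : LinearMap.trace R H (S2 R H) ≠ 0) (a : H)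
    (h : ∀ b, phiR R (a * b) = 0) : a = 0 := by
  apply antipode_eq_zero hΛ hΛ1
  have h1 := congrArg (fun t => TensorProduct.rid R H ((phiL R).lTensor H t))
    (antipode_mul_elt hΛ a)
  have e1 : ∀ t : H ⊗[R] H, TensorProduct.rid R H ((phiL R).lTensor H ((antipode R a ⊗ₜ 1) * t)) =
      antipode R a * TensorProduct.rid R H ((phiL R).lTensor H t) := by
    intro t
    induction t with
    | zero => simp
    | add x y hx hy => simp only [map_add, hx, hy, mul_add]
    | tmul x y => simp
  have e2 : ∀ t : H ⊗[R] H, TensorProduct.rid R H ((phiL R).lTensor H ((1 ⊗ₜ a) * t)) = 0 := by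
    intro t
    induction t with
    | zero => simp
    | add x y hx hy => simp only [map_add, hx, hy, mul_add, add_zero]
    | tmul x y => simp [← phiR_eq_phiL ht, h]
  simp only [e1, e2, phiL_integral] at h1
  rw [← phiR_eq_phiL ht, phiR_integral_elt hΛ hΛ1] at h1
  simpa using h1

/-- The fourth power of the antipode is trivial. -/
theorem S2_S2 [IsDomain R] (ht : LinearMap.trace R H (S2 R H) ≠ 0) (b : H) :
    S2 R H (S2 R H b) = b := by
  have h0 : ∀ c : H, (∀ a, phiR R (a * c) = 0) → c = 0 := by
    intro c hc
    apply antipode_eq_zero hΛ hΛ1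
    apply antipode_eq_zero hΛ hΛ1
    apply phi_nondeg hΛ hΛ1 ht
    intro b
    rw [← hc b, phiR_mul b c]; rfl
  rw [← sub_eq_zero]
  apply h0
  intro a
  rw [mul_sub, map_sub, sub_eq_zero, phiR_mul a b, phiR_eq_phiL ht, phiL_mul (S2 R H b) a]

/-- `a₂ S³(a₁) = ε(a)`. -/
theorem mul_S3 [IsDomain R] (ht : LinearMap.trace R H (S2 R H) ≠ 0) (a : H) :
    (LinearMap.mul' R H ∘ₗ (antipode R ∘ₗ S2 R H).lTensor H ∘ₗ
      (TensorProduct.comm R H H).toLinearMap) (comul a) = counit (R := R) a • 1 := by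
  apply antipode_injective (R := R) hΛ hΛ1
  have e1 : ∀ t : H ⊗[R] H, antipode R ((LinearMap.mul' R H ∘ₗ (antipode R ∘ₗ S2 R H).lTensor H ∘ₗ
      (TensorProduct.comm R H H).toLinearMap) t) =
      LinearMap.mul' R H ((antipode R).lTensor H t) := by
    intro t
    induction t with
    | zero => simp
    | add x y hx hy => simp only [map_add, hx, hy]
    | tmul x y =>
      have := S2_S2 hΛ hΛ1 ht x
      simp only [S2, LinearMap.comp_apply] at this
      simp [S2, antipode_mul_antidistrib, this]
  rw [e1]
  simp [Algebra.algebraMap_eq_smul_one]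

/-- `tr (a ↦ S²(a₁) p(a₂)) = tr(S²) p(Λ)`. -/
theorem trace_S2_conv [IsDomain R] (ht : LinearMap.trace R H (S2 R H) ≠ 0) (p : H →ₗ[R] R) :
    LinearMap.trace R H ((TensorProduct.rid R H).toLinearMap ∘ₗ TensorProduct.map (S2 R H) p ∘ₗ
      comul) = LinearMap.trace R H (S2 R H) * p Λ := by
  set T := (TensorProduct.rid R H).toLinearMap ∘ₗ TensorProduct.map (S2 R H) p ∘ₗ comul with hT
  -- expansion of the trace along the dual bases given by `Λ`
  have h1 : ∀ t : H ⊗[R] H, LinearMap.trace R H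
      (T ∘ₗ ev (phiR R) ∘ₗ LinearMap.mulRight R t ∘ₗ (TensorProduct.mk R H H).flip 1 ∘ₗ
        antipode R) = phiR R (LinearMap.mul' R H (TensorProduct.map (antipode R ∘ₗ T) LinearMap.id
          (TensorProduct.comm R H H t))) := by
    intro t
    induction t with
    | zero => simp [LinearMap.mulRight_zero_eq_zero]
    | add x y hx hy =>
      simp only [map_add, ← hx, ← hy]
      rw [← map_add]; congr 1; ext; simp [mul_add]
    | tmul x y =>
      have := trace_smul_const (phiR R ∘ₗ LinearMap.mulRight R x ∘ₗ antipode R) (T y)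
      simp only [LinearMap.comp_apply, LinearMap.mulRight_apply] at this
      simp only [TensorProduct.comm_tmul, TensorProduct.map_tmul, LinearMap.comp_apply,
        LinearMap.mul'_apply, LinearMap.id_apply]
      rw [← this]
      congr 1; ext; simp
  have h2 : T ∘ₗ ev (phiR R) ∘ₗ LinearMap.mulRight R (comul Λ) ∘ₗ
      (TensorProduct.mk R H H).flip 1 ∘ₗ antipode R = T := by
    ext a
    have := dual_basis (R := R) hΛ hΛ1 a
    simp only [LinearMap.comp_apply, LinearMap.mulRight_apply, LinearMap.flip_apply,
      TensorProduct.mk_apply, this]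
  rw [← h2, h1, hT]
  have h3 : ∀ t : H ⊗[R] H, phiR R (LinearMap.mul' R H (TensorProduct.map (antipode R ∘ₗ
      (TensorProduct.rid R H).toLinearMap ∘ₗ TensorProduct.map (S2 R H) p ∘ₗ comul) LinearMap.id
          (TensorProduct.comm R H H t))) =
      phiR R (TensorProduct.rid R H (TensorProduct.map (LinearMap.mul' R H ∘ₗ
        (antipode R).lTensor H) p ((TensorProduct.assoc R H H H).symm (comul.lTensor H t)))) := by
    intro t
    induction t with
    | zero => simp
    | add x y hx hy => simp only [map_add, hx, hy]
    | tmul x y =>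
      simp only [TensorProduct.comm_tmul, TensorProduct.map_tmul, LinearMap.comp_apply,
        LinearMap.lTensor_tmul]
      induction (comul (R := R) y) with
      | zero => simp
      | add x y hx hy => simp only [map_add, hx, hy, TensorProduct.tmul_add, TensorProduct.add_tmul]
      | tmul u v =>
        have h4 := S2_S2 hΛ hΛ1 ht u
        have h5 : phiR R (antipode R (S2 R H u) * x) = phiR R (x * antipode R u) := by
          rw [phiR_eq_phiL ht, phiL_mul]
          congr 2
          exact congrArg (antipode R) h4
        simp [h5]
  rw [h3, coassoc_symm_apply, collapse_left _ 1 (fun u => by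
      simp [Algebra.algebraMap_eq_smul_one])]
  simp [phiR_one, mul_comm]

end Consequences

/-! ### The case of characteristic zero -/

section LinAlg

theorem trace_idem {K V : Type*} [Field K] [AddCommGroup V] [Module K V]
    [FiniteDimensional K V] (e : Module.End K V) (he : IsIdempotentElem e) :
    ∃ r : ℕ, LinearMap.trace K V e = r :=
  ⟨_, (LinearMap.IsIdempotentElem.isProj_range e he).trace⟩

/-- An involution `σ` commuting with `E`, where `E² = d E` for `d` the dimension and
`tr(σE) = tr σ ≠ 0`, is `± 1`: the traces `tr σ` and `tr(σE)/d` are integers, the first of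
absolute value at most `d`. -/
theorem involution_field {K V : Type*} [Field K] [CharZero K] [AddCommGroup V] [Module K V]
    [FiniteDimensional K V] (σ E : Module.End K V) (h1 : σ * σ = 1) (h2 : E * σ = σ * E)
    (h3 : E * E = (Module.finrank K V : K) • E) (h4 : LinearMap.trace K V (σ * E) =
      LinearMap.trace K V σ) (h5 : LinearMap.trace K V σ ≠ 0) : σ = 1 ∨ σ = -1 := by
  set d : ℕ := Module.finrank K V with hd
  have hd0 : (d : K) ≠ 0 := by
    intro h
    have : d = 0 := by exact_mod_cast h
    have := Module.finrank_zero_iff.mp (hd ▸ this)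
    exact h5 (by rw [Subsingleton.elim σ 0]; simp)
  let ep : Module.End K V := (2⁻¹ : K) • (1 + σ)
  let em : Module.End K V := (2⁻¹ : K) • (1 - σ)
  let P : Module.End K V := (d : K)⁻¹ • E
  have hP : P * P = P := by
    simp only [P, smul_mul_smul, h3, smul_smul]
    congr 1; field_simp
  have hep : ep * ep = ep := by
    have : (1 + σ) * (1 + σ) = (2 : K) • (1 + σ) := by
      rw [two_smul, mul_add, add_mul, add_mul, h1]; simp; abel
    simp only [ep, smul_mul_smul, this, smul_smul]; norm_num
  have hem : em * em = em := by
    have : (1 - σ) * (1 - σ) = (2 : K) • (1 - σ) := by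
      rw [two_smul, mul_sub, sub_mul, sub_mul, h1]; simp; abel
    simp only [em, smul_mul_smul, this, smul_smul]; norm_num
  have cP : P * σ = σ * P := by simp [P, h2]
  have cep : P * ep = ep * P := by simp [ep, mul_add, add_mul, cP]
  have cem : P * em = em * P := by simp [em, mul_sub, sub_mul, cP]
  obtain ⟨rp, hrp⟩ := trace_idem ep hep
  obtain ⟨rm, hrm⟩ := trace_idem em hem
  obtain ⟨mp, hmp⟩ := trace_idem (ep * P) (show _ = _ by
    rw [mul_assoc, ← mul_assoc P, cep, mul_assoc, hP, ← mul_assoc, hep])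
  obtain ⟨mm, hmm⟩ := trace_idem (em * P) (show _ = _ by
    rw [mul_assoc, ← mul_assoc P, cem, mul_assoc, hP, ← mul_assoc, hem])
  have e1 : ep + em = 1 := by
    simp only [ep, em, ← smul_add]
    rw [show (1 + σ + (1 - σ)) = (2 : K) • (1 : Module.End K V) by rw [two_smul]; abel, smul_smul]
    norm_num
  have e2 : ep - em = σ := by
    simp only [ep, em, ← smul_sub]
    rw [show (1 + σ - (1 - σ)) = (2 : K) • σ by rw [two_smul]; abel, smul_smul]
    norm_num
  have t1 : (rp : K) + rm = d := by
    rw [← hrp, ← hrm, ← map_add, e1, LinearMap.trace_one]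
  have t2 : (rp : K) - rm = LinearMap.trace K V σ := by
    rw [← hrp, ← hrm, ← map_sub, e2]
  have t3 : (d : K) * (mp - mm) = LinearMap.trace K V σ := by
    rw [← hmp, ← hmm, ← map_sub, ← sub_mul, e2, ← h4]
    simp only [P, mul_smul_comm, map_smul, smul_eq_mul]
    field_simp
  have i1 : (rp : ℤ) + rm = d := by exact_mod_cast t1
  have i2 : (d : ℤ) * (mp - mm) = rp - rm := by
    have : (d : K) * (mp - mm) = rp - rm := t3.trans t2.symm
    exact_mod_cast this
  have i3 : (rp : ℤ) - rm ≠ 0 := by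
    intro h
    apply h5; rw [← t2]; exact_mod_cast h
  have i4 : rp = 0 ∨ rm = 0 := by
    by_contra! hcon
    have hp : (0 : ℤ) < rp := by exact_mod_cast Nat.pos_of_ne_zero hcon.1
    have hm : (0 : ℤ) < rm := by exact_mod_cast Nat.pos_of_ne_zero hcon.2
    have hlt : |(rp : ℤ) - rm| < d := by rw [abs_lt]; omega
    exact i3 (Int.eq_zero_of_abs_lt_dvd ⟨_, i2.symm⟩ hlt)
  rcases i4 with h | h
  · right
    have : ep = 0 := LinearMap.IsIdempotentElem.eq_zero_of_trace_eq_zero hep (by rw [hrp, h]; simp)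
    rw [this, zero_add] at e1
    rw [← e2, this, e1]; simp
  · left
    have : em = 0 := LinearMap.IsIdempotentElem.eq_zero_of_trace_eq_zero hem (by rw [hrm, h]; simp)
    rw [this, add_zero] at e1
    rw [← e2, this, e1]; simp

/-- `involution_field` over a domain, by passage to the fraction field. -/
theorem involution_domain {R M : Type*} [CommRing R] [IsDomain R] [CharZero R] [AddCommGroup M]
    [Module R M] [Module.Free R M] [Module.Finite R M] (σ E : Module.End R M) (h1 : σ * σ = 1)
    (h2 : E * σ = σ * E) (h3 : E * E = (Module.finrank R M : R) • E)
    (h4 : LinearMap.trace R M (σ * E) = LinearMap.trace R M σ)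
    (h5 : LinearMap.trace R M σ ≠ 0) : σ = 1 ∨ σ = -1 := by
  let K := FractionRing R
  have inj : ∀ f g : Module.End R M, f.baseChange K = g.baseChange K → f = g := by
    intro f g hfg
    ext x
    apply Module.Flat.tensorProduct_mk_injective (R := R) (S := K) M
    have := congr($hfg (1 ⊗ₜ x))
    simpa using this
  have key := involution_field (σ.baseChange K) (E.baseChange K)
    (by rw [← LinearMap.baseChange_mul, h1, LinearMap.baseChange_one])
    (by rw [← LinearMap.baseChange_mul, h2, LinearMap.baseChange_mul])
    (by rw [← LinearMap.baseChange_mul, h3, LinearMap.baseChange_smul, Module.finrank_baseChange,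
          Nat.cast_smul_eq_nsmul, Nat.cast_smul_eq_nsmul])
    (by rw [← LinearMap.baseChange_mul, LinearMap.trace_baseChange, LinearMap.trace_baseChange, h4])
    (by rw [LinearMap.trace_baseChange]
        exact (map_ne_zero_iff _ (IsFractionRing.injective R K)).mpr h5)
  rcases key with h | h
  · left; apply inj; rw [h, LinearMap.baseChange_one]
  · right; apply inj; rw [h, LinearMap.baseChange_neg, LinearMap.baseChange_one]

end LinAlg

section Regular
variable {R H : Type*} [CommRing R] [Ring H] [HopfAlgebra R H]

variable (R H) in
/-- The character of the right regular representation. -/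
noncomputable def chi : H →ₗ[R] R := LinearMap.trace R H ∘ₗ (LinearMap.mul R H).flip

theorem chi_apply (a : H) : chi R H a = LinearMap.trace R H (LinearMap.mulRight R a) := rfl

variable [Module.Free R H] [Module.Finite R H]

/-- `χ(a₁)χ(a₂) = d χ(a)`, since `H ⊗ H` is as an `H`-module a sum of `d` copies of `H`. -/
theorem chi_conv (a : H) : (LinearMap.mul' R R ∘ₗ TensorProduct.map (chi R H) (chi R H)) (comul a) =
    (Module.finrank R H : R) * chi R H a := by
  let θ : Module.End R (H ⊗[R] H) :=
    LinearMap.mul' R (H ⊗[R] H) ∘ₗ TensorProduct.map ((TensorProduct.mk R H H).flip 1) comul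
  let θ' : Module.End R (H ⊗[R] H) :=
    (LinearMap.mul' R H ∘ₗ (antipode R).lTensor H).rTensor H ∘ₗ
      (TensorProduct.assoc R H H H).symm.toLinearMap ∘ₗ comul.lTensor H
  have h1 : θ * θ' = 1 := by
    refine TensorProduct.ext' fun x y => ?_
    have e1 : ∀ t : H ⊗[R] H, θ ((LinearMap.mul' R H ∘ₗ (antipode R).lTensor H).rTensor H
        ((TensorProduct.assoc R H H H).symm (x ⊗ₜ t))) = (x ⊗ₜ 1) *
        LinearMap.mul' R (H ⊗[R] H) (TensorProduct.map ((TensorProduct.mk R H H).flip 1 ∘ₗ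
          antipode R) comul t) := by
      intro t
      induction t with
      | zero => simp
      | add x y hx hy => simp only [map_add, hx, hy, mul_add, TensorProduct.tmul_add]
      | tmul u v => simp [θ, ← mul_assoc]
    have e2 := e1 (comul y)
    rw [antipode_tmul_comul _ _ (fun _ => rfl)] at e2
    simpa [θ'] using e2
  have h2 : θ' * θ = 1 := mul_eq_one_comm.mp h1
  have h3 : LinearMap.mulRight R (comul (R := R) a) * θ =
      θ * (LinearMap.mulRight R a).lTensor H := by
    refine TensorProduct.ext' fun x y => ?_
    simp [θ, mul_assoc]
  have h4 : LinearMap.trace R (H ⊗[R] H) (LinearMap.mulRight R (comul (R := R) a)) =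
      LinearMap.trace R (H ⊗[R] H) ((LinearMap.mulRight R a).lTensor H) := by
    have : LinearMap.mulRight R (comul (R := R) a) =
      θ * ((LinearMap.mulRight R a).lTensor H * θ') := by
      rw [← mul_assoc, ← h3, mul_assoc, h1, mul_one]
    rw [this, LinearMap.trace_mul_comm, mul_assoc, h2, mul_one]
  have h5 : ∀ t : H ⊗[R] H, (LinearMap.mul' R R ∘ₗ TensorProduct.map (chi R H) (chi R H)) t =
      LinearMap.trace R (H ⊗[R] H) (LinearMap.mulRight R t) := by
    intro t
    induction t with
    | zero => simp [LinearMap.mulRight_zero_eq_zero]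
    | add x y hx hy =>
      rw [map_add, hx, hy, ← map_add]
      congr 1; ext; simp [mul_add]
    | tmul u v =>
      have : LinearMap.mulRight R (u ⊗ₜ[R] v) =
          TensorProduct.map (LinearMap.mulRight R u) (LinearMap.mulRight R v) :=
        TensorProduct.ext' fun x y => by simp
      rw [this, LinearMap.trace_tensorProduct']
      simp [chi_apply]
  rw [h5, h4, LinearMap.lTensor, LinearMap.trace_tensorProduct', LinearMap.trace_id]
  rfl

/-- The case of characteristic zero, over a domain. The square of the antipode is an involution
commuting with `E : a ↦ a₁ χ(a₂)`, for `χ` the regular character; as `χ * χ = dχ` and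
`tr(S²E) = tr(S²)`, it is `± 1`, and it fixes `1`. -/
theorem S2_eq_id_of_charZero [IsDomain R] [CharZero R]
    (ht : LinearMap.trace R H (S2 R H) ≠ 0) {Λ : H}
    (hΛ : ∀ a : H, a * Λ = counit (R := R) a • Λ) (hΛ1 : counit (R := R) Λ = 1) :
    S2 R H = 1 := by
  let E : Module.End R H := (TensorProduct.rid R H).toLinearMap ∘ₗ (chi R H).lTensor H ∘ₗ comul
  have hSS : S2 R H * S2 R H = 1 := LinearMap.ext (S2_S2 hΛ hΛ1 ht)
  have hchi : chi R H ∘ₗ S2 R H = chi R H := by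
    ext a
    have : LinearMap.mulRight R (S2 R H a) = S2 R H * (LinearMap.mulRight R a * S2 R H) := by
      ext x
      simp [S2_mul, S2_S2 hΛ hΛ1 ht x]
    rw [LinearMap.comp_apply, chi_apply, this, LinearMap.trace_mul_comm, mul_assoc, hSS, mul_one,
      chi_apply]
  have hE : E * S2 R H = S2 R H * E := by
    ext a
    have e1 : ∀ t : H ⊗[R] H, TensorProduct.rid R H ((chi R H).lTensor H
        (TensorProduct.map (S2 R H) (S2 R H) t)) =
        S2 R H (TensorProduct.rid R H ((chi R H).lTensor H t)) := by
      intro t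
      induction t with
      | zero => simp
      | add x y hx hy => simp only [map_add, hx, hy]
      | tmul u v =>
        have := congr($hchi v)
        simp only [LinearMap.comp_apply] at this
        simp [this]
    simp only [E, Module.End.mul_apply, LinearMap.comp_apply, comul_S2, LinearEquiv.coe_coe, e1]
  have hEE : E * E = (Module.finrank R H : R) • E := by
    ext a
    have e1 : ∀ t : H ⊗[R] H, E (TensorProduct.rid R H ((chi R H).lTensor H t)) =
        TensorProduct.rid R H (LinearMap.lTensor H (LinearMap.mul' R R ∘ₗ
          TensorProduct.map (chi R H) (chi R H)) (TensorProduct.assoc R H H H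
            (comul.rTensor H t))) := by
      intro t
      induction t with
      | zero => simp
      | add x y hx hy => simp only [map_add, hx, hy]
      | tmul u v =>
        simp only [E, LinearMap.comp_apply, LinearMap.lTensor_tmul, LinearMap.rTensor_tmul,
          TensorProduct.rid_tmul, map_smul, LinearEquiv.coe_coe]
        induction (comul (R := R) u) with
        | zero => simp
        | add x y hx hy => simp only [map_add, hx, hy, TensorProduct.add_tmul, smul_add]
        | tmul u w => simp [smul_smul, mul_comm]
    have e2 := e1 (comul a)
    rw [coassoc_apply] at e2
    have e3 : (LinearMap.mul' R R ∘ₗ TensorProduct.map (chi R H) (chi R H)) ∘ₗ comul =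
        (Module.finrank R H : R) • chi R H := by
      ext a; simpa using chi_conv a
    rw [← LinearMap.comp_apply (g := comul.lTensor H) (f := LinearMap.lTensor H _), ← LinearMap.lTensor_comp, e3,
      LinearMap.lTensor_smul] at e2
    simpa [E] using e2
  have htr : LinearMap.trace R H (S2 R H * E) = LinearMap.trace R H (S2 R H) := by
    have := trace_S2_conv hΛ hΛ1 ht (chi R H)
    rw [chi_apply, trace_mulRight_elt hΛ hΛ1, mul_one] at this
    rw [← this]
    congr 1
    ext a
    simp only [E, Module.End.mul_apply, LinearMap.comp_apply, LinearEquiv.coe_coe]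
    induction (comul (R := R) a) with
    | zero => simp
    | add x y hx hy => simp only [map_add, hx, hy]
    | tmul u v => simp
  rcases involution_domain (S2 R H) E hSS hE hEE htr ht with h | h
  · exact h
  · exfalso
    have h1 := congr($h (1 : H))
    rw [S2_one] at h1
    have h2 := congrArg (counit (R := R)) h1
    simp only [Bialgebra.counit_one, LinearMap.neg_apply, Module.End.one_apply, map_neg] at h2
    have : (2 : R) = 0 := by linear_combination h2
    exact two_ne_zero this

end Regular

/-! ### Divisibility and reduction modulo `p` -/

section Dv
variable {W M N : Type*} [CommRing W] [AddCommGroup M] [Module W M] [AddCommGroup N] [Module W N]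

/-- `Dv q x`: the element `x` is divisible by the scalar `q`. -/
def Dv (q : W) (x : M) : Prop := ∃ m, x = q • m

theorem Dv.zero (q : W) : Dv q (0 : M) := ⟨0, by simp⟩

theorem Dv.smul_self (q : W) (x : M) : Dv q (q • x) := ⟨x, rfl⟩

theorem Dv.add {q : W} {x y : M} (hx : Dv q x) (hy : Dv q y) : Dv q (x + y) := by
  obtain ⟨a, rfl⟩ := hx
  obtain ⟨b, rfl⟩ := hy
  exact ⟨a + b, by rw [smul_add]⟩

theorem Dv.neg {q : W} {x : M} (hx : Dv q x) : Dv q (-x) := by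
  obtain ⟨a, rfl⟩ := hx
  exact ⟨-a, by rw [smul_neg]⟩

theorem Dv.sub {q : W} {x y : M} (hx : Dv q x) (hy : Dv q y) : Dv q (x - y) := by
  rw [sub_eq_add_neg]; exact hx.add hy.neg

theorem Dv.map {q : W} {x : M} (f : M →ₗ[W] N) (hx : Dv q x) : Dv q (f x) := by
  obtain ⟨a, rfl⟩ := hx
  exact ⟨f a, by rw [map_smul]⟩

theorem Dv.of_dvd {q r : W} {x : M} (h : q ∣ r) (hx : Dv r x) : Dv q x := by
  obtain ⟨a, rfl⟩ := hx
  obtain ⟨c, rfl⟩ := h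
  exact ⟨c • a, by rw [smul_smul]⟩

theorem Dv.smul_mul {q r : W} {x : M} (hx : Dv r x) : Dv (q * r) (q • x) := by
  obtain ⟨a, rfl⟩ := hx
  exact ⟨a, by rw [smul_smul]⟩

theorem Dv.mul_left {A : Type*} [Ring A] [Algebra W A] {q : W} {x : A} (y : A) (hx : Dv q x) :
    Dv q (y * x) := by
  obtain ⟨a, rfl⟩ := hx
  exact ⟨y * a, by rw [mul_smul_comm]⟩

theorem Dv.mul_right {A : Type*} [Ring A] [Algebra W A] {q : W} {x : A} (y : A) (hx : Dv q x) :
    Dv q (x * y) := by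
  obtain ⟨a, rfl⟩ := hx
  exact ⟨a * y, by rw [smul_mul_assoc]⟩

theorem Dv.mul_sub_mul {A : Type*} [Ring A] [Algebra W A] {q : W} {x y x' y' : A}
    (hx : Dv q (x - x')) (hy : Dv q (y - y')) : Dv q (x * y - x' * y') := by
  have := (hx.mul_right y).add (hy.mul_left x')
  convert this using 1
  rw [sub_mul, mul_sub]; abel

theorem Dv.tmul_induction {P : Type*} [AddCommGroup P] [Module W P] {q : W}
    (f : M ⊗[W] N →ₗ[W] P) (h : ∀ m n, Dv q (f (m ⊗ₜ n))) (t : M ⊗[W] N) : Dv q (f t) := by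
  induction t with
  | zero => simpa using Dv.zero q
  | add x y hx hy => rw [map_add]; exact hx.add hy
  | tmul m n => exact h m n

/-- A linear map with values divisible by `q` is `q` times a linear map, when the target
has no `q`-torsion. -/
theorem exists_smul_eq (q : W) (hq : ∀ n : N, q • n = 0 → n = 0) (f : M →ₗ[W] N)
    (h : ∀ m, Dv q (f m)) : ∃ g : M →ₗ[W] N, f = q • g := by
  choose g hg using h
  have inj : ∀ a b : N, q • a = q • b → a = b := fun a b hab =>
    sub_eq_zero.mp (hq _ (by rw [smul_sub, hab, sub_self]))
  refine ⟨{ toFun := g, map_add' := fun x y => ?_, map_smul' := fun c x => ?_ }, ?_⟩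
  · apply inj; rw [smul_add, ← hg, ← hg, ← hg, map_add]
  · apply inj; rw [RingHom.id_apply, smul_comm, ← hg, ← hg, map_smul]
  · ext x; exact hg x

theorem smul_cancel_of_free [IsDomain W] [Module.Free W N] {q : W} (hq : q ≠ 0) (n : N)
    (h : q • n = 0) : n = 0 := by
  exact (smul_eq_zero.mp h).resolve_left hq

end Dv

section Red
variable {W k : Type*} [CommRing W] [Field k] [Algebra W k]
  {A B H K : Type*} [Ring A] [Algebra W A] [Ring B] [Algebra W B]
  [Ring H] [Algebra k H] [Algebra W H] [IsScalarTower W k H]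
  [Ring K] [Algebra k K] [Algebra W K] [IsScalarTower W k K]

/-- `f` is a reduction modulo `p`: it is onto, with kernel the multiples of `p`. -/
structure IsRed (p : W) (f : A →ₐ[W] H) : Prop where
  surj : Function.Surjective f
  ker : ∀ a, f a = 0 ↔ Dv p a

omit [Field k] [Algebra W k] [Algebra k H] [IsScalarTower W k H] in
theorem IsRed.exact {p : W} {f : A →ₐ[W] H} (hf : IsRed p f) :
    Function.Exact (p • (LinearMap.id : A →ₗ[W] A)) f.toLinearMap := by
  intro a
  rw [AlgHom.toLinearMap_apply, hf.ker]
  exact ⟨fun ⟨m, hm⟩ => ⟨m, hm.symm⟩, fun ⟨m, hm⟩ => ⟨m, hm.symm⟩⟩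

variable (k) in
/-- The tensor product of two maps from `W`-algebras to `k`-algebras, as a map from the
tensor product over `W` to the tensor product over `k`. -/
noncomputable def tmap (f : A →ₐ[W] H) (g : B →ₐ[W] K) : A ⊗[W] B →ₐ[W] H ⊗[k] K :=
  (Algebra.TensorProduct.mapOfCompatibleSMul k W W H K).comp (Algebra.TensorProduct.map f g)

@[simp] theorem tmap_tmul (f : A →ₐ[W] H) (g : B →ₐ[W] K) (a : A) (b : B) :
    tmap k f g (a ⊗ₜ b) = f a ⊗ₜ g b := by
  simp [tmap]

theorem IsRed.tmap {p : W} (hk : Function.Surjective (algebraMap W k))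
    {f : A →ₐ[W] H} {g : B →ₐ[W] K} (hf : IsRed p f) (hg : IsRed p g) :
    IsRed p (tmap k f g) := by
  have hcs : CompatibleSMul W k H K := ⟨fun c x y => by
    obtain ⟨c, rfl⟩ := hk c
    simp only [algebraMap_smul, TensorProduct.smul_tmul]⟩
  have hbij : Function.Bijective (Algebra.TensorProduct.mapOfCompatibleSMul k W W H K) :=
    (Algebra.TensorProduct.equivOfCompatibleSMul k W W H K).bijective
  refine ⟨?_, fun t => ?_⟩
  · exact hbij.2.comp (TensorProduct.map_surjective hf.surj hg.surj)
  · have h0 : Kap.tmap k f g t = 0 ↔ TensorProduct.map f.toLinearMap g.toLinearMap t = 0 := by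
      rw [show Kap.tmap k f g t = Algebra.TensorProduct.mapOfCompatibleSMul k W W H K
        (TensorProduct.map f.toLinearMap g.toLinearMap t) from rfl]
      exact map_eq_zero_iff _ hbij.1
    have hker := TensorProduct.map_ker hf.exact hf.surj hg.exact hg.surj
    rw [h0, ← LinearMap.mem_ker, hker, LinearMap.lTensor_smul, LinearMap.rTensor_smul,
      LinearMap.lTensor_id, LinearMap.rTensor_id, sup_idem]
    exact ⟨fun ⟨m, hm⟩ => ⟨m, hm.symm⟩, fun ⟨m, hm⟩ => ⟨m, hm.symm⟩⟩

end Red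

/-! ### The cobar complex and its contraction -/

section Cobar
variable {R A : Type*} [CommRing R] [Ring A] [Algebra R A]

/-- `1 ⊗ Δ` on `A ⊗ A`. -/
noncomputable def dR (Δ : A →ₗ[R] A ⊗[R] A) : A ⊗[R] A →ₗ[R] A ⊗[R] (A ⊗[R] A) := Δ.lTensor A

/-- `Δ ⊗ 1` on `A ⊗ A`. -/
noncomputable def dL (Δ : A →ₗ[R] A ⊗[R] A) : A ⊗[R] A →ₗ[R] A ⊗[R] (A ⊗[R] A) :=
  (TensorProduct.assoc R A A A).toLinearMap ∘ₗ Δ.rTensor A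

/-- `Δ ⊗ 1 ⊗ 1` on `A ⊗ A ⊗ A`. -/
noncomputable def D1 (Δ : A →ₗ[R] A ⊗[R] A) :
    A ⊗[R] (A ⊗[R] A) →ₗ[R] A ⊗[R] (A ⊗[R] (A ⊗[R] A)) :=
  (TensorProduct.assoc R A A (A ⊗[R] A)).toLinearMap ∘ₗ Δ.rTensor (A ⊗[R] A)

/-- `1 ⊗ Δ ⊗ 1` on `A ⊗ A ⊗ A`. -/
noncomputable def D2 (Δ : A →ₗ[R] A ⊗[R] A) :
    A ⊗[R] (A ⊗[R] A) →ₗ[R] A ⊗[R] (A ⊗[R] (A ⊗[R] A)) := (dL Δ).lTensor A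

/-- `1 ⊗ 1 ⊗ Δ` on `A ⊗ A ⊗ A`. -/
noncomputable def D3 (Δ : A →ₗ[R] A ⊗[R] A) :
    A ⊗[R] (A ⊗[R] A) →ₗ[R] A ⊗[R] (A ⊗[R] (A ⊗[R] A)) := (dR Δ).lTensor A

variable (R A) in
/-- `φ ↦ φ ⊗ 1` on `A ⊗ A`. -/
noncomputable def appR : A ⊗[R] A →ₗ[R] A ⊗[R] (A ⊗[R] A) :=
  ((TensorProduct.mk R A A).flip 1).lTensor A

variable (R A) in
/-- `ψ ↦ ψ ⊗ 1` on `A ⊗ A ⊗ A`. -/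
noncomputable def appR3 : A ⊗[R] (A ⊗[R] A) →ₗ[R] A ⊗[R] (A ⊗[R] (A ⊗[R] A)) :=
  (appR R A).lTensor A

/-- `δ ⊗ 1` on `A ⊗ A`, re-associated to take values in `A ⊗ (A ⊗ (A ⊗ A))`. -/
noncomputable def J1 (δ : A →ₗ[R] A ⊗[R] (A ⊗[R] A)) :
    A ⊗[R] A →ₗ[R] A ⊗[R] (A ⊗[R] (A ⊗[R] A)) :=
  (TensorProduct.assoc R A A A).toLinearMap.lTensor A ∘ₗ
    (TensorProduct.assoc R A (A ⊗[R] A) A).toLinearMap ∘ₗ δ.rTensor A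

theorem lTensor_dR_comp (Δ : A →ₗ[R] A ⊗[R] A) (t : A ⊗[R] A) :
    (dR Δ ∘ₗ Δ).lTensor A t = D3 Δ (dR Δ t) := by
  simp only [D3, dR, LinearMap.lTensor_comp, LinearMap.comp_apply]

theorem lTensor_dL_comp (Δ : A →ₗ[R] A ⊗[R] A) (t : A ⊗[R] A) :
    (dL Δ ∘ₗ Δ).lTensor A t = D2 Δ (dR Δ t) := by
  simp only [D2, dR, LinearMap.lTensor_comp, LinearMap.comp_apply]

theorem D3_dL (Δ : A →ₗ[R] A ⊗[R] A) (t : A ⊗[R] A) :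
    D3 Δ (dL Δ t) = D1 Δ (dR Δ t) := by
  induction t with
  | zero => simp
  | add x y hx hy => simp only [map_add, hx, hy]
  | tmul x y =>
    simp only [dL, dR, D3, D1, LinearMap.comp_apply, LinearMap.rTensor_tmul,
      LinearMap.lTensor_tmul, LinearEquiv.coe_coe]
    induction (Δ x) with
    | zero => simp
    | add x y hx hy => simp only [map_add, hx, hy, TensorProduct.add_tmul]
    | tmul u v => simp

theorem D2_dL (Δ : A →ₗ[R] A ⊗[R] A) (t : A ⊗[R] A) :
    D2 Δ (dL Δ t) = J1 (dR Δ ∘ₗ Δ) t := by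
  induction t with
  | zero => simp
  | add x y hx hy => simp only [map_add, hx, hy]
  | tmul x y =>
    simp only [dL, dR, D2, J1, LinearMap.comp_apply, LinearMap.rTensor_tmul, LinearEquiv.coe_coe]
    induction (Δ x) with
    | zero => simp
    | add x y hx hy => simp only [map_add, hx, hy, TensorProduct.add_tmul]
    | tmul u v =>
      simp only [TensorProduct.assoc_tmul, LinearMap.lTensor_tmul, LinearMap.comp_apply,
        LinearMap.rTensor_tmul, LinearEquiv.coe_coe]

theorem D1_dL (Δ : A →ₗ[R] A ⊗[R] A) (t : A ⊗[R] A) :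
    D1 Δ (dL Δ t) = J1 (dL Δ ∘ₗ Δ) t := by
  induction t with
  | zero => simp
  | add x y hx hy => simp only [map_add, hx, hy]
  | tmul x y =>
    simp only [dL, D1, J1, LinearMap.comp_apply, LinearMap.rTensor_tmul, LinearEquiv.coe_coe]
    induction (Δ x) with
    | zero => simp
    | add x y hx hy => simp only [map_add, hx, hy, TensorProduct.add_tmul]
    | tmul u v =>
      simp only [TensorProduct.assoc_tmul, LinearMap.comp_apply,
        LinearMap.rTensor_tmul, LinearEquiv.coe_coe]
      induction (Δ u) with
      | zero => simp
      | add x y hx hy => simp only [map_add, hx, hy, TensorProduct.add_tmul]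
      | tmul p q => simp

/-- The failure of coassociativity satisfies the pentagon identity. -/
theorem pentagon (Δ : A →ₗ[R] A ⊗[R] A) (X : A →ₗ[R] A ⊗[R] (A ⊗[R] A))
    (hX : ∀ a, X a = dR Δ (Δ a) - dL Δ (Δ a)) (a : A) :
    X.lTensor A (Δ a) - D1 Δ (X a) + D2 Δ (X a) - D3 Δ (X a) + J1 X (Δ a) = 0 := by
  have hU : dR Δ ∘ₗ Δ = X + dL Δ ∘ₗ Δ := LinearMap.ext fun a => by simp [hX]
  have j1 : J1 X (Δ a) = J1 (dR Δ ∘ₗ Δ) (Δ a) - J1 (dL Δ ∘ₗ Δ) (Δ a) := by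
    rw [hU, eq_sub_iff_add_eq]
    simp only [J1, LinearMap.rTensor_add, LinearMap.comp_apply, LinearMap.add_apply, map_add]
  have l1 : X.lTensor A (Δ a) = D3 Δ (dR Δ (Δ a)) - D2 Δ (dR Δ (Δ a)) := by
    rw [← lTensor_dR_comp, ← lTensor_dL_comp, hU, LinearMap.lTensor_add, LinearMap.add_apply, add_sub_cancel_right]
  rw [j1, l1, ← D2_dL, ← D1_dL]
  simp only [hX, LinearMap.sub_apply, LinearMap.comp_apply, map_sub]
  rw [D3_dL]
  abel

end Cobar

section MulMod
variable {R A B C : Type*} [CommRing R] [Ring A] [Algebra R A] [Ring B] [Algebra R B]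
  [Ring C] [Algebra R C]

/-- Multiplicativity modulo `q` of a linear map. -/
def MulMod (q : R) (f : A →ₗ[R] B) : Prop := ∀ x y, Dv q (f (x * y) - f x * f y)

/-- Multiplicativity modulo `q` on a tensor product may be tested on pure tensors. -/
theorem MulMod.of_tmul {q : R} (f : A ⊗[R] B →ₗ[R] C)
    (h : ∀ a b a' b', Dv q (f ((a * a') ⊗ₜ (b * b')) - f (a ⊗ₜ b) * f (a' ⊗ₜ b'))) :
    MulMod q f := by
  intro s t
  induction s with
  | zero => simpa using Dv.zero q
  | add x y hx hy =>
    have := hx.add hy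
    convert this using 1
    simp only [add_mul, map_add]; abel
  | tmul a b =>
    induction t with
    | zero => simpa using Dv.zero q
    | add x y hx hy =>
      have := hx.add hy
      convert this using 1
      simp only [mul_add, map_add]; abel
    | tmul a' b' => simpa using h a b a' b'

theorem MulMod.comp {q : R} {g : B →ₗ[R] C} {f : A →ₗ[R] B} (hg : MulMod q g) (hf : MulMod q f) :
    MulMod q (g ∘ₗ f) := by
  intro x y
  have := ((hf x y).map g).add (hg (f x) (f y))
  convert this using 1
  simp

theorem MulMod.lTensor {q : R} {f : A →ₗ[R] B} (hf : MulMod q f) : MulMod q (f.lTensor C) := by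
  apply MulMod.of_tmul
  intro a b a' b'
  have := (hf b b').map (TensorProduct.mk R C B (a * a'))
  simpa [TensorProduct.tmul_sub] using this

theorem MulMod.rTensor {q : R} {f : A →ₗ[R] B} (hf : MulMod q f) : MulMod q (f.rTensor C) := by
  apply MulMod.of_tmul
  intro a b a' b'
  have := (hf a a').map ((TensorProduct.mk R B C).flip (b * b'))
  simpa [TensorProduct.sub_tmul] using this

theorem MulMod.assoc (q : R) : MulMod q (TensorProduct.assoc R A B C).toLinearMap := by
  intro x y
  have : (TensorProduct.assoc R A B C) (x * y) =
      (TensorProduct.assoc R A B C) x * (TensorProduct.assoc R A B C) y :=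
    map_mul (Algebra.TensorProduct.assoc R R R A B C) x y
  simpa [this] using Dv.zero q

theorem MulMod.mk_flip_one (q : R) : MulMod q ((TensorProduct.mk R A B).flip 1) := by
  intro x y
  simpa using Dv.zero q

theorem MulMod.eq {f : A →ₗ[R] B} (h : MulMod (0 : R) f) (x y : A) : f (x * y) = f x * f y := by
  obtain ⟨m, hm⟩ := h x y
  rw [zero_smul, sub_eq_zero] at hm
  exact hm

theorem MulMod.of_eq {f : A →ₗ[R] B} (h : ∀ x y, f (x * y) = f x * f y) (q : R) : MulMod q f := by
  intro x y
  rw [h, sub_self]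
  exact Dv.zero q

theorem MulMod.dR {q : R} {Δ : A →ₗ[R] A ⊗[R] A} (h : MulMod q Δ) : MulMod q (dR Δ) := h.lTensor
theorem MulMod.dL {q : R} {Δ : A →ₗ[R] A ⊗[R] A} (h : MulMod q Δ) : MulMod q (dL Δ) :=
  (MulMod.assoc q).comp h.rTensor
theorem MulMod.D1 {q : R} {Δ : A →ₗ[R] A ⊗[R] A} (h : MulMod q Δ) :
    MulMod (A := A ⊗[R] (A ⊗[R] A)) (B := A ⊗[R] (A ⊗[R] (A ⊗[R] A))) q (D1 Δ) :=
  (MulMod.assoc q).comp h.rTensor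
theorem MulMod.D2 {q : R} {Δ : A →ₗ[R] A ⊗[R] A} (h : MulMod q Δ) :
    MulMod (A := A ⊗[R] (A ⊗[R] A)) (B := A ⊗[R] (A ⊗[R] (A ⊗[R] A))) q (D2 Δ) := h.dL.lTensor
theorem MulMod.D3 {q : R} {Δ : A →ₗ[R] A ⊗[R] A} (h : MulMod q Δ) :
    MulMod (A := A ⊗[R] (A ⊗[R] A)) (B := A ⊗[R] (A ⊗[R] (A ⊗[R] A))) q (D3 Δ) := h.dR.lTensor
theorem MulMod.appR (q : R) : MulMod q (appR R A) := (MulMod.mk_flip_one q).lTensor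
theorem MulMod.appR3 (q : R) :
    MulMod (A := A ⊗[R] (A ⊗[R] A)) (B := A ⊗[R] (A ⊗[R] (A ⊗[R] A))) q (appR3 R A) := (MulMod.appR q).lTensor

end MulMod

section Homotopy
variable {R H : Type*} [CommRing R] [Ring H] [HopfAlgebra R H]

theorem ev_mul_left {B : Type*} [Ring B] [Algebra R B] (p : H →ₗ[R] R) (y : B) (t : H ⊗[R] B) :
    ev p ((1 ⊗ₜ y) * t) = y * ev p t := by
  induction t with
  | zero => simp
  | add x y hx hy => simp only [map_add, hx, hy, mul_add]
  | tmul u v => simp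

theorem ev_mul_right {B : Type*} [Ring B] [Algebra R B] (p : H →ₗ[R] R) (y : B) (t : H ⊗[R] B) :
    ev p (t * (1 ⊗ₜ y)) = ev p t * y := by
  induction t with
  | zero => simp
  | add x y hx hy => simp only [map_add, hx, hy, add_mul]
  | tmul u v => simp

theorem ev_lTensor {M N : Type*} [AddCommGroup M] [Module R M] [AddCommGroup N] [Module R N]
    (p : H →ₗ[R] R) (f : M →ₗ[R] N) (t : H ⊗[R] M) :
    ev p (f.lTensor H t) = f (ev p t) := by
  induction t with
  | zero => simp
  | add x y hx hy => simp only [map_add, hx, hy]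
  | tmul u v => simp

variable [Module.Free R H] [Module.Finite R H] [IsDomain R]

/-- If `φ ∈ H ⊗ B` centralises the image of `(1 ⊗ ρ) ∘ Δ`, then `(∫ ⊗ 1)(φ)` centralises the image
of `ρ`. -/
theorem commute_ev (ht : LinearMap.trace R H (S2 R H) ≠ 0) {Λ : H}
    (hΛ : ∀ a : H, a * Λ = counit (R := R) a • Λ) (hΛ1 : counit (R := R) Λ = 1)
    {B : Type*} [Ring B] [Algebra R B] (ρ : H →ₗ[R] B) (φ : H ⊗[R] B)
    (h : ∀ a, ρ.lTensor H (comul a) * φ = φ * ρ.lTensor H (comul a)) (a : H) :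
    ρ a * ev (phiR R) φ = ev (phiR R) φ * ρ a := by
  let M : H ⊗[R] (H ⊗[R] H) →ₗ[R] H ⊗[R] B := LinearMap.mul' R (H ⊗[R] B) ∘ₗ
    (TensorProduct.comm R (H ⊗[R] B) (H ⊗[R] B)).toLinearMap ∘ₗ
    TensorProduct.map ((TensorProduct.mk R H B).flip 1 ∘ₗ antipode R ∘ₗ S2 R H) (ρ.lTensor H)
  let M' : H ⊗[R] (H ⊗[R] H) →ₗ[R] H ⊗[R] B := LinearMap.mul' R (H ⊗[R] B) ∘ₗ
    TensorProduct.map ((TensorProduct.mk R H B).flip 1 ∘ₗ antipode R) (ρ.lTensor H)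
  have hM : M (comul.lTensor H (comul a)) = 1 ⊗ₜ ρ a := by
    have e1 : ∀ t : (H ⊗[R] H) ⊗[R] H, M (TensorProduct.assoc R H H H t) =
        TensorProduct.map (LinearMap.mul' R H ∘ₗ (antipode R ∘ₗ S2 R H).lTensor H ∘ₗ
      (TensorProduct.comm R H H).toLinearMap) ρ t := by
      intro t
      induction t with
      | zero => simp
      | add x y hx hy => simp only [map_add, hx, hy]
      | tmul z v =>
        induction z with
        | zero => simp
        | add x y hx hy => simp only [map_add, hx, hy, TensorProduct.add_tmul]
        | tmul x y => simp [M]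
    rw [← coassoc_apply, e1, collapse_left _ 1 (mul_S3 hΛ hΛ1 ht)]
  have hM' : M' (comul.lTensor H (comul a)) = 1 ⊗ₜ ρ a := by
    have e1 : ∀ t : (H ⊗[R] H) ⊗[R] H, M' (TensorProduct.assoc R H H H t) =
        TensorProduct.map (LinearMap.mul' R H ∘ₗ (antipode R).rTensor H) ρ t := by
      intro t
      induction t with
      | zero => simp
      | add x y hx hy => simp only [map_add, hx, hy]
      | tmul z v =>
        induction z with
        | zero => simp
        | add x y hx hy => simp only [map_add, hx, hy, TensorProduct.add_tmul]
        | tmul x y => simp [M']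
    rw [← coassoc_apply, e1, collapse_left _ 1 (fun u => by
      simp [Algebra.algebraMap_eq_smul_one])]
  have e2 : ∀ (u : H) (s : H ⊗[R] B), ev (phiR R) (s * (antipode R (S2 R H u) ⊗ₜ 1)) =
      ev (phiR R) ((antipode R u ⊗ₜ 1) * s) := by
    intro u s
    induction s with
    | zero => simp
    | add x y hx hy => simp only [map_add, hx, hy, add_mul, mul_add]
    | tmul x y =>
      have : phiR R (x * antipode R (S2 R H u)) = phiR R (antipode R u * x) := by
        rw [phiR_eq_phiL ht, phiL_mul (antipode R u) x]; rfl
      simp [this]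
  have e3 : ∀ t : H ⊗[R] H, ev (phiR R) (φ * M (comul.lTensor H t)) =
      ev (phiR R) (M' (comul.lTensor H t) * φ) := by
    intro t
    induction t with
    | zero => simp
    | add x y hx hy => simp only [map_add, hx, hy, add_mul, mul_add]
    | tmul u v =>
      simp only [M, M', LinearMap.lTensor_tmul, LinearMap.comp_apply, TensorProduct.map_tmul,
        LinearEquiv.coe_coe, TensorProduct.comm_tmul, LinearMap.mul'_apply, LinearMap.flip_apply,
        TensorProduct.mk_apply]
      rw [← mul_assoc, ← h, e2, mul_assoc]
  have e4 := e3 (comul a)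
  rw [hM, hM', ev_mul_left, ev_mul_right] at e4
  exact e4.symm

/-- Vanishing of the third cohomology of the cobar complex of `H`, modulo the centralisers of the
iterated comultiplications: integration over the first tensor factor is a contraction. -/
theorem cobar_homotopy {k : Type*} [Field k] {H : Type*} [Ring H] [HopfAlgebra k H]
    [FiniteDimensional k H] (ht : LinearMap.trace k H (S2 k H) ≠ 0) {Λ : H}
    (hΛ : ∀ a : H, a * Λ = counit (R := k) a • Λ) (hΛ1 : counit (R := k) Λ = 1)
    (ψ : H ⊗[k] (H ⊗[k] H))
    (h : ∀ a, Commute ((dR comul ∘ₗ comul).lTensor H (comul (R := k) a))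
      ((1 ⊗ₜ ψ) - D1 comul ψ + D2 comul ψ - D3 comul ψ + appR3 k H ψ)) :
    ∃ φ : H ⊗[k] H, ∀ a, Commute (dR comul (comul (R := k) a))
      (ψ - ((1 ⊗ₜ φ) - dL comul φ + dR comul φ - appR k H φ)) := by
  set t := LinearMap.trace k H (S2 k H) with htt
  refine ⟨t⁻¹ • ev (phiR k) ψ, fun a => ?_⟩
  have h1 := commute_ev ht hΛ hΛ1 (dR comul ∘ₗ comul) _ (fun a => (h a).eq) a
  have hD1 : ∀ ψ : H ⊗[k] (H ⊗[k] H), ev (phiR k) (D1 comul ψ) = 1 ⊗ₜ ev (phiR k) ψ := by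
    intro ψ
    induction ψ with
    | zero => simp
    | add x y hx hy => simp only [map_add, hx, hy, TensorProduct.tmul_add]
    | tmul u s =>
      have : ∀ z : H ⊗[k] H, ev (phiR k) (TensorProduct.assoc k H H (H ⊗[k] H) (z ⊗ₜ s)) =
          ev (phiR k) z ⊗ₜ s := by
        intro z
        induction z with
        | zero => simp
        | add x y hx hy => simp only [map_add, hx, hy, TensorProduct.add_tmul]
        | tmul x y => simp [TensorProduct.smul_tmul']
      simp only [D1, LinearMap.comp_apply, LinearMap.rTensor_tmul, LinearEquiv.coe_coe, this,
        phiR_integral, ev_tmul, TensorProduct.smul_tmul]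
  rw [map_add, map_sub, map_add, map_sub, hD1, D2, D3, appR3, ev_lTensor, ev_lTensor, ev_lTensor,
    ev_tmul, phiR_one, ← htt] at h1
  have h2 : Commute (dR comul (comul (R := k) a)) (t⁻¹ • (t • ψ - 1 ⊗ₜ[k] (ev (phiR k)) ψ +
    (dL comul) ((ev (phiR k)) ψ) - (dR comul) ((ev (phiR k)) ψ) +
      (appR k H) ((ev (phiR k)) ψ))) := Commute.smul_right h1 _
  convert h2 using 1
  simp only [smul_add, smul_sub, smul_smul, map_smul, TensorProduct.tmul_smul,
    inv_mul_cancel₀ ht, one_smul]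
  abel

end Homotopy

/-! ### Correcting multiplicativity -/

section MulStep
variable {W : Type*} [CommRing W] [IsDomain W] {A B K : Type*} [Ring A] [Algebra W A]
  [Ring B] [Algebra W B] [Module.Free W B] [Ring K] [Algebra W K]

/-- A linear map which is multiplicative modulo `q` can be corrected modulo `q`, so as to become
multiplicative modulo `q * p`: its defect is a Hochschild 2-cocycle, which a separability
idempotent of the source makes a coboundary. -/
theorem mul_step {p q : W} (hq : q ≠ 0) (hpq : p ∣ q) {ι : Type*} [Fintype ι] (x y : ι → A)
    (hxy : ∑ j, x j * y j = 1) (hsep : ∀ a, ∑ j, (a * x j) ⊗ₜ[W] y j = ∑ j, x j ⊗ₜ (y j * a))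
    (π : B →ₐ[W] K) (hπ : IsRed p π) (f : A →ₗ[W] B) (hf : MulMod q f) (hf1 : π (f 1) = 1) :
    ∃ s : A →ₗ[W] B, MulMod (q * p) (f + q • s) := by
  obtain ⟨c, hc⟩ := exists_smul_eq q (fun n => smul_cancel_of_free hq n)
    (f ∘ₗ LinearMap.mul' W A - LinearMap.mul' W B ∘ₗ TensorProduct.map f f)
    (Dv.tmul_induction _ fun m n => by simpa using hf m n)
  have hc' : ∀ a b, f (a * b) = f a * f b + q • c (a ⊗ₜ b) := by
    intro a b
    have := LinearMap.congr_fun hc (a ⊗ₜ b)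
    simp only [LinearMap.sub_apply, LinearMap.comp_apply, LinearMap.mul'_apply,
      TensorProduct.map_tmul, LinearMap.smul_apply] at this
    rw [← this]; abel
  have coc : ∀ a b d, c (a ⊗ₜ b) * f d + c ((a * b) ⊗ₜ d) =
      f a * c (b ⊗ₜ d) + c (a ⊗ₜ (b * d)) := by
    intro a b d
    refine sub_eq_zero.mp (smul_cancel_of_free hq _ ?_)
    have h1 := hc' (a * b) d
    have h2 := hc' a (b * d)
    rw [hc' a b] at h1
    rw [hc' b d, ← mul_assoc] at h2
    rw [h1] at h2
    simp only [smul_sub, smul_add]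
    simp only [add_mul, mul_add, mul_assoc] at h2
    rw [sub_eq_zero]
    have := add_left_cancel ((add_assoc _ _ _).symm.trans (h2.trans (add_assoc _ _ _)))
    simpa only [smul_mul_assoc, mul_smul_comm] using this
  have hfm : ∀ a b, π (f (a * b)) = π (f a) * π (f b) := by
    intro a b
    rw [hc', map_add, map_mul, (hπ.ker _).2 ((Dv.smul_self q _).of_dvd hpq), add_zero]
  let s : A →ₗ[W] B := ∑ j, LinearMap.mulLeft W (f (x j)) ∘ₗ c ∘ₗ TensorProduct.mk W A A (y j)
  have hs : ∀ a, s a = ∑ j, f (x j) * c (y j ⊗ₜ a) := by intro a; simp [s]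
  have key : ∀ a b, π (c (a ⊗ₜ b) + s (a * b) - s a * f b - f a * s b) = 0 := by
    intro a b
    have h1 : ∑ j, π (f (x j)) * π (c ((y j * a) ⊗ₜ b)) = π (f a) * π (s b) := by
      let L : A ⊗[W] A →ₗ[W] K := LinearMap.mul' W K ∘ₗ
        TensorProduct.map (π.toLinearMap ∘ₗ f)
          (π.toLinearMap ∘ₗ c ∘ₗ (TensorProduct.mk W A A).flip b)
      have := congrArg L (hsep a)
      simp only [map_sum, L, LinearMap.comp_apply, TensorProduct.map_tmul, LinearMap.mul'_apply,
        AlgHom.toLinearMap_apply, LinearMap.flip_apply, TensorProduct.mk_apply] at this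
      rw [← this, hs, map_sum, Finset.mul_sum]
      exact Finset.sum_congr rfl fun j _ => by rw [hfm, map_mul, mul_assoc]
    have h2 : s (a * b) - s a * f b = ∑ j, (f (x j) * c ((y j * a) ⊗ₜ b) -
        f (x j) * f (y j) * c (a ⊗ₜ b)) := by
      rw [hs, hs, Finset.sum_mul, ← Finset.sum_sub_distrib]
      refine Finset.sum_congr rfl fun j _ => ?_
      rw [mul_assoc, mul_assoc, ← mul_sub, ← mul_sub]
      congr 1
      rw [sub_eq_sub_iff_add_eq_add, add_comm, ← coc, add_comm]
    have h3 : ∑ j, π (f (x j)) * π (f (y j)) = 1 := by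
      simp only [← hfm, ← map_sum, hxy, hf1]
    rw [add_sub_assoc, h2, map_sub, map_add, map_sum, map_mul, ← h1]
    simp only [map_sub, map_mul, Finset.sum_sub_distrib, ← Finset.sum_mul, h3, one_mul]
    abel
  refine ⟨s, fun a b => ?_⟩
  have h1 : Dv (q * p) (q • (c (a ⊗ₜ b) + s (a * b) - s a * f b - f a * s b)) :=
    ((hπ.ker _).1 (key a b)).smul_mul
  have h2 : Dv (q * p) ((q * q) • (s a * s b)) := (Dv.smul_self _ _).of_dvd (mul_dvd_mul_left q hpq)
  convert h1.sub h2 using 1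
  simp only [LinearMap.add_apply, LinearMap.smul_apply, hc', smul_add, smul_sub, add_mul, mul_add,
    smul_mul_assoc, mul_smul_comm, mul_smul]
  abel

end MulStep

/-! ### Naturality of the cobar maps -/

section Nat
variable {W k : Type*} [CommRing W] [Field k] [Algebra W k]
  {A B C H K L : Type*} [Ring A] [Algebra W A] [Ring B] [Algebra W B] [Ring C] [Algebra W C]
  [Ring H] [Algebra k H] [Algebra W H] [IsScalarTower W k H]
  [Ring K] [Algebra k K] [Algebra W K] [IsScalarTower W k K]
  [Ring L] [Algebra k L] [Algebra W L] [IsScalarTower W k L]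

theorem tmap_lTensor (π : A →ₐ[W] H) (πB : B →ₐ[W] K) (πC : C →ₐ[W] L) (f : B →ₗ[W] C)
    (F : K →ₗ[k] L) (h : ∀ b, πC (f b) = F (πB b)) (t : A ⊗[W] B) :
    tmap k π πC (f.lTensor A t) = F.lTensor H (tmap k π πB t) := by
  induction t with
  | zero => simp
  | add x y hx hy => simp only [map_add, hx, hy]
  | tmul x y => simp [h]

theorem tmap_rTensor (π : A →ₐ[W] H) (πB : B →ₐ[W] K) (πC : C →ₐ[W] L) (f : B →ₗ[W] C)
    (F : K →ₗ[k] L) (h : ∀ b, πC (f b) = F (πB b)) (t : B ⊗[W] A) :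
    tmap k πC π (f.rTensor A t) = F.rTensor H (tmap k πB π t) := by
  induction t with
  | zero => simp
  | add x y hx hy => simp only [map_add, hx, hy]
  | tmul x y => simp [h]

theorem tmap_assoc (π : A →ₐ[W] H) (πB : B →ₐ[W] K) (πC : C →ₐ[W] L) (t : (A ⊗[W] B) ⊗[W] C) :
    tmap k π (tmap k πB πC) (TensorProduct.assoc W A B C t) =
      TensorProduct.assoc k H K L (tmap k (tmap k π πB) πC t) := by
  induction t with
  | zero => simp
  | add x y hx hy => simp only [map_add, hx, hy]
  | tmul z v =>
    induction z with
    | zero => simp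
    | add x y hx hy => simp only [map_add, hx, hy, TensorProduct.add_tmul]
    | tmul x y => simp

variable {π : A →ₐ[W] H} {Δ : A →ₗ[W] A ⊗[W] A} {Γ : H →ₗ[k] H ⊗[k] H}
  (h : ∀ a, tmap k π π (Δ a) = Γ (π a))
include h

theorem tmap_dR (t : A ⊗[W] A) :
    tmap k π (tmap k π π) (dR Δ t) = dR Γ (tmap k π π t) :=
  tmap_lTensor _ _ _ _ _ h t

theorem tmap_dL (t : A ⊗[W] A) :
    tmap k π (tmap k π π) (dL Δ t) = dL Γ (tmap k π π t) := by
  simp only [dL, LinearMap.comp_apply, LinearEquiv.coe_coe, tmap_assoc]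
  rw [tmap_rTensor _ _ _ _ _ h t]

theorem tmap_D1 (t : A ⊗[W] (A ⊗[W] A)) :
    tmap k π (tmap k π (tmap k π π)) (D1 Δ t) = D1 Γ (tmap k π (tmap k π π) t) := by
  simp only [D1, LinearMap.comp_apply, LinearEquiv.coe_coe, tmap_assoc]
  rw [tmap_rTensor _ _ _ _ _ h t]

theorem tmap_D2 (t : A ⊗[W] (A ⊗[W] A)) :
    tmap k π (tmap k π (tmap k π π)) (D2 Δ t) = D2 Γ (tmap k π (tmap k π π) t) :=
  tmap_lTensor _ _ _ _ _ (tmap_dL h) t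

theorem tmap_D3 (t : A ⊗[W] (A ⊗[W] A)) :
    tmap k π (tmap k π (tmap k π π)) (D3 Δ t) = D3 Γ (tmap k π (tmap k π π) t) :=
  tmap_lTensor _ _ _ _ _ (tmap_dR h) t

omit h in
theorem tmap_J1 (δ : A →ₗ[W] A ⊗[W] (A ⊗[W] A)) (F : H →ₗ[k] H ⊗[k] (H ⊗[k] H))
    (h : ∀ a, tmap k π (tmap k π π) (δ a) = F (π a)) (t : A ⊗[W] A) :
    tmap k π (tmap k π (tmap k π π)) (J1 δ t) = J1 F (tmap k π π t) := by
  simp only [J1, LinearMap.comp_apply]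
  rw [tmap_lTensor _ _ _ _ (TensorProduct.assoc k H H H).toLinearMap (tmap_assoc π π π),
    LinearEquiv.coe_coe, LinearEquiv.coe_coe, tmap_assoc, tmap_rTensor _ _ _ _ _ h t]

end Nat

section Comm
variable {R H : Type*} [CommRing R] [Ring H] [Algebra R H]

/-- The linear map `h ↦ ψ f(h) - f(h) ψ`. -/
noncomputable def ad {B : Type*} [Ring B] [Algebra R B] (ψ : B) (f : H →ₗ[R] B) : H →ₗ[R] B :=
  (LinearMap.mulLeft R ψ - LinearMap.mulRight R ψ) ∘ₗ f

theorem ad_apply {B : Type*} [Ring B] [Algebra R B] (ψ : B) (f : H →ₗ[R] B) (h : H) :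
    ad ψ f h = ψ * f h - f h * ψ := by simp [ad]

theorem lTensor_ad {B : Type*} [Ring B] [Algebra R B] (ψ : B) (f : H →ₗ[R] B) (t : H ⊗[R] H) :
    (ad ψ f).lTensor H t = (1 ⊗ₜ ψ) * f.lTensor H t - f.lTensor H t * (1 ⊗ₜ ψ) := by
  induction t with
  | zero => simp
  | add x y hx hy => simp only [map_add, hx, hy, mul_add, add_mul]; abel
  | tmul x y => simp [ad_apply, TensorProduct.tmul_sub]

theorem rTensor_ad {B : Type*} [Ring B] [Algebra R B] (ψ : B) (f : H →ₗ[R] B) (t : H ⊗[R] H) :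
    (ad ψ f).rTensor H t = (ψ ⊗ₜ 1) * f.rTensor H t - f.rTensor H t * (ψ ⊗ₜ 1) := by
  induction t with
  | zero => simp
  | add x y hx hy => simp only [map_add, hx, hy, mul_add, add_mul]; abel
  | tmul x y => simp [ad_apply, TensorProduct.sub_tmul]

theorem assoc_mul {A B C : Type*} [Ring A] [Algebra R A] [Ring B] [Algebra R B] [Ring C]
    [Algebra R C] (x y : (A ⊗[R] B) ⊗[R] C) : TensorProduct.assoc R A B C (x * y) =
      TensorProduct.assoc R A B C x * TensorProduct.assoc R A B C y :=
  map_mul (Algebra.TensorProduct.assoc R R R A B C) x y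

theorem assoc_tmul_one (φ : H ⊗[R] H) :
    TensorProduct.assoc R H H H (φ ⊗ₜ 1) = appR R H φ := by
  induction φ with
  | zero => simp
  | add x y hx hy => simp only [map_add, hx, hy, TensorProduct.add_tmul]
  | tmul x y => simp [appR]

theorem dL_ad (φ : H ⊗[R] H) (f : H →ₗ[R] H ⊗[R] H) (t : H ⊗[R] H) :
    dL (ad φ f) t = appR R H φ * dL f t - dL f t * appR R H φ := by
  simp only [dL, LinearMap.comp_apply, LinearEquiv.coe_coe, rTensor_ad, map_sub, assoc_mul,
    assoc_tmul_one]

theorem J1_ad (ψ : H ⊗[R] (H ⊗[R] H)) (f : H →ₗ[R] H ⊗[R] (H ⊗[R] H)) (t : H ⊗[R] H) :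
    J1 (ad ψ f) t = appR3 R H ψ * J1 f t - J1 f t * appR3 R H ψ := by
  have e : (TensorProduct.assoc R H H H).toLinearMap.lTensor H
      (TensorProduct.assoc R H (H ⊗[R] H) H (ψ ⊗ₜ 1)) = appR3 R H ψ := by
    induction ψ with
    | zero => simp
    | add x y hx hy => simp only [map_add, hx, hy, TensorProduct.add_tmul]
    | tmul x y => simp [appR3, assoc_tmul_one]
  have hm := ((MulMod.assoc (R := R) (A := H) (B := H) (C := H) 0).lTensor (C := H)).eq
  simp only [J1, LinearMap.comp_apply, LinearEquiv.coe_coe, rTensor_ad, map_sub, assoc_mul, hm, e]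

end Comm

/-! ### Correcting coassociativity -/

theorem Dv.cancel {W N : Type*} [CommRing W] [IsDomain W] [AddCommGroup N] [Module W N]
    [Module.Free W N] {p q : W} (hq : q ≠ 0) {n : N} (h : Dv (q * p) (q • n)) : Dv p n := by
  obtain ⟨m, hm⟩ := h
  rw [mul_smul, ← sub_eq_zero, ← smul_sub] at hm
  exact ⟨m, sub_eq_zero.mp (smul_cancel_of_free hq _ hm)⟩

theorem commute_alternating {B : Type*} [Ring B] {u a b c d e : B}
    (h : a * u - u * a - (b * u - u * b) + (c * u - u * c) - (d * u - u * d) +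
      (e * u - u * e) = 0) : Commute u (a - b + c - d + e) := by
  rw [Commute, SemiconjBy, ← sub_eq_zero, ← neg_eq_zero, ← h]
  simp only [mul_add, mul_sub, add_mul, sub_mul]
  abel

section CoassocStep
variable {W k : Type*} [CommRing W] [IsDomain W] [Field k] [Algebra W k]
  {A H : Type*} [Ring A] [Algebra W A] [Module.Free W A] [Ring H] [HopfAlgebra k H]
  [Algebra W H] [IsScalarTower W k H] [FiniteDimensional k H]

/-- `Δ` lifts the comultiplication of `H` to `A`, and is multiplicative and coassociative
modulo `q`. -/
structure IsLift (π : A →ₐ[W] H) (q : W) (Δ : A →ₗ[W] A ⊗[W] A) : Prop where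
  red : ∀ a, tmap k π π (Δ a) = comul (R := k) (π a)
  mul : MulMod q Δ
  coassoc : ∀ a, Dv q (dR Δ (Δ a) - dL Δ (Δ a))

theorem dL_comul (h : H) : dL comul (comul (R := k) h) = dR comul (comul (R := k) h) :=
  coassoc_apply h

theorem dL_comp_comul : dL (comul (R := k) (A := H)) ∘ₗ comul = dR comul ∘ₗ comul :=
  LinearMap.ext dL_comul

theorem mulMod_comul : MulMod (0 : k) (comul (R := k) (A := H)) :=
  MulMod.of_eq Bialgebra.comul_mul 0

theorem sub_dR {Δ e : A →ₗ[W] A ⊗[W] A} (q : W) (t : A ⊗[W] A) :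
    dR (Δ - q • e) t = dR Δ t - q • dR e t := by
  simp [dR, LinearMap.lTensor_sub, LinearMap.lTensor_smul]

theorem sub_dL {Δ e : A →ₗ[W] A ⊗[W] A} (q : W) (t : A ⊗[W] A) :
    dL (Δ - q • e) t = dL Δ t - q • dL e t := by
  simp [dL, LinearMap.rTensor_sub, LinearMap.rTensor_smul]

theorem dR_ad {R H : Type*} [CommRing R] [Ring H] [Algebra R H] (φ : H ⊗[R] H)
    (f : H →ₗ[R] H ⊗[R] H) (t : H ⊗[R] H) :
    dR (ad φ f) t = (1 ⊗ₜ φ) * dR f t - dR f t * (1 ⊗ₜ φ) := lTensor_ad φ f t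

/-- The coassociativity defect of a lift, divided by `q` and reduced modulo `p`, is an inner
derivation along the iterated comultiplication of `H`. -/
theorem defect_inner {p q : W} (hq : q ≠ 0) (hpq : p ∣ q)
    (hk : Function.Surjective (algebraMap W k)) {ι : Type*} [Fintype ι] (x y : ι → A)
    (hxy : ∑ j, x j * y j = 1) (hsep : ∀ a, ∑ j, (a * x j) ⊗ₜ[W] y j = ∑ j, x j ⊗ₜ (y j * a))
    (π : A →ₐ[W] H) (hπ : IsRed p π) (Δ : A →ₗ[W] A ⊗[W] A)
    (hred : ∀ a, tmap k π π (Δ a) = comul (R := k) (π a)) (hmul : MulMod (q * p) Δ)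
    (δ : A →ₗ[W] A ⊗[W] (A ⊗[W] A)) (hδ : ∀ a, dR Δ (Δ a) - dL Δ (Δ a) = q • δ a) :
    ∃ ψ : H ⊗[k] (H ⊗[k] H), ∀ a,
      tmap k π (tmap k π π) (δ a) = ad ψ (dR comul ∘ₗ comul (R := k)) (π a) := by
  have hπ3 := hπ.tmap hk (hπ.tmap hk hπ)
  set π3 := tmap k π (tmap k π π) with hdef
  set Δ3 : H →ₗ[k] H ⊗[k] (H ⊗[k] H) := dR comul ∘ₗ comul (R := k) with hΔ3
  have hU : ∀ a, π3 (dR Δ (Δ a)) = Δ3 (π a) := fun a => by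
    rw [hdef, tmap_dR hred, hred]; rfl
  have hV : ∀ a, π3 (dL Δ (Δ a)) = Δ3 (π a) := fun a => by
    rw [hdef, tmap_dL hred, hred, dL_comul]; rfl
  have hmulΔ : ∀ a b, Δ3 (a * b) = Δ3 a * Δ3 b := (mulMod_comul.dR.comp mulMod_comul).eq
  have hΔ31 : Δ3 1 = 1 := by
    simp [hΔ3, dR, Algebra.TensorProduct.one_def]
  have der : ∀ a b, π3 (δ (a * b)) = π3 (δ a) * Δ3 (π b) + Δ3 (π a) * π3 (δ b) := by
    intro a b
    have h1 := ((hmul.dR.comp hmul) a b).sub ((hmul.dL.comp hmul) a b)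
    simp only [LinearMap.comp_apply] at h1
    have h2 : dR Δ (Δ (a * b)) - dR Δ (Δ a) * dR Δ (Δ b) -
        (dL Δ (Δ (a * b)) - dL Δ (Δ a) * dL Δ (Δ b)) =
        q • (δ (a * b) - δ a * dR Δ (Δ b) - dL Δ (Δ a) * δ b) := by
      rw [smul_sub, smul_sub, ← smul_mul_assoc, ← mul_smul_comm, ← hδ, ← hδ, ← hδ, sub_mul, mul_sub]
      abel
    rw [h2] at h1
    have h4 := (hπ3.ker _).2 (Dv.cancel hq h1)
    rw [map_sub, map_sub, map_mul π3, map_mul π3, hU, hV, sub_sub, sub_eq_zero] at h4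
    exact h4
  refine ⟨∑ j, π3 (δ (x j)) * Δ3 (π (y j)), fun a => ?_⟩
  have hs : ∑ j, π3 (δ (a * x j)) * Δ3 (π (y j)) = ∑ j, π3 (δ (x j)) * Δ3 (π (y j * a)) := by
    let L : A ⊗[W] A →ₗ[W] H ⊗[k] (H ⊗[k] H) := LinearMap.mul' W _ ∘ₗ
      TensorProduct.map (π3.toLinearMap ∘ₗ δ) (Δ3.restrictScalars W ∘ₗ π.toLinearMap)
    have := congrArg L (hsep a)
    simpa only [map_sum, L, LinearMap.comp_apply, TensorProduct.map_tmul, LinearMap.mul'_apply,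
        AlgHom.toLinearMap_apply, LinearMap.restrictScalars_apply] using this
  have h1 : ∑ j, Δ3 (π (x j)) * Δ3 (π (y j)) = 1 := by
    simp only [← hmulΔ, ← map_mul, ← map_sum, hxy, map_one, hΔ31]
  simp only [der, add_mul, Finset.sum_add_distrib, map_mul, hmulΔ] at hs
  rw [ad_apply, Finset.sum_mul, Finset.mul_sum, eq_sub_iff_add_eq]
  simp only [mul_assoc, ← Finset.mul_sum] at hs ⊢
  rw [← hs, h1, mul_one]

/-- The pentagon identity makes the element of `defect_inner` a cocycle modulo the centraliser. -/
theorem defect_cocycle {p q : W} (hq : q ≠ 0) (hpq : p ∣ q)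
    (π : A →ₐ[W] H) (hπ : IsRed p π) (Δ : A →ₗ[W] A ⊗[W] A)
    (hred : ∀ a, tmap k π π (Δ a) = comul (R := k) (π a))
    (δ : A →ₗ[W] A ⊗[W] (A ⊗[W] A)) (hδ : ∀ a, dR Δ (Δ a) - dL Δ (Δ a) = q • δ a)
    (ψ : H ⊗[k] (H ⊗[k] H)) (hψ : ∀ a,
      tmap k π (tmap k π π) (δ a) = ad ψ (dR comul ∘ₗ comul (R := k)) (π a)) (h : H) :
    Commute ((dR comul ∘ₗ comul).lTensor H (comul (R := k) h))
      ((1 ⊗ₜ ψ) - D1 comul ψ + D2 comul ψ - D3 comul ψ + appR3 k H ψ) := by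
  obtain ⟨a, rfl⟩ := hπ.surj h
  set Δ4 := (dR comul ∘ₗ comul).lTensor H (comul (R := k) (π a)) with hΔ4
  have e3 : D3 comul (dR comul (comul (R := k) (π a))) = Δ4 := (lTensor_dR_comp _ _).symm
  have e2 : D2 comul (dR comul (comul (R := k) (π a))) = Δ4 := by
    rw [← lTensor_dL_comp, dL_comp_comul]
  have e1 : D1 comul (dR comul (comul (R := k) (π a))) = Δ4 := by
    rw [← D3_dL, dL_comul, e3]
  have e0 : J1 (dR comul ∘ₗ comul) (comul (R := k) (π a)) = Δ4 := by
    rw [← D2_dL, dL_comul, e2]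
  have h0 := pentagon Δ (q • δ) (fun a => by rw [hδ]; rfl) a
  have h1 : δ.lTensor A (Δ a) - D1 Δ (δ a) + D2 Δ (δ a) - D3 Δ (δ a) + J1 δ (Δ a) = 0 := by
    refine smul_cancel_of_free hq _ ?_
    rw [← h0]
    simp only [J1, LinearMap.lTensor_smul, LinearMap.rTensor_smul, LinearMap.smul_apply, map_smul,
      smul_add, smul_sub, LinearMap.comp_apply]
  have h2 := congrArg (tmap k π (tmap k π (tmap k π π))) h1
  rw [map_zero, map_add, map_sub, map_add, map_sub, tmap_D1 hred, tmap_D2 hred, tmap_D3 hred,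
    tmap_J1 _ _ hψ, tmap_lTensor _ _ _ _ _ hψ, hψ, hred, lTensor_ad, J1_ad, e0, ad_apply] at h2
  have m1 := mulMod_comul (k := k) (H := H).D1.eq
  have m2 := mulMod_comul (k := k) (H := H).D2.eq
  have m3 := mulMod_comul (k := k) (H := H).D3.eq
  simp only [map_sub, m1, m2, m3, LinearMap.comp_apply, e1, e2, e3] at h2
  exact commute_alternating h2

/-- A lift modulo `q` which is multiplicative modulo `q * p` can be corrected, by `q` times an inner
derivation along it, to become a lift modulo `q * p`. -/
theorem coassoc_step {p q : W} (hq : q ≠ 0) (hpq : p ∣ q)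
    (hk : Function.Surjective (algebraMap W k)) {ι : Type*} [Fintype ι] (x y : ι → A)
    (hxy : ∑ j, x j * y j = 1) (hsep : ∀ a, ∑ j, (a * x j) ⊗ₜ[W] y j = ∑ j, x j ⊗ₜ (y j * a))
    (ht : LinearMap.trace k H (S2 k H) ≠ 0) {Λ : H}
    (hΛ : ∀ a : H, a * Λ = counit (R := k) a • Λ) (hΛ1 : counit (R := k) Λ = 1)
    (π : A →ₐ[W] H) (hπ : IsRed p π) (Δ : A →ₗ[W] A ⊗[W] A)
    (hΔ : IsLift (k := k) π q Δ) (hmul : MulMod (q * p) Δ) :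
    ∃ e : A →ₗ[W] A ⊗[W] A, IsLift (k := k) π (q * p) (Δ - q • e) := by
  have hπ2 := hπ.tmap hk hπ
  have hπ3 := hπ.tmap hk hπ2
  obtain ⟨δ, hδ'⟩ := exists_smul_eq q (fun n => smul_cancel_of_free hq n)
    (dR Δ ∘ₗ Δ - dL Δ ∘ₗ Δ) hΔ.coassoc
  have hδ : ∀ a, dR Δ (Δ a) - dL Δ (Δ a) = q • δ a := LinearMap.congr_fun hδ'
  obtain ⟨ψ, hψ⟩ := defect_inner hq hpq hk x y hxy hsep π hπ Δ hΔ.red hmul δ hδ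
  obtain ⟨φ, hφ⟩ := cobar_homotopy ht hΛ hΛ1 ψ
    (defect_cocycle hq hpq π hπ Δ hΔ.red δ hδ ψ hψ)
  obtain ⟨φ', hφ'⟩ := hπ2.surj φ
  have he : ∀ a, tmap k π π (ad φ' Δ a) = ad φ (comul (R := k)) (π a) := by
    intro a
    rw [ad_apply, ad_apply, map_sub, map_mul, map_mul, hφ', hΔ.red]
  have hpd : q * p ∣ q * q := mul_dvd_mul_left q hpq
  refine ⟨ad φ' Δ, ?_, ?_, ?_⟩
  · intro a
    rw [LinearMap.sub_apply, LinearMap.smul_apply, map_sub, hΔ.red,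
      (hπ2.ker _).2 ((Dv.smul_self q _).of_dvd hpq), sub_zero]
  · intro a b
    have h1 := (hmul a b).sub (((hmul a b).map
      (LinearMap.mulLeft W φ' - LinearMap.mulRight W φ')).map (q • LinearMap.id))
    have h2 : Dv (q * p) ((q * q) • (ad φ' Δ a * ad φ' Δ b)) := (Dv.smul_self _ _).of_dvd hpd
    convert h1.sub h2 using 1
    simp only [LinearMap.sub_apply, LinearMap.smul_apply, ad_apply, LinearMap.mulLeft_apply,
      LinearMap.mulRight_apply, LinearMap.id_apply, smul_sub, mul_sub, sub_mul, smul_mul_assoc,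
      mul_smul_comm, mul_smul, mul_assoc]
    abel
  · intro a
    set e := ad φ' Δ with hed
    have h1 : tmap k π (tmap k π π) (δ a - dR Δ (e a) - dR e (Δ a) + dL Δ (e a) + dL e (Δ a)) =
        0 := by
      have m1 := (mulMod_comul (k := k) (H := H)).dR.eq
      have m2 := (mulMod_comul (k := k) (H := H)).dL.eq
      have h2 := (hφ (π a)).eq
      rw [map_add, map_add, map_sub, map_sub, tmap_dR hΔ.red, tmap_dL hΔ.red, tmap_dR he,
        tmap_dL he, hψ, he, hΔ.red, dL_ad, dR_ad, ad_apply, ad_apply, map_sub,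
        map_sub, m1, m1, m2, m2, dL_comul, LinearMap.comp_apply, ← sub_eq_zero.mpr h2.symm]
      simp only [mul_add, mul_sub, add_mul, sub_mul]
      abel
    have h3 := ((hπ3.ker _).1 h1).smul_mul (q := q)
    have h4 : Dv (q * p) ((q * q) • (dR e (e a) - dL e (e a))) := (Dv.smul_self _ _).of_dvd hpd
    suffices h5 : dR (Δ - q • e) ((Δ - q • e) a) - dL (Δ - q • e) ((Δ - q • e) a) =
      q • (δ a - dR Δ (e a) - dR e (Δ a) + dL Δ (e a) + dL e (Δ a)) +
        (q * q) • (dR e (e a) - dL e (e a)) by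
      rw [h5]
      exact h3.add h4
    rw [sub_dR, sub_dL, LinearMap.sub_apply, LinearMap.smul_apply]
    simp only [map_sub, map_smul, smul_sub, smul_add, ← hδ, mul_smul]
    abel

end CoassocStep

/-! ### Completeness and the limit comultiplication -/

section Complete
variable {W : Type*} [CommRing W] {p : W} [hW : IsAdicComplete (Ideal.span {p}) W]

theorem smodEq_iff_dvd {n : ℕ} {x y : W} :
    x ≡ y [SMOD (Ideal.span {p} ^ n • ⊤ : Submodule W W)] ↔ p ^ n ∣ x - y := by
  rw [SModEq.sub_mem, smul_eq_mul, Ideal.mul_top, Ideal.span_singleton_pow,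
    Ideal.mem_span_singleton]

include hW in
theorem eq_zero_of_forall_Dv {M : Type*} [AddCommGroup M] [Module W M] [Module.Free W M]
    {x : M} (h : ∀ n, Dv (p ^ (n + 1)) x) : x = 0 := by
  let b := Module.Free.chooseBasis W M
  refine b.ext_elem fun i => ?_
  rw [map_zero, Finsupp.zero_apply]
  refine IsHausdorff.haus (I := Ideal.span {p}) inferInstance _ fun n => ?_
  rw [smodEq_iff_dvd, sub_zero]
  obtain ⟨m, hm⟩ := h n
  rw [hm, map_smul, Finsupp.smul_apply, smul_eq_mul, pow_succ, mul_assoc]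
  exact dvd_mul_right _ _

include hW in
/-- A finite free module over a `p`-adically complete ring is `p`-adically complete. -/
theorem exists_limit {M : Type*} [AddCommGroup M] [Module W M] [Module.Free W M]
    [Module.Finite W M] (m : ℕ → M) (h : ∀ n, Dv (p ^ (n + 1)) (m (n + 1) - m n)) :
    ∃ L : M, ∀ n, Dv (p ^ (n + 1)) (L - m n) := by
  let b := Module.Free.chooseBasis W M
  have hc : ∀ i n, p ^ (n + 1) ∣ b.repr (m (n + 1)) i - b.repr (m n) i := by
    intro i n
    obtain ⟨e, he⟩ := h n
    exact ⟨b.repr e i, by rw [← Finsupp.sub_apply, ← map_sub, he]; simp⟩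
  have hc' : ∀ i n j, p ^ (n + 1) ∣ b.repr (m (n + j)) i - b.repr (m n) i := by
    intro i n j
    induction j with
    | zero => simp
    | succ j ih =>
      have := dvd_add ((pow_dvd_pow p (by omega)).trans (hc i (n + j))) ih
      rwa [sub_add_sub_cancel] at this
  have hl : ∀ i, ∃ l, ∀ n, p ^ (n + 1) ∣ l - b.repr (m n) i := by
    intro i
    obtain ⟨l, hl⟩ := IsPrecomplete.prec (I := Ideal.span {p}) (M := W) inferInstance
      (f := fun n => b.repr (m n) i) (fun {a c} hac => by
        rw [smodEq_iff_dvd, ← neg_sub, dvd_neg]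
        obtain ⟨j, rfl⟩ := Nat.exists_eq_add_of_le hac
        exact (pow_dvd_pow p (by omega)).trans (hc' i a j))
    refine ⟨l, fun n => ?_⟩
    have h1 := hl (n + 1)
    rw [smodEq_iff_dvd, ← neg_sub, dvd_neg] at h1
    have := dvd_add h1 (hc i n)
    rwa [sub_add_sub_cancel] at this
  choose l hl using hl
  choose d hd using hl
  refine ⟨∑ i, l i • b i, fun n => ⟨∑ i, d i n • b i, ?_⟩⟩
  conv_lhs => rw [← b.sum_repr (m n)]
  rw [← Finset.sum_sub_distrib, Finset.smul_sum]
  refine Finset.sum_congr rfl fun i _ => ?_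
  rw [← sub_smul, hd, smul_smul]

include hW in
/-- An element of a finite `W`-algebra congruent to `1` modulo `p` is invertible. -/
theorem isUnit_of_Dv {E : Type*} [Ring E] [Algebra W E] [Module.Finite W E] {u : E}
    (h : Dv p (1 - u)) : IsUnit u := by
  obtain ⟨m, hm⟩ := h
  have hj := IsAdicComplete.le_jacobson_bot (Ideal.span {p} : Ideal W)
  have hu : ∀ x : E, x = u * x + p • (m * x) ∧ x = x * u + p • (x * m) := by
    intro x
    rw [← smul_mul_assoc, ← mul_smul_comm, ← hm, sub_mul, mul_sub]
    simp
  have key : ∀ f : E →ₗ[W] E, (∀ x, ∃ y, x = f x + p • y) → Function.Surjective f := by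
    intro f hf
    rw [← LinearMap.range_eq_top, eq_top_iff]
    refine Submodule.le_of_le_smul_of_le_jacobson_bot Module.Finite.fg_top hj fun x _ => ?_
    obtain ⟨y, hy⟩ := hf x
    rw [hy]
    exact Submodule.add_mem_sup ⟨x, rfl⟩
      (Submodule.smul_mem_smul (Ideal.mem_span_singleton_self p) trivial)
  obtain ⟨v, hv⟩ := key (LinearMap.mulLeft W u) (fun x => ⟨_, (hu x).1⟩) 1
  obtain ⟨v', hv'⟩ := key (LinearMap.mulRight W u) (fun x => ⟨_, (hu x).2⟩) 1
  simp only [LinearMap.mulLeft_apply, LinearMap.mulRight_apply] at hv hv'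
  have : v' = v := left_inv_eq_right_inv hv' hv
  exact ⟨⟨u, v, hv, this ▸ hv'⟩, rfl⟩

include hW in
/-- An idempotent congruent to `1` modulo `p` equals `1`. -/
theorem eq_one_of_idem {E : Type*} [Ring E] [Algebra W E] [Module.Free W E] {u : E}
    (h : Dv p (1 - u)) (hu : u * u = u) : u = 1 := by
  have h1 : (1 - u) * (1 - u) = 1 - u := by
    simp [sub_mul, mul_sub, hu]
  have h2 : ∀ n, Dv (p ^ (n + 1)) (1 - u) := by
    intro n
    induction n with
    | zero => simpa using h
    | succ n ih =>
      obtain ⟨a, ha⟩ := ih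
      obtain ⟨b, hb⟩ := h
      refine ⟨a * b, ?_⟩
      rw [← h1]
      nth_rewrite 1 [ha]
      rw [hb, smul_mul_smul_comm, pow_succ p (n + 1)]
  exact (sub_eq_zero.mp (eq_zero_of_forall_Dv h2)).symm

end Complete

theorem Dv.sub_mul_congr {W E : Type*} [CommRing W] [Ring E] [Algebra W E] {q : W}
    {x x' y y' z z' : E} (hz : Dv q (z - z')) (h : Dv q (z' - x' * y')) (hx : Dv q (x - x'))
    (hy : Dv q (y - y')) : Dv q (z - x * y) := by
  have := (hz.add h).sub (Dv.mul_sub_mul hx hy)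
  convert this using 1
  abel

section Limit
variable {W k : Type*} [CommRing W] [IsDomain W] [Field k] [Algebra W k]
  {A H : Type*} [Ring A] [Algebra W A] [Module.Free W A] [Ring H] [HopfAlgebra k H]
  [Algebra W H] [IsScalarTower W k H] [FiniteDimensional k H]

/-- Being a lift modulo `q` depends only on the map modulo `q`. -/
theorem IsLift.congr {p q : W} (hpq : p ∣ q) (hk : Function.Surjective (algebraMap W k))
    {π : A →ₐ[W] H} (hπ : IsRed p π) {Δ : A →ₗ[W] A ⊗[W] A} (hΔ : IsLift (k := k) π q Δ)
    (e : A →ₗ[W] A ⊗[W] A) : IsLift (k := k) π q (Δ - q • e) := by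
  have hπ2 := hπ.tmap hk hπ
  refine ⟨fun a => ?_, fun a b => ?_, fun a => ?_⟩
  · rw [LinearMap.sub_apply, LinearMap.smul_apply, map_sub, hΔ.red,
      (hπ2.ker _).2 ((Dv.smul_self q _).of_dvd hpq), sub_zero]
  · have h1 : ∀ a, Dv q ((Δ - q • e) a - Δ a) := fun a => ⟨-e a, by simp⟩
    exact Dv.sub_mul_congr (h1 _) (hΔ.mul a b) (h1 a) (h1 b)
  · suffices h5 : dR (Δ - q • e) ((Δ - q • e) a) - dL (Δ - q • e) ((Δ - q • e) a) =
      dR Δ (Δ a) - dL Δ (Δ a) + q • (dL Δ (e a) + dL e (Δ a - q • e a) - dR Δ (e a) -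
        dR e (Δ a - q • e a)) by
      rw [h5]
      exact (hΔ.coassoc a).add (Dv.smul_self q _)
    rw [sub_dR, sub_dL, LinearMap.sub_apply, LinearMap.smul_apply]
    simp only [map_sub, map_smul, smul_sub, smul_add]
    abel

/-- A lift modulo `q` can be corrected modulo `q` to a lift modulo `q * p`. -/
theorem lift_step {p q : W} (hq : q ≠ 0) (hpq : p ∣ q)
    (hk : Function.Surjective (algebraMap W k)) {ι : Type*} [Fintype ι] (x y : ι → A)
    (hxy : ∑ j, x j * y j = 1) (hsep : ∀ a, ∑ j, (a * x j) ⊗ₜ[W] y j = ∑ j, x j ⊗ₜ (y j * a))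
    (ht : LinearMap.trace k H (S2 k H) ≠ 0) {Λ : H}
    (hΛ : ∀ a : H, a * Λ = counit (R := k) a • Λ) (hΛ1 : counit (R := k) Λ = 1)
    (π : A →ₐ[W] H) (hπ : IsRed p π) (Δ : A →ₗ[W] A ⊗[W] A)
    (hΔ : IsLift (k := k) π q Δ) :
    ∃ e : A →ₗ[W] A ⊗[W] A, IsLift (k := k) π (q * p) (Δ - q • e) := by
  obtain ⟨s, hs⟩ := mul_step hq hpq x y hxy hsep (tmap k π π) (hπ.tmap hk hπ) Δ hΔ.mul
    (by rw [hΔ.red]; simp)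
  have hs' : Δ + q • s = Δ - q • (-s) := by simp
  rw [hs'] at hs
  obtain ⟨e, he⟩ := coassoc_step hq hpq hk x y hxy hsep ht hΛ hΛ1 π hπ _
    (hΔ.congr hpq hk hπ (-s)) hs
  refine ⟨-s + e, ?_⟩
  rw [smul_add, ← sub_sub]
  exact he

/-- The comultiplication of `H` lifts to a multiplicative, unital, coassociative map on `A`. -/
theorem exists_comul {p : W} [hW : IsAdicComplete (Ideal.span {p}) W] (hp : p ≠ 0)
    [Module.Finite W A]
    (hk : Function.Surjective (algebraMap W k)) {ι : Type*} [Fintype ι] (x y : ι → A)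
    (hxy : ∑ j, x j * y j = 1) (hsep : ∀ a, ∑ j, (a * x j) ⊗ₜ[W] y j = ∑ j, x j ⊗ₜ (y j * a))
    (ht : LinearMap.trace k H (S2 k H) ≠ 0) {Λ : H}
    (hΛ : ∀ a : H, a * Λ = counit (R := k) a • Λ) (hΛ1 : counit (R := k) Λ = 1)
    (π : A →ₐ[W] H) (hπ : IsRed p π) :
    ∃ Δ : A →ₗ[W] A ⊗[W] A, (∀ a, tmap k π π (Δ a) = comul (R := k) (π a)) ∧
      (∀ a b, Δ (a * b) = Δ a * Δ b) ∧ Δ 1 = 1 ∧ ∀ a, dL Δ (Δ a) = dR Δ (Δ a) := by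
  have hπ2 := hπ.tmap hk hπ
  have hπ3 := hπ.tmap hk hπ2
  have hstep : ∀ (n : ℕ) (Δ : {Δ : A →ₗ[W] A ⊗[W] A // IsLift (k := k) π (p ^ (n + 1)) Δ}),
      ∃ Δ' : {Δ : A →ₗ[W] A ⊗[W] A // IsLift (k := k) π (p ^ (n + 1 + 1)) Δ},
        Dv (p ^ (n + 1)) (Δ'.1 - Δ.1) := by
    rintro n ⟨Δ, hΔ⟩
    obtain ⟨e, he⟩ := lift_step (pow_ne_zero (n + 1) hp) (dvd_pow_self p n.succ_ne_zero) hk x y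
      hxy hsep ht hΛ hΛ1 π hπ Δ hΔ
    exact ⟨⟨_, pow_succ p (n + 1) ▸ he⟩, -e, by simp⟩
  obtain ⟨Δ0, hΔ0⟩ := Module.projective_lifting_property (tmap k π π).toLinearMap
    ((comul (R := k) (A := H)).restrictScalars W ∘ₗ π.toLinearMap) hπ2.surj
  have hred0 : ∀ a, tmap k π π (Δ0 a) = comul (R := k) (π a) := LinearMap.congr_fun hΔ0
  have h0 : IsLift (k := k) π (p ^ (0 + 1)) Δ0 := by
    rw [zero_add, pow_one]
    refine ⟨hred0, fun a b => (hπ2.ker _).1 ?_, fun a => (hπ3.ker _).1 ?_⟩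
    · simp [hred0]
    · rw [map_sub, tmap_dR hred0, tmap_dL hred0, hred0, dL_comul, sub_self]
  choose g hg using hstep
  let seq : ∀ n : ℕ, {Δ : A →ₗ[W] A ⊗[W] A // IsLift (k := k) π (p ^ (n + 1)) Δ} :=
    fun n => Nat.rec ⟨Δ0, h0⟩ (fun n Δ => g n Δ) n
  obtain ⟨Δ, hΔ⟩ := exists_limit (p := p) (fun n => (seq n).1) (fun n => hg n (seq n))
  have hlift : ∀ n, IsLift (k := k) π (p ^ (n + 1)) Δ := by
    intro n
    obtain ⟨e, he⟩ := hΔ n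
    have := (seq n).2.congr (dvd_pow_self p n.succ_ne_zero) hk hπ (-e)
    rwa [smul_neg, sub_neg_eq_add, ← he, add_sub_cancel] at this
  have hmul : ∀ a b, Δ (a * b) = Δ a * Δ b := fun a b =>
    sub_eq_zero.mp (eq_zero_of_forall_Dv fun n => (hlift n).mul a b)
  refine ⟨Δ, (hlift 0).red, hmul, ?_, fun a => ?_⟩
  · refine eq_one_of_idem (p := p) ((hπ2.ker _).1 ?_) ?_
    · rw [map_sub, (hlift 0).red]; simp
    · rw [← hmul, mul_one]
  · exact (sub_eq_zero.mp (eq_zero_of_forall_Dv fun n => (hlift n).coassoc a)).symm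

end Limit

/-! ### The lifted counit -/

section EvR
variable {R A : Type*} [CommRing R] [Ring A] [Algebra R A]

/-- Evaluation of a functional on the second tensor factor. -/
noncomputable def evR (f : A →ₗ[R] R) : A ⊗[R] A →ₗ[R] A :=
  (TensorProduct.rid R A).toLinearMap ∘ₗ f.lTensor A

@[simp] theorem evR_tmul (f : A →ₗ[R] R) (x y : A) : evR f (x ⊗ₜ y) = f y • x := by simp [evR]

theorem apply_evR (f g : A →ₗ[R] R) (t : A ⊗[R] A) : f (evR g t) = g (ev f t) := by
  induction t with
  | zero => simp
  | add x y hx hy => simp only [map_add, hx, hy]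
  | tmul x y => simp [mul_comm]

variable {Δ : A →ₗ[R] A ⊗[R] A} (hΔ : ∀ a, dL Δ (Δ a) = dR Δ (Δ a))
include hΔ

/-- Functionals form an algebra under convolution, acting on `A` by `f ↦ (a ↦ f(a₁) a₂)`. -/
theorem ev_comp (f g : A →ₗ[R] R) (a : A) :
    ev (g ∘ₗ ev f ∘ₗ Δ) (Δ a) = ev g (Δ (ev f (Δ a))) := by
  have h1 : ∀ t : A ⊗[R] A, ev (g ∘ₗ ev f ∘ₗ Δ) t = ev g (ev f (dL Δ t)) := by
    intro t
    induction t with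
    | zero => simp
    | add x y hx hy => simp only [map_add, hx, hy]
    | tmul x y =>
      simp only [dL, LinearMap.comp_apply, LinearMap.rTensor_tmul, LinearEquiv.coe_coe, ev_tmul]
      induction (Δ x) with
      | zero => simp
      | add x y hx hy => simp only [map_add, hx, hy, TensorProduct.add_tmul, add_smul]
      | tmul u v => simp [mul_smul]
  have h2 : ∀ t : A ⊗[R] A, Δ (ev f t) = ev f (dR Δ t) := by
    intro t
    induction t with
    | zero => simp
    | add x y hx hy => simp only [map_add, hx, hy]
    | tmul x y => simp [dR]
  rw [h1, h2, hΔ]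

/-- Functionals form an algebra under convolution, acting on `A` by `f ↦ (a ↦ a₁ f(a₂))`. -/
theorem evR_comp (f g : A →ₗ[R] R) (a : A) :
    evR (f ∘ₗ evR g ∘ₗ Δ) (Δ a) = evR f (Δ (evR g (Δ a))) := by
  let B : A ⊗[R] (A ⊗[R] A) →ₗ[R] A :=
    (TensorProduct.rid R A).toLinearMap ∘ₗ (f ∘ₗ evR g).lTensor A
  have h1 : ∀ t : A ⊗[R] A, evR (f ∘ₗ evR g ∘ₗ Δ) t = B (dR Δ t) := by
    intro t
    induction t with
    | zero => simp
    | add x y hx hy => simp only [map_add, hx, hy]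
    | tmul x y => simp [dR, B]
  have h2 : ∀ t : A ⊗[R] A, evR f (Δ (evR g t)) = B (dL Δ t) := by
    intro t
    induction t with
    | zero => simp
    | add x y hx hy => simp only [map_add, hx, hy]
    | tmul x y =>
      simp only [dL, LinearMap.comp_apply, LinearMap.rTensor_tmul, LinearEquiv.coe_coe, evR_tmul,
        map_smul]
      induction (Δ x) with
      | zero => simp
      | add x y hx hy => simp only [map_add, hx, hy, TensorProduct.add_tmul, smul_add]
      | tmul u v => simp [B, mul_smul]
  rw [h1, h2, hΔ]

end EvR

section Counit
variable {W k : Type*} [CommRing W] [Field k] [Algebra W k]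
  {A H : Type*} [Ring A] [Algebra W A] [Module.Free W A] [Module.Finite W A] [Ring H]
  [HopfAlgebra k H] [Algebra W H] [IsScalarTower W k H]

theorem map_ev (π : A →ₐ[W] H) (f : A →ₗ[W] W) (F : H →ₗ[k] k)
    (h : ∀ a, algebraMap W k (f a) = F (π a)) (t : A ⊗[W] A) :
    π (ev f t) = ev F (tmap k π π t) := by
  induction t with
  | zero => simp
  | add x y hx hy => simp only [map_add, hx, hy]
  | tmul x y => simp [← h]

theorem map_evR (π : A →ₐ[W] H) (f : A →ₗ[W] W) (F : H →ₗ[k] k)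
    (h : ∀ a, algebraMap W k (f a) = F (π a)) (t : A ⊗[W] A) :
    π (evR f t) = evR F (tmap k π π t) := by
  induction t with
  | zero => simp
  | add x y hx hy => simp only [map_add, hx, hy]
  | tmul x y => simp [← h]

/-- A lift of the comultiplication has a counit. Any linear lift `ε` of the counit of `H` makes
`a ↦ a₁ ε(a₂)` and `a ↦ ε(a₁) a₂` invertible, and composing `ε` with their inverses gives
one-sided counits, which agree. -/
theorem exists_counit {p : W} [hW : IsAdicComplete (Ideal.span {p}) W]
    (hk : Function.Surjective (algebraMap W k)) (π : A →ₐ[W] H) (hπ : IsRed p π)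
    (Δ : A →ₗ[W] A ⊗[W] A) (hred : ∀ a, tmap k π π (Δ a) = comul (R := k) (π a))
    (hΔ : ∀ a, dL Δ (Δ a) = dR Δ (Δ a)) :
    ∃ e : A →ₗ[W] W, (∀ a, algebraMap W k (e a) = counit (R := k) (π a)) ∧
      (∀ a, ev e (Δ a) = a) ∧ ∀ a, evR e (Δ a) = a := by
  obtain ⟨ε, hε'⟩ := Module.projective_lifting_property (Algebra.linearMap W k)
    ((counit (R := k) (A := H)).restrictScalars W ∘ₗ π.toLinearMap) hk
  have hε : ∀ a, algebraMap W k (ε a) = counit (R := k) (π a) := LinearMap.congr_fun hε'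
  have hr : ∀ a, π (evR ε (Δ a)) = π a := by
    intro a
    rw [map_evR π ε _ hε, hred]
    simp [evR]
  have hl : ∀ a, π (ev ε (Δ a)) = π a := by
    intro a
    rw [map_ev π ε _ hε, hred]
    simp [ev]
  have hunit : ∀ f : Module.End W A, (∀ a, π (f a) = π a) → IsUnit f := by
    intro f hf
    refine isUnit_of_Dv (p := p) ?_
    have : ∀ a, ∃ m, a - f a = p • m := fun a => (hπ.ker _).1 (by rw [map_sub, hf, sub_self])
    let b := Module.Free.chooseBasis W A
    choose m hm using this
    refine ⟨b.constr W fun i => m (b i), b.ext fun i => ?_⟩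
    simp [hm]
  obtain ⟨r, hrr⟩ := hunit (evR ε ∘ₗ Δ) hr
  obtain ⟨l, hll⟩ := hunit (ev ε ∘ₗ Δ) hl
  have hr1 : ∀ a, (r⁻¹.val : Module.End W A) (evR ε (Δ a)) = a := fun a => by
    have := LinearMap.congr_fun r.inv_mul a
    rw [hrr] at this; exact this
  have hr2 : ∀ a, (evR ε (Δ ((r⁻¹.val : Module.End W A) a))) = a := fun a => by
    have := LinearMap.congr_fun r.mul_inv a
    rw [hrr] at this; exact this
  have hl1 : ∀ a, (l⁻¹.val : Module.End W A) (ev ε (Δ a)) = a := fun a => by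
    have := LinearMap.congr_fun l.inv_mul a
    rw [hll] at this; exact this
  let e : A →ₗ[W] W := ε ∘ₗ r⁻¹.val
  let e' : A →ₗ[W] W := ε ∘ₗ l⁻¹.val
  have he : ε ∘ₗ ev e ∘ₗ Δ = ε := LinearMap.ext fun a => by
    simp only [LinearMap.comp_apply]
    rw [← apply_evR]
    simp only [e, LinearMap.comp_apply, hr1]
  have he' : ε ∘ₗ evR e' ∘ₗ Δ = ε := LinearMap.ext fun a => by
    simp only [LinearMap.comp_apply]
    rw [apply_evR]
    simp only [e', LinearMap.comp_apply, hl1]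
  have h1 : ∀ a, ev e (Δ a) = a := fun a => by
    have := ev_comp hΔ e ε a
    rw [he] at this
    rw [← hl1 (ev e (Δ a)), ← this, hl1]
  have h2 : ∀ a, evR e' (Δ a) = a := fun a => by
    have := evR_comp hΔ ε e' a
    rw [he'] at this
    rw [← hr1 (evR e' (Δ a)), ← this, hr1]
  have hee : e' = e := LinearMap.ext fun a => by
    have := apply_evR e e' (Δ a)
    rw [h1, h2] at this
    exact this.symm
  refine ⟨e, fun a => ?_, h1, hee ▸ h2⟩
  rw [show e a = ε ((r⁻¹.val : Module.End W A) a) from rfl, hε, ← hr, hr2]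

end Counit

/-! ### Multiplicativity of the counit, the antipode, and descent -/

open WithConv

theorem Dv.linearMap {W M N : Type*} [CommRing W] [AddCommGroup M] [Module W M] [Module.Free W M]
    [AddCommGroup N] [Module W N] {q : W} (f : M →ₗ[W] N) (h : ∀ m, Dv q (f m)) : Dv q f := by
  let b := Module.Free.chooseBasis W M
  choose m hm using h
  exact ⟨b.constr W fun i => m (b i), b.ext fun i => by simp [hm]⟩

section CounitMul
variable {W k : Type*} [CommRing W] [Field k] [Algebra W k]
  {A H : Type*} [Ring A] [Algebra W A] [Module.Free W A] [Module.Finite W A] [Coalgebra W A]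
  [Ring H] [HopfAlgebra k H] [Algebra W H] [IsScalarTower W k H]

/-- The counit of a multiplicative coalgebra structure on `A` lifting that of `H` is
multiplicative: `a ⊗ b ↦ ε(ab)` is a convolution idempotent congruent to `1`. -/
theorem counit_mul_of_lift {p : W} [hW : IsAdicComplete (Ideal.span {p}) W]
    (hp : ∀ w : W, algebraMap W k w = 0 → Dv p w) (π : A →ₐ[W] H)
    (hε : ∀ a, algebraMap W k (counit (R := W) a) = counit (R := k) (π a))
    (hmul : ∀ a b : A, comul (R := W) (a * b) = comul a * comul b) (a b : A) :
    counit (R := W) (a * b) = counit (R := W) a * counit (R := W) b := by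
  let g : WithConv (A ⊗[W] A →ₗ[W] W) := toConv (counit ∘ₗ LinearMap.mul' W A)
  haveI : Module.Free W (WithConv (A ⊗[W] A →ₗ[W] W)) :=
    Module.Free.of_equiv (WithConv.linearEquiv W (A ⊗[W] A →ₗ[W] W)).symm
  have h1 : g = 1 := by
    refine eq_one_of_idem (p := p) ?_ ?_
    · have : Dv p ((1 - g).ofConv) := by
        refine Dv.linearMap _ (Dv.tmul_induction _ fun a b => hp _ ?_)
        simp [g, hε, mul_comm]
      obtain ⟨m, hm⟩ := this
      exact ⟨toConv m, WithConv.ofConv_injective hm⟩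
    · refine WithConv.ofConv_injective (TensorProduct.ext' fun a b => ?_)
      have h2 : ∀ s t : A ⊗[W] A, LinearMap.mul' W W (TensorProduct.map g.ofConv g.ofConv
          (TensorProduct.tensorTensorTensorComm W A A A A (s ⊗ₜ t))) =
          LinearMap.mul' W W (TensorProduct.map counit counit (s * t)) := by
        intro s t
        induction s with
        | zero => simp
        | add x y hx hy => simp only [map_add, hx, hy, TensorProduct.add_tmul, add_mul]
        | tmul u v =>
          induction t with
          | zero => simp
          | add x y hx hy => simp only [map_add, hx, hy, TensorProduct.tmul_add, mul_add]
          | tmul x y => simp [g]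
      have h3 : ∀ x : A, LinearMap.mul' W W (TensorProduct.map counit counit (comul (R := W) x)) =
          counit (R := W) x := by
        intro x
        have : ∀ t : A ⊗[W] A, LinearMap.mul' W W (TensorProduct.map counit counit t) =
            counit (R := W) (TensorProduct.lid W A (counit.rTensor A t)) := by
          intro t
          induction t with
          | zero => simp
          | add x y hx hy => simp only [map_add, hx, hy]
          | tmul x y => simp
        rw [this, rTensor_counit_comul]; simp
      have h4 := h2 (comul a) (comul b)
      rw [← hmul, h3] at h4
      rw [show (g * g).ofConv (a ⊗ₜ b) = LinearMap.mul' W W (TensorProduct.map g.ofConv g.ofConv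
        (comul (R := W) (a ⊗ₜ[W] b))) from rfl]
      rw [TensorProduct.comul_tmul]
      exact h4
  have := LinearMap.congr_fun (congrArg WithConv.ofConv h1) (a ⊗ₜ b)
  simpa [g, mul_comm] using this

end CounitMul

section Antipode
variable {W k : Type*} [CommRing W] [Field k] [Algebra W k]
  {A H : Type*} [Ring A] [Bialgebra W A] [Module.Free W A] [Module.Finite W A]
  [Ring H] [HopfAlgebra k H] [Algebra W H] [IsScalarTower W k H]

theorem tmap_mul' (π : A →ₐ[W] H) (f g : A →ₗ[W] A) (F G : H →ₗ[k] H)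
    (hf : ∀ a, π (f a) = F (π a)) (hg : ∀ a, π (g a) = G (π a)) (t : A ⊗[W] A) :
    π (LinearMap.mul' W A (TensorProduct.map f g t)) =
      LinearMap.mul' k H (TensorProduct.map F G (tmap k π π t)) := by
  induction t with
  | zero => simp
  | add x y hx hy => simp only [map_add, hx, hy]
  | tmul x y => simp [hf, hg]

/-- A bialgebra lifting a Hopf algebra is a Hopf algebra. -/
theorem exists_antipode {p : W} [hW : IsAdicComplete (Ideal.span {p}) W]
    (π : A →ₐ[W] H) (hπ : IsRed p π)
    (hε : ∀ a, algebraMap W k (counit (R := W) a) = counit (R := k) (π a))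
    (hred : ∀ a, tmap k π π (comul (R := W) a) = comul (R := k) (π a)) :
    ∃ S : A →ₗ[W] A, toConv S * toConv LinearMap.id = 1 ∧ toConv LinearMap.id * toConv S = 1 := by
  obtain ⟨S, hS'⟩ := Module.projective_lifting_property π.toLinearMap
    ((antipode k (A := H)).restrictScalars W ∘ₗ π.toLinearMap) hπ.surj
  have hS : ∀ a, π (S a) = antipode k (π a) := LinearMap.congr_fun hS'
  haveI : Module.Finite W (WithConv (A →ₗ[W] A)) :=
    Module.Finite.equiv (WithConv.linearEquiv W (A →ₗ[W] A)).symm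
  have hunit : ∀ u : WithConv (A →ₗ[W] A),
      (∀ a, π (u.ofConv a) = algebraMap k H (counit (R := k) (π a))) → IsUnit u := by
    intro u hu
    refine isUnit_of_Dv (p := p) ?_
    have : Dv p ((1 - u).ofConv) := by
      refine Dv.linearMap _ fun a => (hπ.ker _).1 ?_
      rw [WithConv.ofConv_sub, LinearMap.sub_apply, map_sub, hu, ← hε,
        ← IsScalarTower.algebraMap_apply, LinearMap.convOne_def]
      simp
    obtain ⟨m, hm⟩ := this
    exact ⟨toConv m, WithConv.ofConv_injective hm⟩
  obtain ⟨u, hu⟩ := hunit (toConv LinearMap.id * toConv S) (fun a => by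
    rw [LinearMap.convMul_apply, ofConv_toConv, ofConv_toConv,
      tmap_mul' π _ _ LinearMap.id (antipode k) (fun _ => rfl) hS, hred]
    exact mul_antipode_lTensor_comul_apply (π a))
  obtain ⟨v, hv⟩ := hunit (toConv S * toConv LinearMap.id) (fun a => by
    rw [LinearMap.convMul_apply, ofConv_toConv, ofConv_toConv,
      tmap_mul' π _ _ (antipode k) LinearMap.id hS (fun _ => rfl), hred]
    exact mul_antipode_rTensor_comul_apply (π a))
  have h1 : toConv LinearMap.id * (toConv S * (u⁻¹).val) = 1 := by
    rw [← mul_assoc, ← hu, u.mul_inv]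
  have h2 : ((v⁻¹).val * toConv S) * toConv LinearMap.id = 1 := by
    rw [mul_assoc, ← hv, v.inv_mul]
  have h3 := left_inv_eq_right_inv h2 h1
  exact ⟨(toConv S * (u⁻¹).val).ofConv, by rw [toConv_ofConv, ← h3, h2], by
    rw [toConv_ofConv, h1]⟩

end Antipode

section Integral
variable {R A : Type*} [CommRing R] [Ring A] [Bialgebra R A]

/-- A separability idempotent `∑ xⱼ ⊗ yⱼ` of a bialgebra gives the normalised left integral
`∑ ε(yⱼ) xⱼ`. -/
theorem exists_integral {ι : Type*} [Fintype ι] (x y : ι → A) (hxy : ∑ j, x j * y j = 1)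
    (hsep : ∀ a, ∑ j, (a * x j) ⊗ₜ[R] y j = ∑ j, x j ⊗ₜ (y j * a)) :
    ∃ Λ : A, (∀ a, a * Λ = counit (R := R) a • Λ) ∧ counit (R := R) Λ = 1 := by
  refine ⟨∑ j, counit (R := R) (y j) • x j, fun a => ?_, ?_⟩
  · have := congrArg (evR (counit (R := R))) (hsep a)
    simp only [map_sum, evR_tmul, Bialgebra.counit_mul] at this
    rw [Finset.mul_sum, Finset.smul_sum]
    simp only [mul_smul_comm, this]
    exact Finset.sum_congr rfl fun j _ => by rw [smul_smul, mul_comm]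
  · have := congrArg (counit (R := R)) hxy
    simp only [map_sum, Bialgebra.counit_mul, Bialgebra.counit_one] at this
    rw [map_sum, ← this]
    exact Finset.sum_congr rfl fun j _ => by rw [map_smul, smul_eq_mul, mul_comm]

end Integral

section Descent
variable {W k : Type*} [CommRing W] [IsDomain W] [CharZero W] [Field k] [Algebra W k]
  {A H : Type*} [Ring A] [HopfAlgebra W A] [Module.Free W A] [Module.Finite W A]
  [Ring H] [HopfAlgebra k H] [Algebra W H] [IsScalarTower W k H] [FiniteDimensional k H]

/-- The reduction `π` commutes with the antipodes, both composites being
convolution inverses of `π`. -/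
theorem map_antipode (π : A →ₐ[W] H)
    (hε : ∀ a, algebraMap W k (counit (R := W) a) = counit (R := k) (π a))
    (hred : ∀ a, tmap k π π (comul (R := W) a) = comul (R := k) (π a)) (a : A) :
    π (antipode W a) = antipode k (π a) := by
  let F : WithConv (A →ₗ[W] H) := toConv π.toLinearMap
  let G : WithConv (A →ₗ[W] H) := toConv (π.toLinearMap ∘ₗ antipode W)
  let K : WithConv (A →ₗ[W] H) := toConv ((antipode k (A := H)).restrictScalars W ∘ₗ π.toLinearMap)
  have h1 : G * F = 1 := by
    refine WithConv.ofConv_injective (LinearMap.ext fun a => ?_)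
    rw [LinearMap.convMul_apply]
    have : ∀ t : A ⊗[W] A, LinearMap.mul' W H (TensorProduct.map G.ofConv F.ofConv t) =
        π (LinearMap.mul' W A ((antipode W).rTensor A t)) := by
      intro t
      induction t with
      | zero => simp
      | add x y hx hy => simp only [map_add, hx, hy]
      | tmul x y => simp [F, G]
    rw [this, mul_antipode_rTensor_comul_apply]
    simp [LinearMap.convOne_def]
  have h2 : F * K = 1 := by
    refine WithConv.ofConv_injective (LinearMap.ext fun a => ?_)
    rw [LinearMap.convMul_apply]
    have : ∀ t : A ⊗[W] A, LinearMap.mul' W H (TensorProduct.map F.ofConv K.ofConv t) =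
        LinearMap.mul' k H ((antipode k).lTensor H (tmap k π π t)) := by
      intro t
      induction t with
      | zero => simp
      | add x y hx hy => simp only [map_add, hx, hy]
      | tmul x y => simp [F, K]
    rw [this, hred, mul_antipode_lTensor_comul_apply, ← hε, ← IsScalarTower.algebraMap_apply]
    simp [LinearMap.convOne_def]
  exact LinearMap.congr_fun (congrArg WithConv.ofConv (left_inv_eq_right_inv h1 h2)) a

omit [IsDomain W] [CharZero W] in
/-- Traces are compatible with reduction modulo `p`. -/
theorem algebraMap_trace {p : W} (hk : Function.Surjective (algebraMap W k))
    (hp : algebraMap W k p = 0) (π : A →ₐ[W] H) (hπ : IsRed p π) (f : A →ₗ[W] A) (F : H →ₗ[k] H)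
    (h : ∀ a, π (f a) = F (π a)) :
    algebraMap W k (LinearMap.trace W A f) = LinearMap.trace k H F := by
  classical
  let b := Module.Free.chooseBasis W A
  have hli : LinearIndependent k fun i => π (b i) := by
    rw [Fintype.linearIndependent_iff]
    intro c hc i
    choose w hw using fun i => hk (c i)
    have h1 : π (∑ i, w i • b i) = 0 := by
      rw [map_sum, ← hc]
      refine Finset.sum_congr rfl fun i _ => ?_
      rw [map_smul, ← hw, algebraMap_smul]
    obtain ⟨m, hm⟩ := (hπ.ker _).1 h1
    have h2 := congrArg (fun a => b.repr a i) hm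
    simp only [b.repr_sum_self, map_smul, Finsupp.smul_apply, smul_eq_mul] at h2
    rw [← hw, h2, map_mul, hp, zero_mul]
  have hsp : ⊤ ≤ Submodule.span k (Set.range fun i => π (b i)) := by
    intro x _
    obtain ⟨a, rfl⟩ := hπ.surj x
    rw [← b.sum_repr a, map_sum]
    refine Submodule.sum_mem _ fun i _ => ?_
    rw [map_smul, ← algebraMap_smul k]
    exact Submodule.smul_mem _ _ (Submodule.subset_span ⟨i, rfl⟩)
  let B := Module.Basis.mk hli hsp
  have hB : ∀ i, B i = π (b i) := fun i => by simp [B]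
  have hc : ∀ a i, B.coord i (π a) = algebraMap W k (b.coord i a) := by
    intro a i
    conv_lhs => rw [← b.sum_repr a, map_sum, map_sum]
    have h1 : ∀ j, B.coord i (π (b.repr a j • b j)) =
        algebraMap W k (b.repr a j) * if j = i then 1 else 0 := fun j => by
      rw [map_smul, ← algebraMap_smul k, ← hB, map_smul, B.coord_apply, B.repr_self,
        Finsupp.single_apply, smul_eq_mul]
    rw [Finset.sum_congr rfl fun j _ => h1 j]
    simp
  rw [trace_eq_sum_coord b, trace_eq_sum_coord B, map_sum]
  refine Finset.sum_congr rfl fun i _ => ?_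
  rw [hB, ← h, hc]

/-- If a Hopf algebra lifts to characteristic zero, the involutivity of the antipode descends. -/
theorem descent {p : W} (hk : Function.Surjective (algebraMap W k))
    (hp : algebraMap W k p = 0) (π : A →ₐ[W] H) (hπ : IsRed p π)
    {ι : Type*} [Fintype ι] (x y : ι → A)
    (hxy : ∑ j, x j * y j = 1) (hsep : ∀ a, ∑ j, (a * x j) ⊗ₜ[W] y j = ∑ j, x j ⊗ₜ (y j * a))
    (hε : ∀ a, algebraMap W k (counit (R := W) a) = counit (R := k) (π a))
    (hred : ∀ a, tmap k π π (comul (R := W) a) = comul (R := k) (π a))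
    (ht : LinearMap.trace k H (S2 k H) ≠ 0) : S2 k H = 1 := by
  have hS := map_antipode π hε hred
  have hS2 : ∀ a, π (S2 W A a) = S2 k H (π a) := fun a => by
    simp only [S2, LinearMap.comp_apply, hS]
  have htW : LinearMap.trace W A (S2 W A) ≠ 0 := by
    intro h0
    apply ht
    rw [← algebraMap_trace hk hp π hπ _ _ hS2, h0, map_zero]
  have h1 : S2 W A = 1 := by
    obtain ⟨Λ, hΛ, hΛ1⟩ := exists_integral x y hxy hsep
    exact S2_eq_id_of_charZero htW hΛ hΛ1
  refine LinearMap.ext fun h => ?_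
  obtain ⟨a, rfl⟩ := hπ.surj h
  rw [← hS2, h1]; rfl

end Descent

/-! ### Lifting to Witt vectors -/

section Lift
variable {W k : Type*} [CommRing W] [IsDomain W] [CharZero W] [Field k] [Algebra W k]
  {A H : Type*} [Ring A] [Algebra W A] [Module.Free W A] [Module.Finite W A]
  [Ring H] [HopfAlgebra k H] [Algebra W H] [IsScalarTower W k H] [FiniteDimensional k H]

/-- Let `W` be a `p`-adically complete domain of characteristic zero with `p ≠ 0`, whose residue
ring modulo `p` is the field `k`. If the algebra underlying `H` lifts to a finite free separable
algebra `A` over `W`, then the Hopf structure lifts to `A` as well, whence `S² = 1`. -/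
theorem S2_eq_one_of_lift {p : W} [hW : IsAdicComplete (Ideal.span {p}) W] (hp : p ≠ 0)
    (hk : Function.Surjective (algebraMap W k))
    (hker : ∀ w, algebraMap W k w = 0 ↔ Dv p w) {ι : Type*} [Fintype ι] (x y : ι → A)
    (hxy : ∑ j, x j * y j = 1) (hsep : ∀ a, ∑ j, (a * x j) ⊗ₜ[W] y j = ∑ j, x j ⊗ₜ (y j * a))
    (ht : LinearMap.trace k H (S2 k H) ≠ 0) (π : A →ₐ[W] H) (hπ : IsRed p π) : S2 k H = 1 := by
  obtain ⟨Λ, hΛ, hΛ1⟩ := exists_integral (R := k) (A := H) (fun j => π (x j)) (fun j => π (y j))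
    (by rw [← map_one π, ← hxy, map_sum]; simp) (fun h => by
      obtain ⟨a, rfl⟩ := hπ.surj h
      simpa using congrArg (tmap k π π) (hsep a))
  obtain ⟨Δ, hred, hmul, hone, hcoassoc⟩ :=
    exists_comul (k := k) hp hk x y hxy hsep ht hΛ hΛ1 π hπ
  obtain ⟨e, he, hel, her⟩ := exists_counit (k := k) hk π hπ Δ hred hcoassoc
  let _ : Coalgebra W A :=
    { comul := Δ
      counit := e
      coassoc := LinearMap.ext hcoassoc
      rTensor_counit_comp_comul := LinearMap.ext fun a => (TensorProduct.lid W A).injective <|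
        (hel a).trans (by simp)
      lTensor_counit_comp_comul := LinearMap.ext fun a => (TensorProduct.rid W A).injective <|
        (her a).trans (by simp) }
  have hcone : counit (R := W) (1 : A) = 1 := by
    refine eq_one_of_idem (p := p) ((hker _).1 ?_) ?_
    · rw [map_sub, map_one, show algebraMap W k (counit (R := W) (1 : A)) = _ from he 1]
      simp
    · have := congrArg e (hel 1)
      rw [hone, Algebra.TensorProduct.one_def] at this
      simp only [ev, LinearMap.comp_apply, LinearMap.rTensor_tmul, LinearEquiv.coe_coe,
        TensorProduct.lid_tmul, map_smul, smul_eq_mul] at this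
      exact this
  let _ : Bialgebra W A := Bialgebra.mk' W A hcone
    (fun {a b} => counit_mul_of_lift (k := k) (fun w => (hker w).1) π he hmul a b)
    hone (fun {a b} => hmul a b)
  obtain ⟨S, hS1, hS2⟩ := exists_antipode (k := k) π hπ he hred
  let _ : HopfAlgebra W A := HopfAlgebra.ofConvInverse S hS1 hS2
  exact descent (k := k) hk ((hker p).2 ⟨1, by simp⟩) π hπ x y hxy hsep he hred ht

end Lift

section Split
variable {n : ℕ} (d : Fin n → ℕ)

/-- The split semisimple algebra with matrix blocks of sizes `d i`. -/
abbrev MatProd (R : Type*) := ∀ i : Fin n, Matrix (Fin (d i)) (Fin (d i)) R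

variable (R : Type*) [CommRing R] [∀ i, NeZero (d i)]

/-- First legs `E_{j0}` of the standard separability idempotent of a product of matrix algebras. -/
def sepX (j : Σ i, Fin (d i)) : MatProd d R := Pi.single j.1 (Matrix.single j.2 0 1)

/-- Second legs `E_{0j}` of the standard separability idempotent. -/
def sepY (j : Σ i, Fin (d i)) : MatProd d R := Pi.single j.1 (Matrix.single 0 j.2 1)

theorem sep_mul : ∑ j, sepX d R j * sepY d R j = 1 := by
  rw [Fintype.sum_sigma]
  simp only [sepX, sepY, ← Pi.single_mul, Matrix.single_mul_single_same, mul_one]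
  ext i : 1
  rw [Finset.sum_apply, Finset.sum_eq_single i]
  · simp only [Finset.sum_apply, Pi.single_eq_same, Pi.one_apply]
    exact Matrix.sum_single_one
  · intro j _ hj
    simp [Finset.sum_apply, Pi.single_eq_of_ne hj.symm]
  · simp

theorem sep_comm (a : MatProd d R) : ∑ j, (a * sepX d R j) ⊗ₜ[R] sepY d R j =
    ∑ j, sepX d R j ⊗ₜ (sepY d R j * a) := by
  have h1 : ∀ i j, a * sepX d R ⟨i, j⟩ = ∑ l, a i l j • sepX d R ⟨i, l⟩ := by
    intro i j
    ext i' r c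
    rcases eq_or_ne i' i with rfl | h
    · simp [sepX, Matrix.mul_apply, Matrix.single_apply, Finset.sum_apply, Matrix.sum_apply,
        ite_and]
    · simp [sepX, Pi.single_eq_of_ne h, Finset.sum_apply]
  have h2 : ∀ i j, sepY d R ⟨i, j⟩ * a = ∑ l, a i j l • sepY d R ⟨i, l⟩ := by
    intro i j
    ext i' r c
    rcases eq_or_ne i' i with rfl | h
    · by_cases hr : 0 = r <;>
        simp [sepY, Matrix.mul_apply, Matrix.single_apply, Finset.sum_apply, Matrix.sum_apply, hr]
    · simp [sepY, Pi.single_eq_of_ne h, Finset.sum_apply]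
  rw [Fintype.sum_sigma, Fintype.sum_sigma]
  refine Finset.sum_congr rfl fun i _ => ?_
  simp only [h1, h2, TensorProduct.sum_tmul, TensorProduct.tmul_sum, TensorProduct.smul_tmul]
  exact Finset.sum_comm

end Split

/-- `S² = 1` for a semisimple Hopf algebra with `tr(S²) ≠ 0`. In characteristic `p`, the matrix
blocks of `H` are lifted to the ring of Witt vectors of `k`. -/
theorem S2_eq_one (k H : Type*) [Field k] [IsAlgClosed k] [Ring H]
    [HopfAlgebra k H] [FiniteDimensional k H] [IsSemisimpleRing H]
    (ht : LinearMap.trace k H (S2 k H) ≠ 0) : S2 k H = 1 := by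
  obtain ⟨n, d, hd, ⟨φ⟩⟩ := IsSemisimpleRing.exists_algEquiv_pi_matrix_of_isAlgClosed k H
  obtain ⟨p, hp⟩ := CharP.exists k
  rcases CharP.char_is_prime_or_zero k p with hpp | rfl
  · have := Fact.mk hpp
    let _ : Algebra (WittVector p k) k := (WittVector.constantCoeff (p := p) (R := k)).toAlgebra
    let _ : Algebra (WittVector p k) H := Algebra.compHom H (algebraMap (WittVector p k) k)
    have : IsScalarTower (WittVector p k) k H := IsScalarTower.of_algebraMap_eq fun _ => rfl
    have hk : Function.Surjective (algebraMap (WittVector p k) k) :=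
      WittVector.constantCoeff_surjective p
    have hker : ∀ w, algebraMap (WittVector p k) k w = 0 ↔ Dv (p : WittVector p k) w := by
      intro w
      have : w ∈ RingHom.ker (WittVector.constantCoeff (p := p) (R := k)) ↔
          (p : WittVector p k) ∣ w := by
        rw [WittVector.ker_constantCoeff, Ideal.mem_span_singleton]
      exact this
    have : CharZero (WittVector p k) := by
      obtain ⟨q, hq⟩ := CharP.exists (WittVector p k)
      rcases CharP.char_is_prime_or_zero (WittVector p k) q with hq' | rfl
      · exfalso
        have h1 : ((q : ℕ) : k) = 0 := by
          rw [← map_natCast (algebraMap (WittVector p k) k), CharP.cast_eq_zero, map_zero]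
        have h2 := (Nat.prime_dvd_prime_iff_eq hpp hq').1 ((CharP.cast_eq_zero_iff k p q).1 h1)
        subst h2
        exact WittVector.p_nonzero p k (CharP.cast_eq_zero _ _)
      · exact CharP.charP_to_charZero _
    let ψ : MatProd d (WittVector p k) →ₐ[WittVector p k] MatProd d k :=
      AlgHom.pi fun i => (Algebra.ofId (WittVector p k) k).mapMatrix.comp (Pi.evalAlgHom _ _ i)
    let π : MatProd d (WittVector p k) →ₐ[WittVector p k] H :=
      ((φ.symm : MatProd d k →ₐ[k] H).restrictScalars (WittVector p k)).comp ψ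
    have hψ : ∀ a i j l, ψ a i j l = algebraMap (WittVector p k) k (a i j l) := fun _ _ _ _ => rfl
    have hπ : IsRed (p : WittVector p k) π := by
      refine ⟨fun h => ?_, fun a => ?_⟩
      · choose w hw using hk
        refine ⟨fun i j l => w (φ h i j l), ?_⟩
        refine φ.injective ?_
        refine (φ.apply_symm_apply _).trans ?_
        ext i j l
        exact hw _
      · have h0 : π a = 0 ↔ ψ a = 0 := map_eq_zero_iff φ.symm φ.symm.injective
        rw [h0]
        constructor
        · intro h
          choose m hm using fun i j l => (hker (a i j l)).1 (by rw [← hψ, h]; rfl)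
          exact ⟨m, funext fun i => Matrix.ext fun j l => hm i j l⟩
        · rintro ⟨m, rfl⟩
          ext i j l
          rw [hψ]
          exact (hker _).2 ⟨m i j l, rfl⟩
    exact S2_eq_one_of_lift (WittVector.p_nonzero p k) hk hker (sepX d _) (sepY d _)
      (sep_mul d _) (sep_comm d _) ht π hπ
  · have := CharP.charP_to_charZero k
    obtain ⟨Λ, hΛ, hΛ1⟩ := exists_integral (R := k) (A := H) (fun j => φ.symm (sepX d k j))
      (fun j => φ.symm (sepY d k j)) (by simp only [← map_mul, ← map_sum, sep_mul, map_one])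
      (fun h => by
        have := congrArg (TensorProduct.map φ.symm.toLinearMap φ.symm.toLinearMap)
          (sep_comm d k (φ h))
        simpa using this)
    exact S2_eq_id_of_charZero ht hΛ hΛ1

end Kap

/-- (Kaplansky's 7th conjecture) Let `H` be a finite-dimensional Hopf algebra over an
algebraically closed field `k` which is semisimple as a ring and whose antipode `S`
satisfies `tr(S²) ≠ 0` (equivalently, `H` is also cosemisimple). Then `S ∘ S` is the
identity map of `H`. -/
theorem kaplansky_seventh (k H : Type) [Field k] [IsAlgClosed k] [Ring H]
    [HopfAlgebra k H] [FiniteDimensional k H] [IsSemisimpleRing H]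
    (htr : LinearMap.trace k H
      ((HopfAlgebra.antipode (R := k) (A := H)).comp (HopfAlgebra.antipode (R := k) (A := H)))
        ≠ 0) :
    ∀ x : H, HopfAlgebra.antipode (R := k) (HopfAlgebra.antipode (R := k) x) = x := by
  exact LinearMap.congr_fun (Kap.S2_eq_one k H htr)
end
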